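/- Let ω be an irrational number of bounded type and let l ∈ ℕ. For every κ > 0 there exist a 1-periodic C^l map D : ℝ → SL(2,ℝ) and a sequence of 1-periodic C^l maps C_k : ℝ → SL(2,ℝ) such that: (i) L(D) ≥ κ; (ii) for every k, L(C_k) = 0, i.e. the sequence (1/m)∫₀¹ log‖C_k^m(x)‖ dx tends to 0 as m → ∞; and (iii) C_k → D in the C^l topology, i.e. for each 0 ≤ j ≤ l, sup_x ‖(d^j/dx^j)(C_k − D)(x)‖ → 0 as k → ∞ (derivatives taken entrywise). -/

import Mathlib

open Real MeasureTheory Filter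

attribute [local instance] Matrix.normedAddCommGroup Matrix.normedSpace

/-- Operator norm of a 2×2 real matrix, acting on Euclidean space. -/
noncomputable def opNorm (A : Matrix (Fin 2) (Fin 2) ℝ) : ℝ :=
  ‖(Matrix.toEuclideanCLM (𝕜 := ℝ) A : EuclideanSpace ℝ (Fin 2) →L[ℝ] EuclideanSpace ℝ (Fin 2))‖

/-- Iterates of the quasi-periodic cocycle: A^n(x) = A(x+(n-1)ω)⋯A(x+ω)A(x). -/
noncomputable def cocycle (ω : ℝ) (A : ℝ → Matrix (Fin 2) (Fin 2) ℝ) :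
    ℕ → ℝ → Matrix (Fin 2) (Fin 2) ℝ
  | 0, _ => 1
  | n + 1, x => A (x + n * ω) * cocycle ω A n x

/-- Finite Lyapunov exponents L_n(A) = (1/n) ∫₀¹ log ‖A^n(x)‖ dx. -/
noncomputable def LEn (ω : ℝ) (A : ℝ → Matrix (Fin 2) (Fin 2) ℝ) (n : ℕ) : ℝ :=
  (1 / n) * ∫ x in (0:ℝ)..1, Real.log (opNorm (cocycle ω A n x))

/-- The Schrödinger cocycle S_v(x) = [[v(x), -1],[1,0]]. -/
def SchrodingerCocycle (v : ℝ → ℝ) (x : ℝ) : Matrix (Fin 2) (Fin 2) ℝ := !![v x, -1; 1, 0]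

/-- The denominators of the continued fraction convergents of ω. -/
noncomputable def cfDen (ω : ℝ) (k : ℕ) : ℝ := (GenContFract.of ω).dens k

/-!
A positive 1-periodic function `f` is a ground state of the Schrödinger equation
`u (x + ω) + u (x - ω) = v x * u x` with potential `v x = (f (x + ω) + f (x - ω)) / f x`. By
constancy of the Wronskian, all its solutions along an orbit grow at most linearly, so that its
Schrödinger cocycle has exponent `0`. If `f` is constant and `v` is raised by a constant `b`,
the solutions grow exponentially, at a rate that tends to infinity with `b`.

Suppose that `v + b` has uniform exponential growth. The substitution `u = f * g` turns its equation
into a discrete Sturm–Liouville equation for `g`, whose solutions double in bounded time. Multiply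
`f` by a cutoff of radius about `1 / Y ^ 10` around `0`, extended along the rotation in both
directions by `Y ^ 22` steps of solutions that vanish at the far end. The result is a new ground
state. Its potential exceeds `v + b` by an exponentially small amount coming from the far ends, and
is lower than `v + b` only on the support of the cutoff, by at most `Y ^ 3`. Since `ω` is badly
approximable, orbits meet this support at most once in `Y ^ 9` steps, so the new potential, raised
by only `exp (-Y ^ 7)`, has uniform growth at a rate smaller by at most `2 / Y ^ 2`. At the next
scale `Y ^ 40` the step is repeated with `b = exp (-Y ^ 7)`: it then changes the potential in `C^l`
by at most a power of `Y` times `b`, up to a far smaller error.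

The potentials with exponent `0` thus converge in `C^l` to a limit which is also the limit of
potentials with uniform growth of rate at least `κ`. The latter bounds every finite exponent from
below, and finite exponents are continuous, so the limit has exponent at least `κ`.
-/

section Diophantine

/-- `α` is badly approximable with constant `c`: its multiples satisfy `‖nα‖ ≥ c / n` in the norm of
the circle `ℝ/ℤ`, that is, in the distance to the nearest integer. -/
structure BadlyApproximable (c α : ℝ) : Prop where
  pos : 0 < c
  le_norm_mul : ∀ n : ℕ, 1 ≤ n → c / n ≤ ‖((n * α : ℝ) : UnitAddCircle)‖

lemma norm_coe_le_abs_sub_intCast (x : ℝ) (m : ℤ) : ‖(x : UnitAddCircle)‖ ≤ |x - m| := by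
  rw [UnitAddCircle.norm_eq]
  exact round_le x m

variable {ω : ℝ}

lemma not_terminatedAt_of_irrational (hω : Irrational ω) (n : ℕ) :
    ¬ (GenContFract.of ω).TerminatedAt n := by
  intro h
  obtain ⟨q, hq⟩ := (GenContFract.terminates_iff_rat ω).1 ⟨n, h⟩
  exact hω ⟨q, hq.symm⟩

lemma exists_int_contsAux_eq (hω : Irrational ω) (n : ℕ) :
    (∃ a b : ℤ, (GenContFract.of ω).contsAux n = ⟨a, b⟩) ∧
      ∃ a b : ℤ, (GenContFract.of ω).contsAux (n + 1) = ⟨a, b⟩ := by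
  induction n with
  | zero => exact ⟨⟨1, 0, by simp⟩, ⌊ω⌋, 1, by simp⟩
  | succ n ih =>
    refine ⟨ih.2, ?_⟩
    obtain ⟨⟨a, b, hab⟩, a', b', hab'⟩ := ih
    obtain ⟨gp, hgp⟩ : ∃ gp, (GenContFract.of ω).s.get? n = some gp :=
      Option.ne_none_iff_exists'.1 (not_terminatedAt_of_irrational hω n)
    obtain ⟨hnum, z, hz⟩ := GenContFract.of_partNum_eq_one_and_exists_int_partDen_eq hgp
    refine ⟨z * a' + a, z * b' + b, ?_⟩
    rw [GenContFract.contsAux_recurrence hgp hab hab']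
    simp [hnum, hz]

lemma exists_int_nums_dens_eq (hω : Irrational ω) (n : ℕ) :
    ∃ a b : ℤ, (GenContFract.of ω).nums n = a ∧ cfDen ω n = b := by
  obtain ⟨a, b, h⟩ := (exists_int_contsAux_eq hω n).2
  exact ⟨a, b, congrArg GenContFract.Pair.a h, congrArg GenContFract.Pair.b h⟩

lemma abs_mul_cfDen_sub_nums_le (hω : Irrational ω) {k : ℕ} (hk : 0 < cfDen ω k) :
    |ω * cfDen ω k - (GenContFract.of ω).nums k| ≤ 1 / cfDen ω k := by
  have hmono : cfDen ω k ≤ cfDen ω (k + 1) := GenContFract.of_den_mono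
  have happrox : |ω - (GenContFract.of ω).nums k / cfDen ω k| ≤
      1 / (cfDen ω k * cfDen ω (k + 1)) := by
    have h := GenContFract.abs_sub_convs_le (not_terminatedAt_of_irrational hω k)
    rwa [GenContFract.conv_eq_num_div_den] at h
  calc |ω * cfDen ω k - (GenContFract.of ω).nums k|
      = |ω - (GenContFract.of ω).nums k / cfDen ω k| * cfDen ω k := by
        rw [← abs_of_pos hk, ← abs_mul, abs_of_pos hk]
        field_simp
    _ ≤ 1 / (cfDen ω k * cfDen ω (k + 1)) * cfDen ω k := by gcongr
    _ = 1 / cfDen ω (k + 1) := by field_simp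
    _ ≤ 1 / cfDen ω k := by gcongr

-- By the determinant identity `p_k` and `q_k` are coprime, so `q_k ∤ q p_k` if `0 < q < q_k`.
lemma one_le_abs_mul_nums_sub_mul_cfDen (hω : Irrational ω) {k q : ℕ} (m : ℤ) (hq : 1 ≤ q)
    (hqk : (q : ℝ) < cfDen ω k) :
    1 ≤ |q * (GenContFract.of ω).nums k - m * cfDen ω k| := by
  have hdet : (GenContFract.of ω).nums k * cfDen ω (k + 1) -
      cfDen ω k * (GenContFract.of ω).nums (k + 1) = (-1) ^ (k + 1) :=
    (SimpContFract.of ω).determinant (not_terminatedAt_of_irrational hω k)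
  obtain ⟨A, B, hA, hB⟩ := exists_int_nums_dens_eq hω k
  obtain ⟨A', B', hA', hB'⟩ := exists_int_nums_dens_eq hω (k + 1)
  rw [hA, hA', hB, hB'] at hdet
  have hdetZ : A * B' - B * A' = (-1) ^ (k + 1) := by exact_mod_cast hdet
  rw [hB] at hqk
  have hqB : (q : ℤ) < B := by exact_mod_cast hqk
  have hne : (q : ℤ) * A - m * B ≠ 0 := by
    intro h0
    have hdvd : B ∣ (-1) ^ (k + 1) * (q : ℤ) :=
      ⟨m * B' - q * A', by rw [← hdetZ]; linear_combination B' * h0⟩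
    have := Int.le_of_dvd (by omega) ((isUnit_neg_one.pow _).dvd_mul_left.1 hdvd)
    omega
  rw [hA, hB]
  exact_mod_cast Int.one_le_abs hne

lemma exists_two_mul_lt_cfDen_le {M : ℝ} (hω : Irrational ω) (hM : 0 < M)
    (hbt : ∀ k, cfDen ω (k + 1) ≤ M * cfDen ω k) {q : ℕ} (hq : 1 ≤ q) :
    ∃ k, 2 * (q : ℝ) < cfDen ω k ∧ cfDen ω k ≤ M * (2 * q) := by
  classical
  have hex : ∃ k, 2 * (q : ℝ) < cfDen ω k := by
    refine ⟨2 * q + 5, lt_of_lt_of_le ?_ (GenContFract.succ_nth_fib_le_of_nth_den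
      (Or.inr (not_terminatedAt_of_irrational hω _)))⟩
    have := Nat.le_fib_self (n := 2 * q + 5 + 1) (by omega)
    exact_mod_cast (by omega : 2 * q < Nat.fib (2 * q + 5 + 1))
  refine ⟨Nat.find hex, Nat.find_spec hex, ?_⟩
  cases hk : Nat.find hex with
  | zero =>
    have hlt := Nat.find_spec hex
    have hq' : (1 : ℝ) ≤ q := by exact_mod_cast hq
    rw [hk, cfDen, GenContFract.zeroth_den_eq_one] at hlt
    linarith
  | succ k =>
    have hle : cfDen ω k ≤ 2 * q := not_lt.1 (Nat.find_min hex (by omega))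
    exact (hbt k).trans (by gcongr)

theorem badlyApproximable_of_cfDen_succ_le {M : ℝ} (hω : Irrational ω) (hM : 0 < M)
    (hbt : ∀ k, cfDen ω (k + 1) ≤ M * cfDen ω k) : BadlyApproximable (1 / (4 * M)) ω := by
  refine ⟨by positivity, fun q hq => ?_⟩
  have hq0 : (0 : ℝ) < q := by exact_mod_cast hq
  rw [UnitAddCircle.norm_eq]
  set m := round (q * ω)
  obtain ⟨k, hqk, hkM⟩ := exists_two_mul_lt_cfDen_le hω hM hbt hq
  set B := cfDen ω k
  set A := (GenContFract.of ω).nums k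
  have hB : 0 < B := by linarith
  have happrox : |ω * B - A| ≤ 1 / B := abs_mul_cfDen_sub_nums_le hω hB
  have hint : 1 ≤ |q * A - m * B| := one_le_abs_mul_nums_sub_mul_cfDen hω m hq (by linarith)
  have htri : |q * A - m * B| ≤ q * (1 / B) + B * |q * ω - m| := calc
    |q * A - m * B| = |B * (q * ω - m) - q * (ω * B - A)| := by congr 1; ring
    _ ≤ |B * (q * ω - m)| + |q * (ω * B - A)| := abs_sub _ _
    _ = B * |q * ω - m| + q * |ω * B - A| := by rw [abs_mul, abs_mul, abs_of_pos hB, Nat.abs_cast]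
    _ ≤ q * (1 / B) + B * |q * ω - m| := by rw [add_comm]; gcongr
  have hhalf : q * (1 / B) ≤ 1 / 2 := by
    rw [mul_one_div, div_le_iff₀ hB]; linarith
  have hBM : B * |q * ω - m| ≤ M * (2 * q) * |q * ω - m| := by gcongr
  rw [div_div, div_le_iff₀ (by positivity)]
  linarith

variable {c α : ℝ}

lemma BadlyApproximable.neg (h : BadlyApproximable c α) : BadlyApproximable c (-α) := by
  refine ⟨h.pos, fun n hn => ?_⟩
  rw [mul_neg, AddCircle.coe_neg, norm_neg]
  exact h.le_norm_mul n hn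

lemma BadlyApproximable.lt_norm_add_mul (h : BadlyApproximable c α) {r r' x : ℝ} {n : ℕ}
    (hn : 1 ≤ n) (hx : ‖(x : UnitAddCircle)‖ ≤ r) (hr : (r + r') * n < c) :
    r' < ‖((x + n * α : ℝ) : UnitAddCircle)‖ := by
  have hn0 : (0 : ℝ) < n := by exact_mod_cast hn
  have htri : ‖((n * α : ℝ) : UnitAddCircle)‖ ≤
      ‖((x + n * α : ℝ) : UnitAddCircle)‖ + ‖(x : UnitAddCircle)‖ := by
    simpa using norm_sub_le ((x + n * α : ℝ) : UnitAddCircle) x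
  have := h.le_norm_mul n hn
  rw [← lt_div_iff₀ hn0] at hr
  linarith

lemma exists_nat_norm_add_mul_le_of_pos {δ : ℝ} (hδ : 0 < δ) (x : ℝ) :
    ∃ t : ℕ, 1 ≤ t ∧ (t : ℝ) ≤ 1 / δ + 1 ∧ ‖((x + t * δ : ℝ) : UnitAddCircle)‖ ≤ δ := by
  set y := 1 - Int.fract x
  have hy0 : 0 < y := sub_pos.2 (Int.fract_lt_one x)
  have hy1 : y ≤ 1 := sub_le_self _ (Int.fract_nonneg x)
  have hlt : (⌈y / δ⌉₊ : ℝ) < y / δ + 1 := Nat.ceil_lt_add_one (by positivity)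
  have hle : y / δ ≤ ⌈y / δ⌉₊ := Nat.le_ceil _
  refine ⟨⌈y / δ⌉₊, Nat.ceil_pos.2 (by positivity), ?_, ?_⟩
  · have : y / δ ≤ 1 / δ := by gcongr
    linarith
  · refine (norm_coe_le_abs_sub_intCast _ (⌊x⌋ + 1)).trans ?_
    rw [div_add_one hδ.ne', lt_div_iff₀ hδ] at hlt
    rw [div_le_iff₀ hδ] at hle
    have hfract := Int.floor_add_fract x
    rw [abs_le]
    push_cast
    constructor <;> linarith

lemma exists_nat_norm_add_mul_le {δ : ℝ} (hδ : δ ≠ 0) (x : ℝ) :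
    ∃ t : ℕ, 1 ≤ t ∧ (t : ℝ) ≤ 1 / |δ| + 1 ∧ ‖((x + t * δ : ℝ) : UnitAddCircle)‖ ≤ |δ| := by
  rcases hδ.lt_or_gt with hneg | hpos
  · obtain ⟨t, ht, hle, hnorm⟩ := exists_nat_norm_add_mul_le_of_pos (neg_pos.2 hneg) (-x)
    rw [abs_of_neg hneg]
    refine ⟨t, ht, hle, ?_⟩
    rwa [← norm_neg, ← AddCircle.coe_neg, show -(x + t * δ) = -x + t * -δ by ring]
  · rw [abs_of_pos hpos]
    exact exists_nat_norm_add_mul_le_of_pos hpos x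

lemma BadlyApproximable.exists_abs_mul_sub_mem_Icc (h : BadlyApproximable c α) {ε : ℝ}
    (hε : 0 < ε) (hε1 : ε ≤ 1) :
    ∃ (k : ℕ) (j : ℤ), 1 ≤ k ∧ (k : ℝ) ≤ 2 / ε ∧ |k * α - j| ∈ Set.Icc (c * ε / 2) ε := by
  have hc := h.pos
  have hn0 : 0 < ⌈1 / ε⌉₊ := Nat.ceil_pos.2 (by positivity)
  have hnε : (⌈1 / ε⌉₊ : ℝ) ≤ 2 / ε := by
    have hone : 1 ≤ 1 / ε := by rwa [le_div_iff₀ hε, one_mul]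
    have := Nat.ceil_lt_add_one (by positivity : 0 ≤ 1 / ε)
    rw [show 2 / ε = 1 / ε + 1 / ε by ring]
    linarith
  obtain ⟨k, ⟨hk1, hkn⟩, hdir⟩ := AddCircle.exists_norm_nsmul_le (α : UnitAddCircle) hn0
  rw [← AddCircle.coe_nsmul, nsmul_eq_mul, UnitAddCircle.norm_eq] at hdir
  have hkε : (k : ℝ) ≤ 2 / ε := le_trans (by exact_mod_cast hkn) hnε
  refine ⟨k, round (k * α), hk1, hkε, ?_, hdir.trans ?_⟩
  · calc c * ε / 2 = c / (2 / ε) := by field_simp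
      _ ≤ c / k := by gcongr
      _ ≤ |k * α - round (k * α)| := (h.le_norm_mul k hk1).trans_eq UnitAddCircle.norm_eq
  · rw [div_le_iff₀ (by positivity)]
    have := (div_le_iff₀ hε).1 (Nat.le_ceil (1 / ε))
    push_cast
    linarith

-- Dirichlet gives a multiple `kα` at distance `δ ≤ ε` from `ℤ`, and bad approximability bounds `δ`
-- from below; at most `2 / δ` steps of length `δ` then reach the `ε`-neighbourhood of `ℤ`.
lemma BadlyApproximable.exists_norm_add_mul_le (h : BadlyApproximable c α) {ε : ℝ} (hε : 0 < ε)
    (hε1 : ε ≤ 1) (x : ℝ) :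
    ∃ m : ℕ, 1 ≤ m ∧ (m : ℝ) ≤ 8 / c / ε ^ 2 ∧ ‖((x + m * α : ℝ) : UnitAddCircle)‖ ≤ ε := by
  have hc := h.pos
  obtain ⟨k, j, hk1, hkε, hδlow, hδε⟩ := h.exists_abs_mul_sub_mem_Icc hε hε1
  set δ := (k : ℝ) * α - j with hδ
  have hδpos : 0 < |δ| := lt_of_lt_of_le (by positivity) hδlow
  obtain ⟨t, ht1, htδ, ht⟩ := exists_nat_norm_add_mul_le (abs_pos.1 hδpos) x
  refine ⟨t * k, Nat.mul_pos ht1 hk1, ?_, ?_⟩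
  · have hδ1 : 1 ≤ 1 / |δ| := (one_le_div hδpos).2 (hδε.trans hε1)
    have ht2 : (t : ℝ) ≤ 2 / |δ| := by
      rw [show 2 / |δ| = 1 / |δ| + 1 / |δ| by ring]
      linarith
    push_cast
    calc (t : ℝ) * k ≤ 2 / |δ| * (2 / ε) := by gcongr
      _ ≤ 2 / (c * ε / 2) * (2 / ε) := by gcongr
      _ = 8 / c / ε ^ 2 := by field_simp; norm_num
  · have hshift : (x + (t * k : ℕ) * α : ℝ) = x + t * δ + (t * j : ℤ) • (1 : ℝ) := by
      rw [hδ, zsmul_eq_mul]; push_cast; ring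
    rw [hshift, AddCircle.coe_add, AddCircle.coe_zsmul, AddCircle.coe_period, smul_zero, add_zero]
    exact ht.trans hδε

end Diophantine

section DerivativeBounds

/-- The function `F` is `C^l` and its derivatives of order `j ≤ l` are at most `M ^ j * H`: each
derivative costs a factor `M` relative to the profile `H`. Positive functions with `H = F` are the
ones whose reciprocals, products and translates can be controlled multiplicatively. -/
structure DerivDominated (l : ℕ) (M : ℝ) (F H : ℝ → ℝ) : Prop where
  scale_nonneg : 0 ≤ M
  contDiff : ContDiff ℝ l F
  abs_iteratedDeriv_le : ∀ x, ∀ j ≤ l, |iteratedDeriv j F x| ≤ M ^ j * H x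

lemma two_mul_add_three_pow_le {l j : ℕ} (hj : j ≤ l) :
    (2 * l + 3 : ℝ) ^ j ≤ 2 * (2 * l + 2 : ℝ) ^ j := by
  have hA : (0 : ℝ) < 2 * l + 3 := by positivity
  have hjl : (j : ℝ) ≤ l := by exact_mod_cast hj
  have hbernoulli : 1 + j * (-1 / (2 * l + 3 : ℝ)) ≤ (1 + -1 / (2 * l + 3 : ℝ)) ^ j :=
    one_add_mul_le_pow (by rw [le_div_iff₀ hA]; linarith) j
  have hhalf : (1 / 2 : ℝ) ≤ 1 + j * (-1 / (2 * l + 3 : ℝ)) := by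
    have : j / (2 * l + 3 : ℝ) ≤ 1 / 2 := by rw [div_le_iff₀ hA]; linarith
    have : j * (-1 / (2 * l + 3 : ℝ)) = -(j / (2 * l + 3)) := by ring
    linarith
  have hratio : (1 + -1 / (2 * l + 3 : ℝ)) ^ j = (2 * l + 2) ^ j / (2 * l + 3) ^ j := by
    rw [← div_pow]; congr 1; field_simp; ring
  rw [hratio] at hbernoulli
  have := (le_div_iff₀ (by positivity)).1 (hhalf.trans hbernoulli)
  linarith

lemma sum_choose_succ_mul_pow_le {l j : ℕ} (hj : j ≤ l) :
    ∑ i ∈ Finset.range j, (j.choose (i + 1) : ℝ) * (2 * l + 2 : ℝ) ^ (j - (i + 1)) ≤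
      (2 * l + 2 : ℝ) ^ j := by
  have hbinom := add_pow (1 : ℝ) (2 * l + 2) j
  rw [Finset.sum_range_succ'] at hbinom
  simp only [one_pow, one_mul, Nat.choose_zero_right, Nat.cast_one, mul_one, Nat.sub_zero]
    at hbinom
  have hle := two_mul_add_three_pow_le hj
  rw [show (2 * l + 3 : ℝ) = 1 + (2 * l + 2) by ring, hbinom] at hle
  simp only [mul_comm (Nat.cast (Nat.choose _ _) : ℝ)]
  linarith

lemma mul_iteratedDeriv_inv {F : ℝ → ℝ} {j : ℕ} (hF : ContDiff ℝ j F) (hF0 : ∀ x, F x ≠ 0)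
    (hj : j ≠ 0) (x : ℝ) :
    F x * iteratedDeriv j (fun y => (F y)⁻¹) x = -∑ i ∈ Finset.range j,
      (j.choose (i + 1) : ℝ) * iteratedDeriv (i + 1) F x *
        iteratedDeriv (j - (i + 1)) (fun y => (F y)⁻¹) x := by
  have hzero : iteratedDeriv j (fun y => F y * (F y)⁻¹) x = 0 := by
    simp only [mul_inv_cancel₀ (hF0 _), iteratedDeriv_const, hj, if_false]
  have hinv : ContDiff ℝ j fun y => (F y)⁻¹ := hF.inv hF0
  rw [iteratedDeriv_fun_mul hF.contDiffAt hinv.contDiffAt, Finset.sum_range_succ'] at hzero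
  simp only [Nat.choose_zero_right, Nat.cast_one, one_mul, iteratedDeriv_zero, Nat.sub_zero]
    at hzero
  linarith

namespace DerivDominated

variable {l : ℕ} {M M' : ℝ} {F G H H' : ℝ → ℝ}

lemma abs_le (h : DerivDominated l M F H) (x : ℝ) : |F x| ≤ H x := by
  simpa using h.abs_iteratedDeriv_le x 0 (Nat.zero_le _)

lemma nonneg (h : DerivDominated l M F H) (x : ℝ) : 0 ≤ H x :=
  (abs_nonneg _).trans (h.abs_le x)

lemma contDiff_of_le (h : DerivDominated l M F H) {j : ℕ} (hj : j ≤ l) : ContDiff ℝ j F :=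
  h.contDiff.of_le (by exact_mod_cast hj)

lemma mono (h : DerivDominated l M F H) (hM : M ≤ M') (hH : ∀ x, H x ≤ H' x) :
    DerivDominated l M' F H' := by
  refine ⟨h.scale_nonneg.trans hM, h.contDiff, fun x j hj => ?_⟩
  calc |iteratedDeriv j F x| ≤ M ^ j * H x := h.abs_iteratedDeriv_le x j hj
    _ ≤ M' ^ j * H' x :=
      mul_le_mul (pow_le_pow_left₀ h.scale_nonneg hM j) (hH x) (h.nonneg x)
        (pow_nonneg (h.scale_nonneg.trans hM) j)

lemma mono_scale (h : DerivDominated l M F H) (hM : M ≤ M') : DerivDominated l M' F H :=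
  h.mono hM fun _ => le_rfl

lemma mono_profile (h : DerivDominated l M F H) (hH : ∀ x, H x ≤ H' x) :
    DerivDominated l M F H' :=
  h.mono le_rfl hH

lemma add (h : DerivDominated l M F H) (h' : DerivDominated l M G H') :
    DerivDominated l M (fun x => F x + G x) (fun x => H x + H' x) := by
  refine ⟨h.scale_nonneg, h.contDiff.add h'.contDiff, fun x j hj => ?_⟩
  rw [iteratedDeriv_fun_add (h.contDiff_of_le hj).contDiffAt (h'.contDiff_of_le hj).contDiffAt,
    mul_add]
  exact (abs_add_le _ _).trans
    (add_le_add (h.abs_iteratedDeriv_le x j hj) (h'.abs_iteratedDeriv_le x j hj))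

lemma const (c : ℝ) (hM : 0 ≤ M) : DerivDominated l M (fun _ => c) (fun _ => |c|) := by
  refine ⟨hM, contDiff_const, fun x j _ => ?_⟩
  rw [iteratedDeriv_const]
  split_ifs with hj
  · simp [hj]
  · rw [abs_zero]; positivity

lemma sum {ι : Type*} (s : Finset ι) {F H : ι → ℝ → ℝ} (hM : 0 ≤ M)
    (h : ∀ i ∈ s, DerivDominated l M (F i) (H i)) :
    DerivDominated l M (fun x => ∑ i ∈ s, F i x) (fun x => ∑ i ∈ s, H i x) := by
  classical
  induction s using Finset.induction_on with
  | empty => simpa using const (l := l) 0 hM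
  | insert a s ha ih =>
    simpa [Finset.sum_insert ha] using
      (h a (Finset.mem_insert_self a s)).add (ih fun i hi => h i (Finset.mem_insert_of_mem hi))

lemma neg (h : DerivDominated l M F H) : DerivDominated l M (fun x => -F x) H := by
  refine ⟨h.scale_nonneg, h.contDiff.neg, fun x j hj => ?_⟩
  rw [iteratedDeriv_fun_neg, abs_neg]
  exact h.abs_iteratedDeriv_le x j hj

lemma translate (h : DerivDominated l M F H) (t : ℝ) :
    DerivDominated l M (fun x => F (x + t)) (fun x => H (x + t)) := by
  refine ⟨h.scale_nonneg, h.contDiff.comp (contDiff_id.add contDiff_const), fun x j hj => ?_⟩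
  rw [iteratedDeriv_comp_add_const]
  exact h.abs_iteratedDeriv_le _ j hj

lemma mul (h : DerivDominated l M F H) (h' : DerivDominated l M' G H') :
    DerivDominated l (M + M') (fun x => F x * G x) (fun x => H x * H' x) := by
  have hM := h.scale_nonneg
  have hM' := h'.scale_nonneg
  refine ⟨add_nonneg hM hM', h.contDiff.mul h'.contDiff, fun x j hj => ?_⟩
  rw [iteratedDeriv_fun_mul (h.contDiff_of_le hj).contDiffAt (h'.contDiff_of_le hj).contDiffAt,
    add_pow, Finset.sum_mul]
  refine (Finset.abs_sum_le_sum_abs _ _).trans (Finset.sum_le_sum fun i hi => ?_)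
  have hij : i ≤ j := Nat.lt_succ_iff.1 (Finset.mem_range.1 hi)
  have hF := h.abs_iteratedDeriv_le x i (hij.trans hj)
  have hG := h'.abs_iteratedDeriv_le x (j - i) ((Nat.sub_le _ _).trans hj)
  have hH := h.nonneg x
  calc |(j.choose i : ℝ) * iteratedDeriv i F x * iteratedDeriv (j - i) G x|
      = (j.choose i : ℝ) * |iteratedDeriv i F x| * |iteratedDeriv (j - i) G x| := by
        rw [abs_mul, abs_mul, Nat.abs_cast]
    _ ≤ (j.choose i : ℝ) * (M ^ i * H x) * (M' ^ (j - i) * H' x) := by gcongr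
    _ = M ^ i * M' ^ (j - i) * (j.choose i : ℝ) * (H x * H' x) := by ring

lemma self_of_const_mul {C : ℝ} (hC : 1 ≤ C) (hF : ∀ x, 0 ≤ F x)
    (h : DerivDominated l M F (fun x => C * F x)) : DerivDominated l (C * M) F F := by
  have hM := h.scale_nonneg
  refine ⟨by positivity, h.contDiff, fun x j hj => ?_⟩
  have hFx := hF x
  rcases Nat.eq_zero_or_pos j with rfl | hj0
  · simp [abs_of_nonneg hFx]
  · calc |iteratedDeriv j F x| ≤ M ^ j * (C * F x) := h.abs_iteratedDeriv_le x j hj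
      _ ≤ M ^ j * (C ^ j * F x) := by gcongr; exact le_self_pow₀ hC hj0.ne'
      _ = (C * M) ^ j * F x := by ring

lemma inv (h : DerivDominated l M F F) (hF : ∀ x, 0 < F x) :
    DerivDominated l ((2 * l + 2) * M) (fun x => (F x)⁻¹) (fun x => (F x)⁻¹) := by
  have hM := h.scale_nonneg
  refine ⟨by positivity, h.contDiff.inv fun x => (hF x).ne', fun x j => ?_⟩
  have hFx := hF x
  induction j using Nat.strong_induction_on with
  | _ j ih =>
    intro hj
    rcases eq_or_ne j 0 with rfl | hj0
    · simp [abs_of_pos hFx]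
    have hterm : ∀ i ∈ Finset.range j, |(j.choose (i + 1) : ℝ) * iteratedDeriv (i + 1) F x *
        iteratedDeriv (j - (i + 1)) (fun y => (F y)⁻¹) x| ≤
        M ^ j * ((j.choose (i + 1) : ℝ) * (2 * l + 2 : ℝ) ^ (j - (i + 1))) := by
      intro i hi
      have hij : i + 1 ≤ j := Finset.mem_range.1 hi
      have hFi := h.abs_iteratedDeriv_le x (i + 1) (hij.trans hj)
      have hinv := ih (j - (i + 1)) (by omega) (by omega)
      rw [abs_mul, abs_mul, Nat.abs_cast]
      calc _ ≤ (j.choose (i + 1) : ℝ) * (M ^ (i + 1) * F x) *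
            (((2 * l + 2) * M) ^ (j - (i + 1)) * (F x)⁻¹) := by gcongr
        _ = (M ^ (i + 1) * M ^ (j - (i + 1))) *
            ((j.choose (i + 1) : ℝ) * (2 * l + 2 : ℝ) ^ (j - (i + 1))) * (F x * (F x)⁻¹) := by
          rw [mul_pow]; ring
        _ = _ := by rw [← pow_add, Nat.add_sub_cancel' hij, mul_inv_cancel₀ hFx.ne', mul_one]
    rw [← div_eq_mul_inv, le_div_iff₀ hFx, mul_comm]
    calc F x * |iteratedDeriv j (fun y => (F y)⁻¹) x|
        = |F x * iteratedDeriv j (fun y => (F y)⁻¹) x| := by rw [abs_mul, abs_of_pos hFx]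
      _ ≤ ∑ i ∈ Finset.range j, M ^ j * ((j.choose (i + 1) : ℝ) *
          (2 * l + 2 : ℝ) ^ (j - (i + 1))) := by
        rw [mul_iteratedDeriv_inv (h.contDiff_of_le hj) (fun y => (hF y).ne') hj0, abs_neg]
        exact (Finset.abs_sum_le_sum_abs _ _).trans (Finset.sum_le_sum hterm)
      _ ≤ M ^ j * (2 * l + 2 : ℝ) ^ j := by
        rw [← Finset.mul_sum]; gcongr; exact sum_choose_succ_mul_pow_le hj
      _ = ((2 * l + 2) * M) ^ j := by rw [mul_pow, mul_comm]

end DerivDominated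

section Cutoff

variable {l : ℕ} {θ : ℝ → ℝ} {T : ℝ}

lemma pow_mul_abs_iteratedDeriv_le (h : DerivDominated l T θ fun _ => 1) (h0 : ∀ x, 0 ≤ θ x)
    {p i j : ℕ} (hij : i ≤ j) (hj : j ≤ l) (x : ℝ) :
    θ x ^ (p - i) * |iteratedDeriv (j - i) θ x| ≤ T ^ (j - i) * θ x ^ (p + 1 - j) := by
  have hT := h.scale_nonneg
  have hx0 := h0 x
  have hx1 : θ x ≤ 1 := (le_abs_self _).trans (h.abs_le x)
  rcases hij.eq_or_lt with rfl | hlt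
  · rw [Nat.sub_self, iteratedDeriv_zero, pow_zero, one_mul, abs_of_nonneg hx0, ← pow_succ]
    exact pow_le_pow_of_le_one hx0 hx1 (by omega)
  · have hderiv : |iteratedDeriv (j - i) θ x| ≤ T ^ (j - i) := by
      simpa using h.abs_iteratedDeriv_le x (j - i) ((Nat.sub_le _ _).trans hj)
    have hpow : θ x ^ (p - i) ≤ θ x ^ (p + 1 - j) := pow_le_pow_of_le_one hx0 hx1 (by omega)
    rw [mul_comm]
    gcongr

lemma abs_iteratedDeriv_pow_le (h : DerivDominated l T θ fun _ => 1) (h0 : ∀ x, 0 ≤ θ x)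
    (p : ℕ) (x : ℝ) {j : ℕ} (hj : j ≤ l) :
    |iteratedDeriv j (fun y => θ y ^ p) x| ≤ (p * T) ^ j * θ x ^ (p - j) := by
  have hT := h.scale_nonneg
  induction p generalizing j with
  | zero =>
    simp only [pow_zero, iteratedDeriv_const]
    split_ifs with hj0 <;> simp [hj0]
  | succ p ih =>
    have hbinom : ((p + 1 : ℕ) * T) ^ j =
        ∑ i ∈ Finset.range (j + 1), (p * T) ^ i * T ^ (j - i) * (j.choose i : ℝ) := by
      rw [← add_pow]; push_cast; ring
    simp only [pow_succ]
    rw [iteratedDeriv_fun_mul ((h.contDiff_of_le hj).pow p).contDiffAt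
      (h.contDiff_of_le hj).contDiffAt, hbinom, Finset.sum_mul]
    refine (Finset.abs_sum_le_sum_abs _ _).trans (Finset.sum_le_sum fun i hi => ?_)
    have hij : i ≤ j := Nat.lt_succ_iff.1 (Finset.mem_range.1 hi)
    have hpow := ih (hij.trans hj)
    rw [abs_mul, abs_mul, Nat.abs_cast]
    calc _ ≤ (j.choose i : ℝ) * ((p * T) ^ i * θ x ^ (p - i)) * |iteratedDeriv (j - i) θ x| := by
          gcongr
      _ = (j.choose i : ℝ) * (p * T) ^ i * (θ x ^ (p - i) * |iteratedDeriv (j - i) θ x|) := by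
          ring
      _ ≤ (j.choose i : ℝ) * (p * T) ^ i * (T ^ (j - i) * θ x ^ (p + 1 - j)) :=
          mul_le_mul_of_nonneg_left (pow_mul_abs_iteratedDeriv_le h h0 hij hj x) (by positivity)
      _ = _ := by ring

-- The derivatives of a high power of a cutoff are dominated by the power itself, up to an
-- exponentially small error: this is how small cutoffs can be given a multiplicative profile.
lemma DerivDominated.pow_add (h : DerivDominated l T θ fun _ => 1) (h0 : ∀ x, 0 ≤ θ x) (p : ℕ) :
    DerivDominated l ((l + p : ℕ) * T) (fun x => θ x ^ (l + p))
      (fun x => 2 ^ l * (θ x ^ (l + p) + (1 / 2) ^ p)) := by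
  have hT := h.scale_nonneg
  refine ⟨by positivity, h.contDiff.pow _, fun x j hj =>
    (abs_iteratedDeriv_pow_le h h0 (l + p) x hj).trans ?_⟩
  have hx0 := h0 x
  have hx1 : θ x ≤ 1 := (le_abs_self _).trans (h.abs_le x)
  gcongr
  rcases le_total (1 / 2) (θ x) with hx | hx
  · have hone : 1 ≤ 2 ^ l * θ x ^ j := calc
      (1 : ℝ) = 2 ^ j * (1 / 2) ^ j := by rw [← mul_pow]; norm_num
      _ ≤ 2 ^ l * θ x ^ j := by gcongr; norm_num
    calc θ x ^ (l + p - j) ≤ (2 ^ l * θ x ^ j) * θ x ^ (l + p - j) :=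
          le_mul_of_one_le_left (by positivity) hone
      _ = 2 ^ l * θ x ^ (l + p) := by
          rw [mul_assoc, ← _root_.pow_add]; congr 2; omega
      _ ≤ 2 ^ l * (θ x ^ (l + p) + (1 / 2) ^ p) := by
          gcongr; exact le_add_of_nonneg_right (by positivity)
  · calc θ x ^ (l + p - j) ≤ θ x ^ p := pow_le_pow_of_le_one hx0 hx1 (by omega)
      _ ≤ (1 / 2) ^ p := by gcongr
      _ ≤ θ x ^ (l + p) + (1 / 2) ^ p := le_add_of_nonneg_left (by positivity)
      _ ≤ 2 ^ l * (θ x ^ (l + p) + (1 / 2) ^ p) :=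
          le_mul_of_one_le_left (by positivity) (one_le_pow₀ (by norm_num))

/-- A 1-periodic `C^l` cutoff `θ : ℝ → [0, 1]` that equals `1` within distance `ε` of `ℤ` and
vanishes at distance more than `2 * ε`, each derivative costing a factor `T / ε`. -/
structure IsPeriodicCutoff (l : ℕ) (T ε : ℝ) (θ : ℝ → ℝ) : Prop where
  periodic : Function.Periodic θ 1
  nonneg : ∀ x, 0 ≤ θ x
  eq_one : ∀ x : ℝ, ‖(x : UnitAddCircle)‖ ≤ ε → θ x = 1
  eq_zero : ∀ x : ℝ, 2 * ε < ‖(x : UnitAddCircle)‖ → θ x = 0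
  derivDominated : DerivDominated l (T / ε) θ fun _ => 1

lemma exists_abs_iteratedDeriv_contDiffBump_le (φ : ContDiffBump (0 : ℝ)) (l : ℕ) :
    ∃ T : ℝ, 1 ≤ T ∧ ∀ j ≤ l, ∀ x, |iteratedDeriv j φ x| ≤ T ^ j := by
  have hbound : ∀ j, ∃ B, ∀ x, |iteratedDeriv j φ x| ≤ B := by
    intro j
    have hsupp : HasCompactSupport (iteratedDeriv j φ) := by
      induction j with
      | zero => simpa using φ.hasCompactSupport
      | succ j ih => rw [iteratedDeriv_succ]; exact ih.deriv
    exact hsupp.exists_bound_of_continuous ((φ.contDiff (n := j)).continuous_iteratedDeriv j le_rfl)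
  choose B hB using hbound
  have hB0 : ∀ j, 0 ≤ B j := fun j => (abs_nonneg _).trans (hB j 0)
  have hsum : 0 ≤ ∑ j ∈ Finset.range (l + 1), B j := Finset.sum_nonneg fun j _ => hB0 j
  refine ⟨1 + ∑ j ∈ Finset.range (l + 1), B j, by linarith, fun j hj x => ?_⟩
  rcases eq_or_ne j 0 with rfl | hj0
  · simpa [abs_of_nonneg φ.nonneg] using φ.le_one
  · calc |iteratedDeriv j φ x| ≤ B j := hB j x
      _ ≤ ∑ j ∈ Finset.range (l + 1), B j :=
        Finset.single_le_sum (fun j _ => hB0 j) (Finset.mem_range.2 (Nat.lt_succ_of_le hj))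
      _ ≤ 1 + ∑ j ∈ Finset.range (l + 1), B j := by linarith
      _ ≤ _ := le_self_pow₀ (by linarith) hj0

lemma comp_sub_round_div_eq {φ : ℝ → ℝ} (hφ : ∀ x, 2 ≤ |x| → φ x = 0) {ε : ℝ} (hε : 0 < ε)
    (hε8 : ε ≤ 1 / 8) {m : ℤ} {y : ℝ} (hy : |y - m| < 3 / 4) :
    φ ((y - round y) / ε) = φ ((y - m) / ε) := by
  rcases eq_or_ne (round y) m with hr | hr
  · rw [hr]
  have hvanish : ∀ z, 1 / 4 ≤ |z| → φ (z / ε) = 0 := by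
    refine fun z hz => hφ _ ?_
    rw [abs_div, abs_of_pos hε, le_div_iff₀ hε]
    linarith
  have hdist : (1 : ℝ) ≤ |(round y : ℝ) - m| := by
    exact_mod_cast Int.one_le_abs (sub_ne_zero.2 hr)
  have hround : 1 / 4 ≤ |y - round y| := by
    have := abs_sub_le (round y : ℝ) y m
    rw [abs_sub_comm (round y : ℝ) y] at this
    linarith
  rw [hvanish _ hround, hvanish _ (hround.trans (round_le y m))]

lemma comp_sub_round_div_eventuallyEq {φ : ℝ → ℝ} (hφ : ∀ x, 2 ≤ |x| → φ x = 0) {ε : ℝ}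
    (hε : 0 < ε) (hε8 : ε ≤ 1 / 8) (x : ℝ) :
    (fun y => φ ((y - round y) / ε)) =ᶠ[nhds x] fun y => φ (ε⁻¹ * (y - (round x : ℝ))) := by
  have hx : |x - round x| < 3 / 4 := (abs_sub_round x).trans_lt (by norm_num)
  have hcont : Continuous fun y : ℝ => |y - (round x : ℝ)| := by fun_prop
  filter_upwards [hcont.continuousAt.eventually_lt continuousAt_const hx] with y hy
  rw [comp_sub_round_div_eq hφ hε hε8 hy, div_eq_inv_mul]

lemma derivDominated_comp_sub_round_div {φ : ℝ → ℝ} (hφ : ∀ x, 2 ≤ |x| → φ x = 0)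
    (hcont : ContDiff ℝ l φ) {T : ℝ} (hT : 0 ≤ T)
    (hderiv : ∀ j ≤ l, ∀ x, |iteratedDeriv j φ x| ≤ T ^ j) {ε : ℝ} (hε : 0 < ε)
    (hε8 : ε ≤ 1 / 8) :
    DerivDominated l (T / ε) (fun y => φ ((y - round y) / ε)) fun _ => 1 := by
  have hlocal := comp_sub_round_div_eventuallyEq hφ hε hε8
  refine ⟨by positivity, contDiff_iff_contDiffAt.2 fun x => ?_, fun x j hj => ?_⟩
  · exact (hcont.comp (by fun_prop : ContDiff ℝ l fun y : ℝ => ε⁻¹ * (y - round x))).contDiffAt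
      |>.congr_of_eventuallyEq (hlocal x)
  · rw [(hlocal x).iteratedDeriv_eq,
      iteratedDeriv_comp_sub_const j (fun z => φ (ε⁻¹ * z)) (round x : ℝ),
      iteratedDeriv_comp_const_mul (hcont.of_le (by exact_mod_cast hj)) ε⁻¹]
    dsimp only
    rw [abs_mul, abs_of_nonneg (by positivity : 0 ≤ ε⁻¹ ^ j), div_pow, mul_one, inv_pow, mul_comm,
      ← div_eq_mul_inv]
    gcongr
    exact hderiv j hj _

lemma exists_isPeriodicCutoff (l : ℕ) :
    ∃ T : ℝ, 1 ≤ T ∧ ∀ ε : ℝ, 0 < ε → ε ≤ 1 / 8 → ∃ θ, IsPeriodicCutoff l T ε θ := by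
  let φ : ContDiffBump (0 : ℝ) := ⟨1, 2, one_pos, one_lt_two⟩
  have hφ0 : ∀ x, 2 ≤ |x| → φ x = 0 := fun x hx => φ.zero_of_le_dist (by simpa using hx)
  obtain ⟨T, hT, hderiv⟩ := exists_abs_iteratedDeriv_contDiffBump_le φ l
  refine ⟨T, hT, fun ε hε hε8 => ⟨fun y => φ ((y - round y) / ε), ?_, fun x => φ.nonneg, ?_, ?_,
    derivDominated_comp_sub_round_div hφ0 φ.contDiff (zero_le_one.trans hT) hderiv hε hε8⟩⟩
  · intro x
    simp only [round_add_one, Int.cast_add, Int.cast_one, add_sub_add_right_eq_sub]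
  · intro x hx
    refine φ.one_of_mem_closedBall ?_
    rw [UnitAddCircle.norm_eq] at hx
    rwa [mem_closedBall_zero_iff, Real.norm_eq_abs, abs_div, abs_of_pos hε, div_le_one hε]
  · intro x hx
    rw [UnitAddCircle.norm_eq] at hx
    refine hφ0 _ ?_
    rw [abs_div, abs_of_pos hε, le_div_iff₀ hε]
    exact hx.le

end Cutoff

end DerivativeBounds

section SturmLiouville

/-- Coefficients of the discrete Sturm–Liouville equation
`cond x * (g (x + shift) - g x) - cond (x - shift) * (g x - g (x - shift)) = mass x * g x`
along the orbits of the translation by `shift`. The product `cond x * (g (x + shift) - g x)` is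
called the flux of `g` at `x`. -/
structure SturmLiouville where
  shift : ℝ
  cond : ℝ → ℝ
  mass : ℝ → ℝ

namespace SturmLiouville

/-- Positivity of the conductances and of the mass: solutions started with nonnegative value and
positive flux are then increasing. -/
structure Elliptic (S : SturmLiouville) : Prop where
  cond_pos : ∀ x, 0 < S.cond x
  mass_nonneg : ∀ x, 0 ≤ S.mass x

variable (S : SturmLiouville)

/-- The value after `i` steps, and the flux out of that point, of the solution started at `s` with
value `0` and flux `1`. -/
noncomputable def solFlux : ℕ → ℝ → ℝ × ℝ
  | 0, _ => (0, 1)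
  | i + 1, s =>
    let g := (solFlux i s).1 + (solFlux i s).2 / S.cond (s + i * S.shift)
    (g, (solFlux i s).2 + S.mass (s + (i + 1) * S.shift) * g)

/-- The value component of `SturmLiouville.solFlux`. -/
noncomputable def sol (i : ℕ) (s : ℝ) : ℝ := (S.solFlux i s).1

/-- The flux component of `SturmLiouville.solFlux`. -/
noncomputable def flux (i : ℕ) (s : ℝ) : ℝ := (S.solFlux i s).2

/-- The solutions `SturmLiouville.sol` at least double every `W` steps. -/
def Doubling (W : ℕ) : Prop := ∀ s i, 2 * S.sol i s ≤ S.sol (i + W) s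

lemma sol_zero (s : ℝ) : S.sol 0 s = 0 := rfl

lemma flux_zero (s : ℝ) : S.flux 0 s = 1 := rfl

lemma sol_succ (i : ℕ) (s : ℝ) :
    S.sol (i + 1) s = S.sol i s + S.flux i s / S.cond (s + i * S.shift) := rfl

lemma flux_succ (i : ℕ) (s : ℝ) :
    S.flux (i + 1) s = S.flux i s + S.mass (s + (i + 1) * S.shift) * S.sol (i + 1) s := rfl

variable {S}

lemma sol_periodic (ha : Function.Periodic S.cond 1) (hc : Function.Periodic S.mass 1) (i : ℕ) :
    Function.Periodic (S.sol i) 1 := by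
  suffices h : Function.Periodic (S.solFlux i) 1 from fun s => congrArg Prod.fst (h s)
  induction i with
  | zero => exact fun _ => rfl
  | succ i ih =>
    intro s
    simp only [solFlux, ih s, add_right_comm s 1, ha _, hc _]

lemma Doubling.pow_mul_sol_le {W : ℕ} (hd : S.Doubling W) (R i : ℕ) (s : ℝ) :
    2 ^ R * S.sol i s ≤ S.sol (i + W * R) s := by
  induction R with
  | zero => simp
  | succ R ih =>
    have := hd s (i + W * R)
    rw [pow_succ, Nat.mul_succ, ← add_assoc]
    linarith

namespace Elliptic

variable (h : S.Elliptic)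
include h

lemma sol_nonneg_and_one_le_flux (i : ℕ) (s : ℝ) : 0 ≤ S.sol i s ∧ 1 ≤ S.flux i s := by
  induction i with
  | zero => simp [sol_zero, flux_zero]
  | succ i ih =>
    obtain ⟨hsol, hflux⟩ := ih
    have hcond := h.cond_pos (s + i * S.shift)
    have hsol' : 0 ≤ S.sol (i + 1) s := by rw [sol_succ]; positivity
    have := mul_nonneg (h.mass_nonneg (s + (i + 1) * S.shift)) hsol'
    exact ⟨hsol', by rw [flux_succ]; linarith⟩

lemma sol_nonneg (i : ℕ) (s : ℝ) : 0 ≤ S.sol i s := (h.sol_nonneg_and_one_le_flux i s).1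

lemma one_le_flux (i : ℕ) (s : ℝ) : 1 ≤ S.flux i s := (h.sol_nonneg_and_one_le_flux i s).2

lemma sol_pos {i : ℕ} (hi : 1 ≤ i) (s : ℝ) : 0 < S.sol i s := by
  obtain ⟨k, rfl⟩ := Nat.exists_eq_add_of_le' hi
  have := h.cond_pos (s + k * S.shift)
  have := h.sol_nonneg k s
  have := h.one_le_flux k s
  rw [sol_succ]
  positivity

lemma sol_mono (s : ℝ) : Monotone fun i => S.sol i s := by
  refine monotone_nat_of_le_succ fun i => ?_
  have := h.cond_pos (s + i * S.shift)
  have := h.one_le_flux i s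
  rw [sol_succ]
  exact le_add_of_nonneg_right (by positivity)

lemma flux_mono (s : ℝ) : Monotone fun i => S.flux i s := by
  refine monotone_nat_of_le_succ fun i => ?_
  rw [flux_succ]
  exact le_add_of_nonneg_right (mul_nonneg (h.mass_nonneg _) (h.sol_nonneg (i + 1) s))

lemma flux_le_cond_mul_sol_succ (i : ℕ) (s : ℝ) :
    S.flux i s ≤ S.cond (s + i * S.shift) * S.sol (i + 1) s := by
  have hcond := h.cond_pos (s + i * S.shift)
  rw [sol_succ, mul_add, mul_div_cancel₀ _ hcond.ne']
  exact le_add_of_nonneg_left (mul_nonneg hcond.le (h.sol_nonneg i s))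

-- A solution restarted after `k` steps dominates, once rescaled to absorb the value and the flux
-- accumulated so far.
lemma sol_add_le_and_flux_add_le (k m : ℕ) (s : ℝ) :
    S.sol (k + (m + 1)) s ≤ (S.sol k s * S.cond (s + k * S.shift) + S.flux k s) *
        S.sol (m + 1) (s + k * S.shift) ∧
      S.flux (k + (m + 1)) s ≤ (S.sol k s * S.cond (s + k * S.shift) + S.flux k s) *
        S.flux (m + 1) (s + k * S.shift) := by
  set K := S.sol k s * S.cond (s + k * S.shift) + S.flux k s with hK
  have hshift : ∀ m : ℕ, s + k * S.shift + m * S.shift = s + ((k + m : ℕ) : ℝ) * S.shift := by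
    intro m; push_cast; ring
  have hshift' : ∀ m : ℕ,
      s + k * S.shift + (m + 1) * S.shift = s + (((k + m : ℕ) : ℝ) + 1) * S.shift := by
    intro m; push_cast; ring
  have hflux_of_sol : ∀ m : ℕ, S.flux (k + m) s ≤ K * S.flux m (s + k * S.shift) →
      S.sol (k + m + 1) s ≤ K * S.sol (m + 1) (s + k * S.shift) →
      S.flux (k + m + 1) s ≤ K * S.flux (m + 1) (s + k * S.shift) := by
    intro m hflux hsol
    have := mul_le_mul_of_nonneg_left hsol (h.mass_nonneg (s + (((k + m : ℕ) : ℝ) + 1) * S.shift))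
    rw [flux_succ, flux_succ, hshift']
    linarith
  induction m with
  | zero =>
    have hcond := h.cond_pos (s + k * S.shift)
    have hsol : S.sol (k + 0 + 1) s = K * S.sol (0 + 1) (s + k * S.shift) := by
      rw [add_zero, sol_succ, sol_succ, sol_zero, flux_zero, hK, Nat.cast_zero, zero_mul, add_zero]
      field_simp
      ring
    refine ⟨hsol.le, hflux_of_sol 0 ?_ hsol.le⟩
    rw [flux_zero, mul_one]
    exact le_add_of_nonneg_left (mul_nonneg (h.sol_nonneg k s) hcond.le)
  | succ m ih =>
    obtain ⟨ihsol, ihflux⟩ := ih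
    have hcond := h.cond_pos (s + ((k + (m + 1) : ℕ) : ℝ) * S.shift)
    have hsol : S.sol (k + (m + 1) + 1) s ≤ K * S.sol (m + 1 + 1) (s + k * S.shift) := by
      rw [sol_succ, sol_succ (S := S) (m + 1), hshift, mul_add, ← mul_div_assoc]
      gcongr
    exact ⟨hsol, hflux_of_sol (m + 1) ihflux hsol⟩

lemma sol_succ_add_succ_le (k m : ℕ) (s : ℝ) :
    S.sol (k + 1 + (m + 1)) s ≤ S.sol (k + 1) s * (S.cond (s + (k + 1) * S.shift) +
      S.cond (s + k * S.shift) + S.mass (s + (k + 1) * S.shift)) *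
        S.sol (m + 1) (s + (k + 1) * S.shift) := by
  have hsplit := (h.sol_add_le_and_flux_add_le (k + 1) m s).1
  push_cast at hsplit
  refine hsplit.trans (mul_le_mul_of_nonneg_right ?_ (h.sol_nonneg _ _))
  have := h.flux_le_cond_mul_sol_succ k s
  rw [flux_succ]
  linarith

lemma sol_add_flux_le_pow {K : ℝ} (hK : ∀ x y, (1 + S.mass x) * (1 + 1 / S.cond y) ≤ K)
    (i : ℕ) (s : ℝ) : S.sol i s + S.flux i s ≤ K ^ i := by
  induction i with
  | zero => simp [sol_zero, flux_zero]
  | succ i ih =>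
    have hsol := h.sol_nonneg i s
    have hflux := zero_le_one.trans (h.one_le_flux i s)
    have hcond := h.cond_pos (s + i * S.shift)
    have hmass := h.mass_nonneg (s + (i + 1) * S.shift)
    have hKi := hK (s + (i + 1) * S.shift) (s + i * S.shift)
    have hK0 : 0 ≤ K := le_trans (by positivity) hKi
    rw [flux_succ, sol_succ, div_eq_mul_one_div]
    set r := 1 / S.cond (s + i * S.shift)
    set c := S.mass (s + (i + 1) * S.shift)
    have : 0 ≤ r := by positivity
    calc S.sol i s + S.flux i s * r + (S.flux i s + c * (S.sol i s + S.flux i s * r))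
        = (S.sol i s + S.flux i s) * ((1 + c) * (1 + r)) -
            (S.sol i s * r + S.sol i s * c * r + S.flux i s * c) := by ring
      _ ≤ (S.sol i s + S.flux i s) * ((1 + c) * (1 + r)) := sub_le_self _ (by positivity)
      _ ≤ K ^ i * K := by gcongr
      _ = K ^ (i + 1) := (pow_succ _ _).symm

-- A small conductance resets the ratio of flux to value, which afterwards grows only through the
-- mass.
lemma flux_add_le_of_cond_le {B C : ℝ} (hC : ∀ x, S.mass x ≤ C) (i m : ℕ) {s : ℝ}
    (hB : S.cond (s + i * S.shift) ≤ B) :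
    S.flux (i + m) s ≤ (B + m * C) * S.sol (i + m + 1) s := by
  have hB0 : 0 ≤ B := (h.cond_pos _).le.trans hB
  have hC0 : 0 ≤ C := (h.mass_nonneg 0).trans (hC 0)
  induction m with
  | zero =>
    simp only [add_zero, Nat.cast_zero, zero_mul]
    exact (h.flux_le_cond_mul_sol_succ i s).trans
      (mul_le_mul_of_nonneg_right hB (h.sol_nonneg _ _))
  | succ m ih =>
    have hsol := h.sol_nonneg (i + m + 1) s
    calc S.flux (i + (m + 1)) s
        = S.flux (i + m) s + S.mass (s + ((i + m : ℕ) + 1) * S.shift) * S.sol (i + m + 1) s :=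
          S.flux_succ (i + m) s
      _ ≤ (B + m * C) * S.sol (i + m + 1) s + C * S.sol (i + m + 1) s := by
          gcongr; exact hC _
      _ = (B + (m + 1 : ℕ) * C) * S.sol (i + m + 1) s := by push_cast; ring
      _ ≤ (B + (m + 1 : ℕ) * C) * S.sol (i + (m + 1) + 1) s := by
          gcongr; exact h.sol_mono s (by omega)

lemma pow_div_mul_sol_le {W : ℕ} (hd : S.Doubling W) (i k : ℕ) (s : ℝ) :
    2 ^ (k / W) * S.sol i s ≤ S.sol (i + k) s :=
  (hd.pow_mul_sol_le (k / W) i s).trans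
    (h.sol_mono s (Nat.add_le_add_left (Nat.mul_div_le k W) i))

end Elliptic

lemma derivDominated_sol_flux {l : ℕ} {μ : ℝ}
    (hcond : DerivDominated l μ (fun x => (S.cond x)⁻¹) fun x => (S.cond x)⁻¹)
    (hmass : DerivDominated l μ S.mass S.mass) (i : ℕ) :
    DerivDominated l (2 * i * μ) (S.sol i) (S.sol i) ∧
      DerivDominated l (2 * i * μ) (S.flux i) (S.flux i) := by
  have hμ := hcond.scale_nonneg
  induction i with
  | zero =>
    have hzero : (0 : ℝ) ≤ 2 * (0 : ℕ) * μ := by simp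
    have hsol := DerivDominated.const (l := l) 0 hzero
    have hflux := DerivDominated.const (l := l) 1 hzero
    rw [abs_zero] at hsol
    rw [abs_one] at hflux
    exact ⟨hsol, hflux⟩
  | succ i ih =>
    obtain ⟨ihsol, ihflux⟩ := ih
    have hsol : DerivDominated l (2 * i * μ + μ) (S.sol (i + 1)) (S.sol (i + 1)) :=
      (ihsol.mono_scale (le_add_of_nonneg_right hμ)).add
        (ihflux.mul (hcond.translate (i * S.shift)))
    have hflux : DerivDominated l (μ + (2 * i * μ + μ)) (S.flux (i + 1)) (S.flux (i + 1)) :=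
      (ihflux.mono_scale (by linarith)).add
        ((hmass.translate ((i + 1) * S.shift)).mul hsol)
    exact ⟨hsol.mono_scale (by push_cast; linarith), hflux.mono_scale (by push_cast; linarith)⟩

end SturmLiouville

end SturmLiouville

section Tents

namespace SturmLiouville

variable (S : SturmLiouville) (χ : ℝ → ℝ) (n : ℕ)

/-- The tent of length `n` with foot at `s` is the multiple of the solution `S.sol` vanishing at `s`
that takes the value `χ` at its top `s + n * S.shift`; `footFlux` is its flux at the foot. -/
noncomputable def footFlux (s : ℝ) : ℝ := χ (s + n * S.shift) / S.sol n s

/-- The sum at `x` of all tents with foot `x - i * S.shift`, `i < n` (tops excluded). -/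
noncomputable def tentSum (x : ℝ) : ℝ :=
  ∑ i ∈ Finset.range n, S.footFlux χ n (x - i * S.shift) * S.sol i (x - i * S.shift)

/-- The flux of all the tents at `x`. -/
noncomputable def tentFlux (x : ℝ) : ℝ :=
  ∑ i ∈ Finset.range n, S.footFlux χ n (x - i * S.shift) * S.flux i (x - i * S.shift)

/-- The flux entering the top `x` of a tent of height `1`. -/
noncomputable def topFlux (x : ℝ) : ℝ :=
  S.flux (n - 1) (x - n * S.shift) / S.sol n (x - n * S.shift)

variable {S χ n}

lemma tentSum_eq_sum (x : ℝ) : S.tentSum χ n x = ∑ i ∈ Finset.range n,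
    χ (x + ((n : ℝ) - i) * S.shift) / S.sol n (x - i * S.shift) * S.sol i (x - i * S.shift) := by
  refine Finset.sum_congr rfl fun i _ => ?_
  rw [footFlux]
  congr 3
  ring

lemma tentSum_periodic (ha : Function.Periodic S.cond 1) (hc : Function.Periodic S.mass 1)
    (hχ : Function.Periodic χ 1) : Function.Periodic (S.tentSum χ n) 1 := by
  intro x
  rw [tentSum_eq_sum, tentSum_eq_sum]
  refine Finset.sum_congr rfl fun i _ => ?_
  rw [add_right_comm, hχ, add_sub_right_comm, sol_periodic ha hc, sol_periodic ha hc]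

lemma tentFlux_sub_tentFlux (hn : 1 ≤ n) (x : ℝ) :
    S.tentFlux χ n x - S.tentFlux χ n (x - S.shift) =
      S.mass x * S.tentSum χ n x + S.footFlux χ n x - χ x * S.topFlux n x := by
  obtain ⟨k, rfl⟩ := Nat.exists_eq_add_of_le' hn
  have hprev : S.tentFlux χ (k + 1) (x - S.shift) =
      ∑ i ∈ Finset.range k, S.footFlux χ (k + 1) (x - ((i + 1 : ℕ) : ℝ) * S.shift) *
        S.flux i (x - ((i + 1 : ℕ) : ℝ) * S.shift) + χ x * S.topFlux (k + 1) x := by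
    have hshift : ∀ i : ℕ, x - S.shift - i * S.shift = x - ((i + 1 : ℕ) : ℝ) * S.shift := by
      intro i; push_cast; ring
    simp only [tentFlux, hshift]
    rw [Finset.sum_range_succ, footFlux, topFlux, sub_add_cancel, Nat.add_sub_cancel]
    ring
  have hstep : ∀ i ∈ Finset.range k, S.footFlux χ (k + 1) (x - ((i + 1 : ℕ) : ℝ) * S.shift) *
      S.flux (i + 1) (x - ((i + 1 : ℕ) : ℝ) * S.shift) =
      S.footFlux χ (k + 1) (x - ((i + 1 : ℕ) : ℝ) * S.shift) *
        S.flux i (x - ((i + 1 : ℕ) : ℝ) * S.shift) +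
      S.mass x * (S.footFlux χ (k + 1) (x - ((i + 1 : ℕ) : ℝ) * S.shift) *
        S.sol (i + 1) (x - ((i + 1 : ℕ) : ℝ) * S.shift)) := by
    intro i _
    rw [flux_succ, show x - ((i + 1 : ℕ) : ℝ) * S.shift + ((i : ℝ) + 1) * S.shift = x by
      push_cast; ring]
    ring
  rw [hprev, tentFlux, tentSum, Finset.sum_range_succ', Finset.sum_range_succ',
    Finset.sum_congr rfl hstep, Finset.sum_add_distrib, ← Finset.mul_sum]
  simp only [Nat.cast_zero, zero_mul, sub_zero, sol_zero, flux_zero, mul_zero, add_zero, mul_one]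
  ring

namespace Elliptic

variable (h : S.Elliptic)
include h

lemma cond_mul_tentSum_sub (hn : 1 ≤ n) (x : ℝ) :
    S.cond x * (χ (x + S.shift) + S.tentSum χ n (x + S.shift) - S.tentSum χ n x) =
      S.tentFlux χ n x := by
  obtain ⟨k, rfl⟩ := Nat.exists_eq_add_of_le' hn
  have htop : S.tentSum χ (k + 1) (x + S.shift) + χ (x + S.shift) =
      ∑ i ∈ Finset.range (k + 1),
        S.footFlux χ (k + 1) (x - i * S.shift) * S.sol (i + 1) (x - i * S.shift) := by
    rw [Finset.sum_range_succ, tentSum, Finset.sum_range_succ', sol_zero, mul_zero, add_zero]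
    congr 1
    · refine Finset.sum_congr rfl fun i _ => ?_
      rw [show x + S.shift - ((i + 1 : ℕ) : ℝ) * S.shift = x - i * S.shift by push_cast; ring]
    · rw [footFlux, div_mul_cancel₀ _ (h.sol_pos k.succ_pos _).ne']
      congr 1; push_cast; ring
  rw [add_comm (χ _), htop, tentSum, tentFlux, ← Finset.sum_sub_distrib, Finset.mul_sum]
  refine Finset.sum_congr rfl fun i _ => ?_
  have hcond := (h.cond_pos x).ne'
  rw [sol_succ, sub_add_cancel]
  field_simp
  ring

lemma tent_nonneg (hχ : ∀ x, 0 ≤ χ x) (x : ℝ) (i : ℕ) :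
    0 ≤ χ (x + ((n : ℝ) - i) * S.shift) / S.sol n (x - i * S.shift) *
      S.sol i (x - i * S.shift) :=
  mul_nonneg (div_nonneg (hχ _) (h.sol_nonneg _ _)) (h.sol_nonneg _ _)

lemma tentSum_nonneg (hχ : ∀ x, 0 ≤ χ x) (x : ℝ) : 0 ≤ S.tentSum χ n x := by
  rw [tentSum_eq_sum]
  exact Finset.sum_nonneg fun i _ => h.tent_nonneg hχ x i

lemma footFlux_nonneg (hχ : ∀ x, 0 ≤ χ x) (x : ℝ) : 0 ≤ S.footFlux χ n x :=
  div_nonneg (hχ _) (h.sol_nonneg _ _)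

lemma topFlux_nonneg (x : ℝ) : 0 ≤ S.topFlux n x :=
  div_nonneg (zero_le_one.trans (h.one_le_flux _ _)) (h.sol_nonneg _ _)

lemma tentSum_le (hχ1 : ∀ x, χ x ≤ 1) (x : ℝ) :
    S.tentSum χ n x ≤ n := by
  rw [tentSum_eq_sum]
  calc _ ≤ ∑ _ ∈ Finset.range n, (1 : ℝ) := by
        refine Finset.sum_le_sum fun i hi => ?_
        have hin : i < n := Finset.mem_range.1 hi
        have hsoln := h.sol_pos (by omega : 1 ≤ n) (x - i * S.shift)
        have hsoli := h.sol_nonneg i (x - i * S.shift)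
        rw [div_mul_eq_mul_div, div_le_one hsoln]
        exact (mul_le_of_le_one_left hsoli (hχ1 _)).trans (h.sol_mono _ hin.le)
    _ = n := by simp

lemma one_le_tentSum_mul_sol {A C : ℝ} (hA : ∀ x, S.cond x ≤ A) (hC : ∀ x, S.mass x ≤ C)
    (hχ : ∀ x, 0 ≤ χ x) (x : ℝ) {m : ℕ} (hm : 1 ≤ m) (hmn : m < n)
    (hχm : χ (x + m * S.shift) = 1) :
    1 ≤ S.tentSum χ n x * ((2 * A + C) * S.sol m x) := by
  obtain ⟨m, rfl⟩ := Nat.exists_eq_add_of_le' hm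
  obtain ⟨k, hk⟩ : ∃ k, n = k + 1 + (m + 1) := ⟨n - m - 2, by omega⟩
  set s := x - ((k + 1 : ℕ) : ℝ) * S.shift with hs
  have hterm : S.sol (k + 1) s / S.sol n s ≤ S.tentSum χ n x := by
    rw [tentSum_eq_sum]
    refine le_of_eq_of_le ?_ (Finset.single_le_sum (fun i _ => h.tent_nonneg hχ x i)
      (Finset.mem_range.2 (by omega : k + 1 < n)))
    rw [show x + ((n : ℝ) - ((k + 1 : ℕ) : ℝ)) * S.shift = x + ((m + 1 : ℕ) : ℝ) * S.shift by
      rw [hk]; push_cast; ring, hχm, one_div_mul_eq_div]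
  have hsplit := h.sol_succ_add_succ_le k m s
  rw [← hk, show s + ((k : ℝ) + 1) * S.shift = x by rw [hs]; push_cast; ring, mul_assoc] at hsplit
  have hsoln := h.sol_pos (by omega : 1 ≤ n) s
  have hsolk := h.sol_nonneg (k + 1) s
  have hsolm := h.sol_nonneg (m + 1) x
  have hcoef : S.cond x + S.cond (s + k * S.shift) + S.mass x ≤ 2 * A + C := by
    linarith [hA x, hA (s + k * S.shift), hC x]
  have hAC : 0 ≤ 2 * A + C := by
    linarith [h.cond_pos x, h.cond_pos (s + k * S.shift), h.mass_nonneg x]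
  calc (1 : ℝ) = S.sol n s / S.sol n s := (div_self hsoln.ne').symm
    _ ≤ S.sol (k + 1) s * ((2 * A + C) * S.sol (m + 1) x) / S.sol n s := by
        gcongr; exact hsplit.trans (by gcongr)
    _ = S.sol (k + 1) s / S.sol n s * ((2 * A + C) * S.sol (m + 1) x) := by ring
    _ ≤ _ := by gcongr

lemma tentSum_le_mul_half_pow (hχ1 : ∀ x, χ x ≤ 1) {W : ℕ}
    (hd : S.Doubling W) (z : ℝ) (j : ℕ)
    (hz : ∀ k : ℕ, 1 ≤ k → k < j → χ (z + k * S.shift) = 0) :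
    S.tentSum χ n z ≤ n * (1 / 2) ^ (j / W) := by
  rw [tentSum_eq_sum]
  calc _ ≤ ∑ _ ∈ Finset.range n, (1 / 2 : ℝ) ^ (j / W) := by
        refine Finset.sum_le_sum fun i hi => ?_
        have hin : i < n := Finset.mem_range.1 hi
        rw [← Nat.cast_sub hin.le]
        rcases lt_or_ge (n - i) j with hij | hij
        · rw [hz (n - i) (by omega) hij, zero_div, zero_mul]
          positivity
        have hdouble := h.pow_div_mul_sol_le hd i (n - i) (z - i * S.shift)
        rw [Nat.add_sub_cancel' hin.le] at hdouble
        have hsoln := h.sol_pos (by omega : 1 ≤ n) (z - i * S.shift)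
        have hsoli := h.sol_nonneg i (z - i * S.shift)
        have hpow : (2 : ℝ) ^ (j / W) ≤ 2 ^ ((n - i) / W) := by gcongr; norm_num
        rw [div_mul_eq_mul_div, div_le_iff₀ hsoln, one_div, inv_pow, ← div_eq_inv_mul,
          le_div_iff₀ (by positivity)]
        calc _ ≤ 1 * S.sol i (z - i * S.shift) * 2 ^ ((n - i) / W) := by
              gcongr; exact hχ1 _
          _ ≤ _ := by linarith
    _ = _ := by simp

lemma topFlux_le {A : ℝ} (hA : ∀ x, S.cond x ≤ A) (hn : 1 ≤ n) (x : ℝ) :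
    S.topFlux n x ≤ A := by
  obtain ⟨k, rfl⟩ := Nat.exists_eq_add_of_le' hn
  have hsol := h.sol_pos hn (x - ((k + 1 : ℕ) : ℝ) * S.shift)
  rw [topFlux, div_le_iff₀ hsol, Nat.add_sub_cancel]
  exact (h.flux_le_cond_mul_sol_succ k _).trans (by gcongr; exact hA _)

lemma topFlux_le_of_cond_le {B C : ℝ} (hC : ∀ x, S.mass x ≤ C) {m : ℕ} (hmn : m < n) {x : ℝ}
    (hB : S.cond (x - (m + 1) * S.shift) ≤ B) : S.topFlux n x ≤ B + m * C := by
  obtain ⟨i, rfl⟩ : ∃ i, n = i + m + 1 := ⟨n - m - 1, by omega⟩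
  rw [topFlux, div_le_iff₀ (h.sol_pos (by omega) _), Nat.add_sub_cancel]
  refine h.flux_add_le_of_cond_le hC i m ?_
  rwa [show x - ((i + m + 1 : ℕ) : ℝ) * S.shift + i * S.shift = x - (m + 1) * S.shift by
    push_cast; ring]

end Elliptic

section TentDerivatives

/-- The cost of a derivative of the tents of length `n`, when it is `M` for the cutoff and `μ` for
the coefficients. -/
noncomputable def tentScale (l n : ℕ) (μ M : ℝ) : ℝ :=
  M + (2 * l + 2) * (2 * n * μ) + 2 * n * μ

lemma le_tentScale {l : ℕ} {μ : ℝ} (hμ : 0 ≤ μ) (M : ℝ) : M ≤ tentScale l n μ M := by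
  have : 0 ≤ (2 * (l : ℝ) + 2) * (2 * n * μ) := by positivity
  have : 0 ≤ 2 * (n : ℝ) * μ := by positivity
  rw [tentScale]
  linarith

variable {l : ℕ} {μ M η : ℝ} (h : S.Elliptic)
  (hcond : DerivDominated l μ (fun x => (S.cond x)⁻¹) fun x => (S.cond x)⁻¹)
  (hmass : DerivDominated l μ S.mass S.mass)
include h hcond hmass

lemma derivDominated_footFlux (hn : 1 ≤ n)
    (hχ : DerivDominated l M χ fun x => 2 ^ l * (χ x + η)) :
    DerivDominated l (tentScale l n μ M) (S.footFlux χ n)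
      fun x => 2 ^ l * (χ (x + n * S.shift) + η) / S.sol n x := by
  have hμ := hcond.scale_nonneg
  have hinv := (derivDominated_sol_flux hcond hmass n).1.inv fun x => h.sol_pos hn x
  exact ((hχ.translate (n * S.shift)).mul hinv).mono_scale
    (le_add_of_nonneg_right (by positivity))

lemma derivDominated_topFlux (hn : 1 ≤ n) (hM : 0 ≤ M) :
    DerivDominated l (tentScale l n μ M) (S.topFlux n) (S.topFlux n) := by
  have hμ := hcond.scale_nonneg
  have hinv := (derivDominated_sol_flux hcond hmass n).1.inv fun x => h.sol_pos hn x
  have hpred : ((n - 1 : ℕ) : ℝ) ≤ n := by exact_mod_cast Nat.sub_le n 1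
  have htop := ((derivDominated_sol_flux hcond hmass (n - 1)).2.mul hinv).translate
    (-(n * S.shift))
  refine htop.mono_scale ?_
  rw [tentScale]
  have : 2 * ((n - 1 : ℕ) : ℝ) * μ ≤ 2 * n * μ := by gcongr
  linarith

lemma derivDominated_tent (hη : 0 ≤ η) (hχ : DerivDominated l M χ fun x => 2 ^ l * (χ x + η))
    {i : ℕ} (hin : i < n) :
    DerivDominated l (tentScale l n μ M)
      (fun x => χ (x + ((n : ℝ) - i) * S.shift) / S.sol n (x - i * S.shift) *
        S.sol i (x - i * S.shift))
      (fun x => 2 ^ l * (χ (x + ((n : ℝ) - i) * S.shift) / S.sol n (x - i * S.shift) *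
        S.sol i (x - i * S.shift) + η)) := by
  have hμ := hcond.scale_nonneg
  have hn : 1 ≤ n := by omega
  have hinv := (derivDominated_sol_flux hcond hmass n).1.inv fun x => h.sol_pos hn x
  have hsol := (derivDominated_sol_flux hcond hmass i).1
  have hprod := ((hχ.translate (((n : ℝ) - i) * S.shift)).mul
    (hinv.translate (-(i * S.shift)))).mul (hsol.translate (-(i * S.shift)))
  simp only [← sub_eq_add_neg, ← div_eq_mul_inv] at hprod
  refine hprod.mono ?_ fun x => ?_
  · rw [tentScale]
    have : (i : ℝ) ≤ n := by exact_mod_cast hin.le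
    gcongr
  · have hratio : S.sol i (x - i * S.shift) / S.sol n (x - i * S.shift) ≤ 1 :=
      (div_le_one (h.sol_pos hn _)).2 (h.sol_mono _ hin.le)
    have := mul_le_of_le_one_right hη hratio
    calc 2 ^ l * (χ (x + ((n : ℝ) - i) * S.shift) + η) / S.sol n (x - i * S.shift) *
          S.sol i (x - i * S.shift)
        = 2 ^ l * (χ (x + ((n : ℝ) - i) * S.shift) / S.sol n (x - i * S.shift) *
          S.sol i (x - i * S.shift) +
            η * (S.sol i (x - i * S.shift) / S.sol n (x - i * S.shift))) := by ring
      _ ≤ _ := by gcongr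

lemma derivDominated_tentSum (hη : 0 ≤ η)
    (hχ : DerivDominated l M χ fun x => 2 ^ l * (χ x + η)) :
    DerivDominated l (tentScale l n μ M) (S.tentSum χ n)
      fun x => 2 ^ l * (S.tentSum χ n x + η * n) := by
  have hscale := hχ.scale_nonneg.trans (le_tentScale (l := l) (n := n) hcond.scale_nonneg M)
  have hsum := DerivDominated.sum (Finset.range n) hscale fun i hi =>
    derivDominated_tent h hcond hmass hη hχ (Finset.mem_range.1 hi)
  simp only [← Finset.mul_sum, Finset.sum_add_distrib, ← tentSum_eq_sum, Finset.sum_const,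
    Finset.card_range, nsmul_eq_mul] at hsum
  simpa only [mul_comm η] using hsum

end TentDerivatives

end SturmLiouville

end Tents

section GroundState

/-- The potential `v` for which `f` solves `f (x + ω) + f (x - ω) = v x * f x`. -/
noncomputable def groundPotential (ω : ℝ) (f : ℝ → ℝ) (x : ℝ) : ℝ := (f (x + ω) + f (x - ω)) / f x

/-- The substitution `u = f * g` turns the Schrödinger equation of `groundPotential ω f + b` into
the Sturm–Liouville equation for `g` with these coefficients; `α = ± ω` is the direction. -/
def groundSL (f : ℝ → ℝ) (b α : ℝ) : SturmLiouville :=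
  ⟨α, fun x => f x * f (x + α), fun x => b * f x ^ 2⟩

/-- The factor by which the ground state `f` is modified: the cutoff `χ` extended by tents of length
`n` in both directions of the rotation. -/
noncomputable def tentFactor (ω : ℝ) (f : ℝ → ℝ) (b : ℝ) (χ : ℝ → ℝ) (n : ℕ) (x : ℝ) : ℝ :=
  χ x + (groundSL f b ω).tentSum χ n x + (groundSL f b (-ω)).tentSum χ n x

/-- The change of the ground potential caused by `tentFactor`: it is `b` up to a term from the tops
of the tents and a term from their feet. -/
noncomputable def potentialCorrection (ω : ℝ) (f : ℝ → ℝ) (b : ℝ) (χ : ℝ → ℝ) (n : ℕ) (x : ℝ) : ℝ :=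
  b - χ x * (b * f x ^ 2 + (groundSL f b ω).topFlux n x + (groundSL f b (-ω)).topFlux n x) /
      (f x ^ 2 * tentFactor ω f b χ n x) +
    ((groundSL f b ω).footFlux χ n x + (groundSL f b (-ω)).footFlux χ n x) /
      (f x ^ 2 * tentFactor ω f b χ n x)

variable {ω b : ℝ} {f χ : ℝ → ℝ} {n : ℕ}

lemma groundPotential_periodic (hf : Function.Periodic f 1) :
    Function.Periodic (groundPotential ω f) 1 := by
  intro x
  simp only [groundPotential, add_right_comm x 1 ω, add_sub_right_comm x 1 ω, hf _]

lemma groundSL_elliptic (hf : ∀ x, 0 < f x) (hb : 0 ≤ b) (α : ℝ) : (groundSL f b α).Elliptic :=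
  ⟨fun x => mul_pos (hf x) (hf (x + α)), fun _ => mul_nonneg hb (sq_nonneg _)⟩

lemma groundSL_cond_le (hf : ∀ x, 0 < f x) {F : ℝ} (hF : ∀ x, f x ≤ F) (α x : ℝ) :
    (groundSL f b α).cond x ≤ F ^ 2 := by
  rw [sq]
  exact mul_le_mul (hF _) (hF _) (hf _).le ((hf 0).le.trans (hF 0))

lemma groundSL_mass_le (hf : ∀ x, 0 < f x) {F : ℝ} (hF : ∀ x, f x ≤ F) (hb : 0 ≤ b) (α x : ℝ) :
    (groundSL f b α).mass x ≤ b * F ^ 2 :=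
  mul_le_mul_of_nonneg_left (pow_le_pow_left₀ (hf x).le (hF x) 2) hb

lemma tentFactor_periodic (hf : Function.Periodic f 1) (hχ : Function.Periodic χ 1) :
    Function.Periodic (tentFactor ω f b χ n) 1 := by
  have hcond (α : ℝ) : Function.Periodic (groundSL f b α).cond 1 := fun x => by
    simp only [groundSL, add_right_comm x 1 α, hf _]
  have hmass (α : ℝ) : Function.Periodic (groundSL f b α).mass 1 := fun x => by
    simp only [groundSL, hf _]
  intro x
  rw [tentFactor, hχ, SturmLiouville.tentSum_periodic (hcond ω) (hmass ω) hχ,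
    SturmLiouville.tentSum_periodic (hcond (-ω)) (hmass (-ω)) hχ, tentFactor]

lemma mul_tentFactor_add (hf : ∀ x, 0 < f x) (hb : 0 ≤ b) (hn : 1 ≤ n) (x : ℝ) :
    f x * (f (x + ω) * tentFactor ω f b χ n (x + ω) + f (x - ω) * tentFactor ω f b χ n (x - ω)) =
      f x * (f (x + ω) + f (x - ω)) * tentFactor ω f b χ n x +
        b * f x ^ 2 * tentFactor ω f b χ n x -
        χ x * (b * f x ^ 2 + (groundSL f b ω).topFlux n x + (groundSL f b (-ω)).topFlux n x) +
        ((groundSL f b ω).footFlux χ n x + (groundSL f b (-ω)).footFlux χ n x) := by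
  have hright := groundSL_elliptic hf hb ω
  have hleft := groundSL_elliptic hf hb (-ω)
  have right_at := hright.cond_mul_tentSum_sub (χ := χ) hn x
  have right_before := hright.cond_mul_tentSum_sub (χ := χ) hn (x - ω)
  have left_at := hleft.cond_mul_tentSum_sub (χ := χ) hn x
  have left_before := hleft.cond_mul_tentSum_sub (χ := χ) hn (x + ω)
  have right_flux :=
    SturmLiouville.tentFlux_sub_tentFlux (S := groundSL f b ω) (χ := χ) hn x
  have left_flux :=
    SturmLiouville.tentFlux_sub_tentFlux (S := groundSL f b (-ω)) (χ := χ) hn x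
  have hshift (α : ℝ) : (groundSL f b α).shift = α := rfl
  have hcond (α y : ℝ) : (groundSL f b α).cond y = f y * f (y + α) := rfl
  have hmass (α y : ℝ) : (groundSL f b α).mass y = b * f y ^ 2 := rfl
  simp only [hshift, hcond, hmass, sub_add_cancel, sub_neg_eq_add, ← sub_eq_add_neg,
    add_sub_cancel_right] at right_at right_before left_at left_before right_flux left_flux
  simp only [tentFactor]
  linear_combination right_at - right_before + left_at - left_before + right_flux + left_flux

lemma groundPotential_mul_tentFactor (hf : ∀ x, 0 < f x) (hb : 0 ≤ b) (hn : 1 ≤ n)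
    (hg : ∀ x, 0 < tentFactor ω f b χ n x) (x : ℝ) :
    groundPotential ω (fun y => f y * tentFactor ω f b χ n y) x =
      groundPotential ω f x + potentialCorrection ω f b χ n x := by
  have hfx := hf x
  have hgx := hg x
  rw [groundPotential, ← mul_div_mul_left _ _ hfx.ne', mul_tentFactor_add hf hb hn,
    groundPotential, potentialCorrection]
  field_simp
  ring

section Bounds

variable (hf : ∀ x, 0 < f x) (hb : 0 ≤ b)
include hf hb

lemma le_tentFactor (hχ : ∀ x, 0 ≤ χ x) (x : ℝ) : χ x ≤ tentFactor ω f b χ n x := by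
  have hright := (groundSL_elliptic hf hb ω).tentSum_nonneg (n := n) hχ x
  have hleft := (groundSL_elliptic hf hb (-ω)).tentSum_nonneg (n := n) hχ x
  rw [tentFactor]
  linarith

lemma tentSum_le_tentFactor (hχ : ∀ x, 0 ≤ χ x) {α : ℝ} (hα : α = ω ∨ α = -ω) (x : ℝ) :
    (groundSL f b α).tentSum χ n x ≤ tentFactor ω f b χ n x := by
  have hright := (groundSL_elliptic hf hb ω).tentSum_nonneg (n := n) hχ x
  have hleft := (groundSL_elliptic hf hb (-ω)).tentSum_nonneg (n := n) hχ x
  have hχx := hχ x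
  rw [tentFactor]
  rcases hα with rfl | rfl <;> linarith

lemma tentFactor_le (hχ1 : ∀ x, χ x ≤ 1) (x : ℝ) : tentFactor ω f b χ n x ≤ 2 * n + 1 := by
  have hright := (groundSL_elliptic hf hb ω).tentSum_le (n := n) hχ1 x
  have hleft := (groundSL_elliptic hf hb (-ω)).tentSum_le (n := n) hχ1 x
  rw [tentFactor]
  linarith [hχ1 x]

end Bounds

section Derivatives

variable {l : ℕ} {Y M η : ℝ}

lemma derivDominated_mul_sq (h : DerivDominated l Y f f) (hb : 0 ≤ b) :
    DerivDominated l (2 * Y) (fun x => b * f x ^ 2) fun x => b * f x ^ 2 := by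
  have hprod := (DerivDominated.const (l := l) b le_rfl).mul (h.mul h)
  simpa only [abs_of_nonneg hb, ← sq, zero_add, ← two_mul] using hprod

/-- The cost of a derivative of the coefficients of `groundSL`, when it is `Y` for the ground
state. -/
noncomputable def coeffScale (l : ℕ) (Y : ℝ) : ℝ := (2 * l + 2) * (2 * Y)

lemma two_mul_le_coeffScale (l : ℕ) (hY : 0 ≤ Y) : 2 * Y ≤ coeffScale l Y :=
  le_mul_of_one_le_left (by positivity) (by linarith [(Nat.cast_nonneg l : (0 : ℝ) ≤ l)])

lemma derivDominated_groundSL (h : DerivDominated l Y f f) (hf : ∀ x, 0 < f x) (hb : 0 ≤ b)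
    (α : ℝ) :
    DerivDominated l (coeffScale l Y) (fun x => ((groundSL f b α).cond x)⁻¹)
        (fun x => ((groundSL f b α).cond x)⁻¹) ∧
      DerivDominated l (coeffScale l Y) (groundSL f b α).mass (groundSL f b α).mass := by
  refine ⟨?_, (derivDominated_mul_sq h hb).mono_scale (two_mul_le_coeffScale l h.scale_nonneg)⟩
  have hcond : DerivDominated l (2 * Y) (groundSL f b α).cond (groundSL f b α).cond := by
    rw [two_mul]
    exact h.mul (h.translate α)
  exact hcond.inv (groundSL_elliptic hf hb α).cond_pos

/-- The cost of a derivative of `potentialCorrection`, when it is `Y` for the ground state and `M`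
for the cutoff. -/
noncomputable def correctionScale (l n : ℕ) (Y M : ℝ) : ℝ :=
  SturmLiouville.tentScale l n (coeffScale l Y) M +
    SturmLiouville.tentScale l n (coeffScale l Y) M + 2 * Y +
    (2 * l + 2) * (2 * Y + 2 ^ (l + 1) * SturmLiouville.tentScale l n (coeffScale l Y) M)

variable (h : DerivDominated l Y f f) (hf : ∀ x, 0 < f x) (hb : 0 ≤ b)
include h hf hb

lemma derivDominated_topFlux_add (hn : 1 ≤ n) (hM : 0 ≤ M) :
    DerivDominated l (SturmLiouville.tentScale l n (coeffScale l Y) M + 2 * Y)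
      (fun x => b * f x ^ 2 + (groundSL f b ω).topFlux n x + (groundSL f b (-ω)).topFlux n x)
      (fun x => b * f x ^ 2 + (groundSL f b ω).topFlux n x + (groundSL f b (-ω)).topFlux n x) := by
  have hY := h.scale_nonneg
  have htop (α : ℝ) := (derivDominated_groundSL h hf hb α).elim fun hcond hmass =>
    (SturmLiouville.derivDominated_topFlux (groundSL_elliptic hf hb α) hcond hmass hn
      hM).mono_scale (le_add_of_nonneg_right (by positivity : 0 ≤ 2 * Y))
  have hscale := hM.trans (SturmLiouville.le_tentScale (l := l) (n := n)
    (derivDominated_groundSL h hf hb ω).1.scale_nonneg M)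
  exact (((derivDominated_mul_sq h hb).mono_scale (le_add_of_nonneg_left hscale)).add
    (htop ω)).add (htop (-ω))

variable (hη : 0 ≤ η) (hχ : DerivDominated l M χ fun x => 2 ^ l * (χ x + η))
include hη hχ

lemma derivDominated_tentFactor (hg : ∀ x, 0 ≤ tentFactor ω f b χ n x)
    (hηg : ∀ x, η * (2 * n + 1) ≤ tentFactor ω f b χ n x) :
    DerivDominated l (2 ^ (l + 1) * SturmLiouville.tentScale l n (coeffScale l Y) M)
      (tentFactor ω f b χ n) (tentFactor ω f b χ n) := by
  have htent (α : ℝ) := (derivDominated_groundSL h hf hb α).elim fun hcond hmass =>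
    SturmLiouville.derivDominated_tentSum (n := n) (groundSL_elliptic hf hb α) hcond hmass hη hχ
  have hscale := SturmLiouville.le_tentScale (l := l) (n := n)
    (derivDominated_groundSL h hf hb ω).1.scale_nonneg M
  refine DerivDominated.self_of_const_mul (one_le_pow₀ one_le_two) hg
    ((((hχ.mono_scale hscale).add (htent ω)).add (htent (-ω))).mono_profile fun x => ?_)
  calc 2 ^ l * (χ x + η) + 2 ^ l * ((groundSL f b ω).tentSum χ n x + η * n) +
        2 ^ l * ((groundSL f b (-ω)).tentSum χ n x + η * n)
      = 2 ^ l * (tentFactor ω f b χ n x + η * (2 * n + 1)) := by rw [tentFactor]; ring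
    _ ≤ 2 ^ l * (tentFactor ω f b χ n x + tentFactor ω f b χ n x) := by gcongr; exact hηg x
    _ = 2 ^ (l + 1) * tentFactor ω f b χ n x := by ring

lemma derivDominated_potentialCorrection (hn : 1 ≤ n) (hg : ∀ x, 0 < tentFactor ω f b χ n x)
    (hηg : ∀ x, η * (2 * n + 1) ≤ tentFactor ω f b χ n x) :
    DerivDominated l (correctionScale l n Y M) (potentialCorrection ω f b χ n) fun x =>
      b + 2 ^ l * (χ x + η) *
          (b * f x ^ 2 + (groundSL f b ω).topFlux n x + (groundSL f b (-ω)).topFlux n x) /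
            (f x ^ 2 * tentFactor ω f b χ n x) +
        (2 ^ l * (χ (x + n * ω) + η) / (groundSL f b ω).sol n x +
          2 ^ l * (χ (x + n * -ω) + η) / (groundSL f b (-ω)).sol n x) /
            (f x ^ 2 * tentFactor ω f b χ n x) := by
  have hY := h.scale_nonneg
  have hM := hχ.scale_nonneg
  have hMt := SturmLiouville.le_tentScale (l := l) (n := n)
    (derivDominated_groundSL h hf hb ω).1.scale_nonneg M
  have := hM.trans hMt
  have hfoot (α : ℝ) := (derivDominated_groundSL h hf hb α).elim fun hcond hmass =>
    SturmLiouville.derivDominated_footFlux (groundSL_elliptic hf hb α) hcond hmass hn hχ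
  have hden : DerivDominated l
      ((2 * l + 2) * (2 * Y + 2 ^ (l + 1) * SturmLiouville.tentScale l n (coeffScale l Y) M))
      (fun x => (f x ^ 2 * tentFactor ω f b χ n x)⁻¹)
      (fun x => (f x ^ 2 * tentFactor ω f b χ n x)⁻¹) := by
    refine DerivDominated.inv ?_ fun x => mul_pos (pow_pos (hf x) 2) (hg x)
    simpa only [← sq, ← two_mul] using
      (h.mul h).mul (derivDominated_tentFactor h hf hb hη hχ (fun x => (hg x).le) hηg)
  have htops := ((hχ.mul (derivDominated_topFlux_add (ω := ω) h hf hb hn hM)).mul hden).mono_scale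
    (show _ ≤ correctionScale l n Y M by rw [correctionScale]; linarith)
  have hfeet := (((hfoot ω).add (hfoot (-ω))).mul hden).mono_scale
    (show _ ≤ correctionScale l n Y M by rw [correctionScale]; linarith)
  have hsum := ((DerivDominated.const b htops.scale_nonneg).add htops.neg).add hfeet
  simp only [abs_of_nonneg hb, ← div_eq_mul_inv, ← sub_eq_add_neg] at hsum
  exact hsum

end Derivatives

end GroundState

section Scale

/-- The scale `Y` of an inductive step is large, relative to the Diophantine constant `c`, the
constant `T` of the cutoffs and the number `l` of derivatives. -/
structure LargeScale (c T : ℝ) (l Y : ℕ) : Prop where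
  hundred_le : (100 : ℝ) ≤ Y
  eight_div_le : 8 / c ≤ Y
  cutoff_le : T ≤ Y
  two_pow_le : (2 : ℝ) ^ (l + 5) ≤ Y
  pow_fifty_le_exp : 1000 * 2 ^ l * (Y : ℝ) ^ 50 ≤ exp Y

lemma eventually_largeScale (c T : ℝ) (l : ℕ) : ∀ᶠ Y : ℕ in atTop, LargeScale c T l Y := by
  have hcast : Tendsto (fun Y : ℕ => (Y : ℝ)) atTop atTop := tendsto_natCast_atTop_atTop
  have hexp := (Real.tendsto_exp_div_pow_atTop 50).comp hcast
  filter_upwards [hcast.eventually_ge_atTop 100, hcast.eventually_ge_atTop (8 / c),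
    hcast.eventually_ge_atTop T, hcast.eventually_ge_atTop (2 ^ (l + 5)),
    hexp.eventually_ge_atTop (1000 * 2 ^ l)] with Y h100 hc hT hl he
  exact ⟨h100, hc, hT, hl, (le_div_iff₀ (by positivity)).1 he⟩

namespace LargeScale

variable {c T : ℝ} {l Y : ℕ} (h : LargeScale c T l Y)
include h

lemma one_le : (1 : ℝ) ≤ Y := by linarith [h.hundred_le]

lemma pos : (0 : ℝ) < Y := by linarith [h.hundred_le]

lemma hundred_le_nat : 100 ≤ Y := by exact_mod_cast h.hundred_le

lemma two_mul_add_two_le : 2 * (l : ℝ) + 2 ≤ Y := by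
  have hl : ((l + 1 : ℕ) : ℝ) < ((2 ^ (l + 1) : ℕ) : ℝ) := by exact_mod_cast Nat.lt_two_pow_self
  push_cast at hl
  linarith [h.two_pow_le, show (2 : ℝ) ^ (l + 5) = 2 ^ (l + 1) * 16 by ring]

lemma hundred_mul_pow_le {j k : ℕ} (hjk : j < k) : 100 * (Y : ℝ) ^ j ≤ (Y : ℝ) ^ k :=
  have := h.pos
  calc 100 * (Y : ℝ) ^ j ≤ Y * (Y : ℝ) ^ j := by gcongr; exact h.hundred_le
    _ = (Y : ℝ) ^ (j + 1) := by ring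
    _ ≤ (Y : ℝ) ^ k := pow_le_pow_right₀ h.one_le hjk

lemma two_pow_mul_pow_le_exp {k : ℕ} (hk : k ≤ 50) : 1000 * 2 ^ l * (Y : ℝ) ^ k ≤ exp Y := by
  refine le_trans ?_ h.pow_fifty_le_exp
  gcongr
  exact h.one_le

lemma pow_le_exp {k : ℕ} (hk : k ≤ 50) : 1000 * (Y : ℝ) ^ k ≤ exp Y := by
  refine le_trans ?_ (h.two_pow_mul_pow_le_exp hk)
  gcongr
  exact le_mul_of_one_le_right (by norm_num) (one_le_pow₀ one_le_two)

lemma exists_norm_add_mul_le {α : ℝ} (hα : BadlyApproximable c α) (x : ℝ) :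
    ∃ m : ℕ, 1 ≤ m ∧ m ≤ Y ^ 21 ∧
      ‖((x + m * α : ℝ) : UnitAddCircle)‖ ≤ 1 / (Y : ℝ) ^ 10 := by
  have hY := h.pos
  obtain ⟨m, hm, hmle, hhit⟩ := hα.exists_norm_add_mul_le (ε := 1 / (Y : ℝ) ^ 10) (by positivity)
    (div_le_one_of_le₀ (one_le_pow₀ h.one_le) (by positivity)) x
  refine ⟨m, hm, ?_, hhit⟩
  have : (m : ℝ) ≤ (Y : ℝ) ^ 21 := by
    calc (m : ℝ) ≤ 8 / c / (1 / (Y : ℝ) ^ 10) ^ 2 := hmle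
      _ = 8 / c * (Y : ℝ) ^ 20 := by field_simp
      _ ≤ Y * (Y : ℝ) ^ 20 := by gcongr; exact h.eight_div_le
      _ = (Y : ℝ) ^ 21 := by ring
  exact_mod_cast this

lemma two_div_le : 2 / ((Y ^ 40 : ℕ) : ℝ) ^ 10 ≤ 1 / (Y : ℝ) ^ 10 := by
  have hY := h.pos
  have hpow := h.hundred_mul_pow_le (by norm_num : 10 < 40 * 10)
  push_cast
  rw [← pow_mul, div_le_div_iff₀ (by positivity) (by positivity), one_mul]
  linarith [pow_pos hY 10]

lemma tentScale_le : 2 ^ (l + 1) *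
    SturmLiouville.tentScale l (Y ^ 22) (coeffScale l Y) (3 * (Y : ℝ) ^ 35) ≤ (Y : ℝ) ^ 37 := by
  have hl := h.two_mul_add_two_le
  have hY := h.pos
  have hinner : 2 * (Y : ℝ) ^ 22 * coeffScale l Y ≤ 4 * (Y : ℝ) ^ 24 := by
    calc 2 * (Y : ℝ) ^ 22 * coeffScale l Y ≤ 2 * (Y : ℝ) ^ 22 * (Y * (2 * Y)) := by
          rw [coeffScale]; gcongr
      _ = 4 * (Y : ℝ) ^ 24 := by ring
  have hscale : SturmLiouville.tentScale l (Y ^ 22) (coeffScale l Y) (3 * (Y : ℝ) ^ 35) ≤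
      4 * (Y : ℝ) ^ 35 := by
    have hmid : (2 * (l : ℝ) + 2) * (2 * (Y : ℝ) ^ 22 * coeffScale l Y) ≤ Y * (4 * (Y : ℝ) ^ 24) :=
      mul_le_mul hl hinner (by rw [coeffScale]; positivity) hY.le
    rw [SturmLiouville.tentScale]
    push_cast
    linarith [h.hundred_mul_pow_le (by norm_num : 24 < 35), pow_pos hY 35,
      h.hundred_mul_pow_le (by norm_num : 25 < 35),
      show Y * (4 * (Y : ℝ) ^ 24) = 4 * Y ^ 25 by ring]
  have htwo : (2 : ℝ) ^ (l + 1) * 4 ≤ Y := by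
    linarith [h.two_pow_le, show (2 : ℝ) ^ (l + 5) = 2 ^ (l + 1) * 16 by ring,
      pow_pos (two_pos : (0 : ℝ) < 2) (l + 1)]
  calc _ ≤ 2 ^ (l + 1) * (4 * (Y : ℝ) ^ 35) := by gcongr
    _ = 2 ^ (l + 1) * 4 * (Y : ℝ) ^ 35 := by ring
    _ ≤ Y * (Y : ℝ) ^ 35 := by gcongr
    _ = (Y : ℝ) ^ 36 := by ring
    _ ≤ (Y : ℝ) ^ 37 := pow_le_pow_right₀ h.one_le (by norm_num)

lemma correctionScale_le : correctionScale l (Y ^ 22) Y (3 * (Y : ℝ) ^ 35) ≤ (Y : ℝ) ^ 40 := by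
  have hY := h.pos
  set M := SturmLiouville.tentScale l (Y ^ 22) (coeffScale l Y) (3 * (Y : ℝ) ^ 35) with hM
  have hM0 : 0 ≤ M := by rw [hM, SturmLiouville.tentScale, coeffScale]; positivity
  have hpow : 2 ^ (l + 1) * M ≤ (Y : ℝ) ^ 37 := h.tentScale_le
  have hle : M ≤ 2 ^ (l + 1) * M := le_mul_of_one_le_left hM0 (one_le_pow₀ one_le_two)
  have hYle : (Y : ℝ) ≤ (Y : ℝ) ^ 37 := le_self_pow₀ h.one_le (by norm_num)
  have hlast : (2 * (l : ℝ) + 2) * (2 * Y + 2 ^ (l + 1) * M) ≤ Y * (3 * (Y : ℝ) ^ 37) := by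
    gcongr
    · exact h.two_mul_add_two_le
    · linarith
  rw [correctionScale, ← hM]
  linarith [h.hundred_mul_pow_le (by norm_num : 37 < 40),
    h.hundred_mul_pow_le (by norm_num : 38 < 40), show Y * (3 * (Y : ℝ) ^ 37) = 3 * Y ^ 38 by ring]

end LargeScale

lemma half_pow_two_mul_le_exp_neg (k : ℕ) : (1 / 2 : ℝ) ^ (2 * k) ≤ exp (-k) := by
  have hquarter : (1 / 2 : ℝ) ^ 2 ≤ exp (-1) := by
    rw [exp_neg, le_inv_comm₀ (by positivity) (exp_pos _)]
    linarith [Real.exp_one_lt_d9, show ((1 / 2 : ℝ) ^ 2)⁻¹ = 4 by norm_num]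
  calc (1 / 2 : ℝ) ^ (2 * k) = ((1 / 2 : ℝ) ^ 2) ^ k := pow_mul _ _ _
    _ ≤ exp (-1) ^ k := by gcongr
    _ = exp (-k) := by rw [← exp_nat_mul, mul_neg_one]

/-- The cutoff used at scale `Y`: it is `1` on the core of radius `1 / Y ^ 10` and vanishes outside
twice that radius. Its derivatives are controlled by its own size up to a tiny error. -/
structure IsStepCutoff (l Y : ℕ) (χ : ℝ → ℝ) : Prop where
  periodic : Function.Periodic χ 1
  nonneg : ∀ x, 0 ≤ χ x
  le_one : ∀ x, χ x ≤ 1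
  eq_one : ∀ x : ℝ, ‖(x : UnitAddCircle)‖ ≤ 1 / (Y : ℝ) ^ 10 → χ x = 1
  eq_zero : ∀ x : ℝ, 2 / (Y : ℝ) ^ 10 < ‖(x : UnitAddCircle)‖ → χ x = 0
  derivDominated :
    DerivDominated l (3 * (Y : ℝ) ^ 35) χ fun x => 2 ^ l * (χ x + (1 / 2) ^ (2 * Y ^ 24))

lemma LargeScale.exists_isStepCutoff {c T : ℝ} {l Y : ℕ} (h : LargeScale c T l Y) (hT : 1 ≤ T)
    (hcut : ∀ ε, 0 < ε → ε ≤ 1 / 8 → ∃ θ, IsPeriodicCutoff l T ε θ) : ∃ χ, IsStepCutoff l Y χ := by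
  have hY := h.pos
  obtain ⟨θ, hθ⟩ := hcut (1 / (Y : ℝ) ^ 10) (by positivity)
    (one_div_le_one_div_of_le (by norm_num)
      (by linarith [h.hundred_le, le_self_pow₀ h.one_le (by norm_num : 10 ≠ 0)]))
  have hθ1 (x : ℝ) : θ x ≤ 1 := (le_abs_self _).trans (hθ.derivDominated.abs_le x)
  have hexponent : l + 2 * Y ^ 24 ≠ 0 := by
    have : 0 < Y := by exact_mod_cast hY
    positivity
  refine ⟨fun x => θ x ^ (l + 2 * Y ^ 24), fun x => by simp only [hθ.periodic x],
    fun x => pow_nonneg (hθ.nonneg x) _, fun x => pow_le_one₀ (hθ.nonneg x) (hθ1 x),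
    fun x hx => by simp only [hθ.eq_one x hx, one_pow], fun x hx => ?_, ?_⟩
  · simp only [hθ.eq_zero x (by rwa [mul_one_div]), zero_pow hexponent]
  · refine (hθ.derivDominated.pow_add hθ.nonneg (2 * Y ^ 24)).mono_scale ?_
    have hl : (l : ℝ) ≤ Y := by linarith [h.two_mul_add_two_le, (Nat.cast_nonneg l : (0 : ℝ) ≤ l)]
    have hYpow : (Y : ℝ) ≤ (Y : ℝ) ^ 24 := le_self_pow₀ h.one_le (by norm_num)
    have hTY := h.cutoff_le
    rw [div_div_eq_mul_div, div_one]
    push_cast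
    calc ((l : ℝ) + 2 * (Y : ℝ) ^ 24) * (T * (Y : ℝ) ^ 10)
        ≤ ((Y : ℝ) ^ 24 + 2 * (Y : ℝ) ^ 24) * (Y * (Y : ℝ) ^ 10) := by gcongr; linarith
      _ = 3 * (Y : ℝ) ^ 35 := by ring

end Scale

section Doubling

/-- Every orbit starting within `r` of the integers runs, in at most `N` steps of the rotation by
`α`, through two consecutive points at which the values of `f` multiply to at most `δ`. -/
def HasValleys (α : ℝ) (f : ℝ → ℝ) (r : ℝ) (N : ℕ) (δ : ℝ) : Prop :=
  ∀ y : ℝ, ‖(y : UnitAddCircle)‖ ≤ r → ∃ m : ℕ, m ≤ N ∧ f (y + m * α) * f (y + (m + 1) * α) ≤ δ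

variable {f : ℝ → ℝ} {b α r : ℝ} {A B : ℕ}

-- The flux gains `b * sol` in the core, where `f ≥ 1`, and in the next valley, where the
-- conductivity is at most `b`, it adds at least `sol` to the solution.
lemma groundSL_doubling (hf : ∀ x, 0 < f x) (hb : 0 < b)
    (hit : ∀ x, ∃ m : ℕ, 1 ≤ m ∧ m ≤ A ∧ ‖((x + m * α : ℝ) : UnitAddCircle)‖ ≤ r)
    (hcore : ∀ y : ℝ, ‖(y : UnitAddCircle)‖ ≤ r → 1 ≤ f y) (hvalley : HasValleys α f r B b) :
    (groundSL f b α).Doubling (A + B + 1) := by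
  intro s i
  set S := groundSL f b α
  have hS : S.Elliptic := groundSL_elliptic hf hb.le α
  obtain ⟨m, hm, hmA, hmcore⟩ := hit (s + i * α)
  obtain ⟨m', hm'B, hm'⟩ := hvalley _ hmcore
  have hflux : b * S.sol i s ≤ S.flux (i + m + m') s := by
    obtain ⟨k, rfl⟩ := Nat.exists_eq_add_of_le' hm
    have hmass : b ≤ S.mass (s + ((i + k : ℕ) + 1) * α) := by
      rw [show s + ((i + k : ℕ) + 1) * α = s + i * α + (k + 1 : ℕ) * α by push_cast; ring]
      exact le_mul_of_one_le_right hb.le (one_le_pow₀ (hcore _ hmcore))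
    calc b * S.sol i s ≤ S.mass (s + ((i + k : ℕ) + 1) * α) * S.sol (i + k + 1) s :=
          mul_le_mul hmass (hS.sol_mono s (by omega)) (hS.sol_nonneg i s) (hS.mass_nonneg _)
      _ ≤ S.flux (i + k + 1) s := by
          rw [S.flux_succ]
          exact le_add_of_nonneg_left (zero_le_one.trans (hS.one_le_flux _ s))
      _ ≤ S.flux (i + (k + 1) + m') s := hS.flux_mono s (by omega)
  have hcond : S.cond (s + (i + m + m' : ℕ) * α) ≤ b := by
    convert hm' using 1
    simp only [S, groundSL]
    push_cast
    congr 2 <;> ring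
  have hstep : S.sol i s ≤ S.flux (i + m + m') s / S.cond (s + (i + m + m' : ℕ) * α) := by
    rw [le_div_iff₀ (hS.cond_pos _), mul_comm]
    exact (mul_le_mul_of_nonneg_right hcond (hS.sol_nonneg i s)).trans hflux
  calc 2 * S.sol i s = S.sol i s + S.sol i s := two_mul _
    _ ≤ S.sol (i + m + m') s + S.flux (i + m + m') s / S.cond (s + (i + m + m' : ℕ) * α) :=
        add_le_add (hS.sol_mono s (by omega)) hstep
    _ = S.sol (i + m + m' + 1) s := (S.sol_succ _ s).symm
    _ ≤ S.sol (i + (A + B + 1)) s := hS.sol_mono s (by omega)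

end Doubling

section Step

/-- The properties at scale `Y` of the ground state `f` and the coupling `b` from which an inductive
step starts; `W` is the doubling time of the solutions of `groundSL f b (± ω)`. -/
structure StepInput (ω : ℝ) (l Y : ℕ) (f : ℝ → ℝ) (b : ℝ) (W : ℕ) : Prop where
  periodic : Function.Periodic f 1
  derivDominated : DerivDominated l Y f f
  exp_neg_le : ∀ x, exp (-Y) ≤ f x
  le : ∀ x, f x ≤ Y
  coupling_pos : 0 < b
  coupling_le : b ≤ Y
  one_le_time : 1 ≤ W
  time_le : W ≤ Y
  doubling : ∀ α, α = ω ∨ α = -ω → (groundSL f b α).Doubling W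
  one_le_of_norm_le : ∀ y : ℝ, ‖(y : UnitAddCircle)‖ ≤ 2 / (Y : ℝ) ^ 10 → 1 ≤ f y

/-- The standing hypotheses of an inductive step: from the ground state `f` at scale `Y` the step
produces `f * tentFactor ω f b χ (Y ^ 22)`. -/
structure StepContext (ω c T : ℝ) (l Y : ℕ) (f : ℝ → ℝ) (b : ℝ) (W : ℕ) (χ : ℝ → ℝ) : Prop where
  badlyApproximable : BadlyApproximable c ω
  large : LargeScale c T l Y
  input : StepInput ω l Y f b W
  cutoff : IsStepCutoff l Y χ

namespace StepContext

variable {ω c T : ℝ} {l Y : ℕ} {f : ℝ → ℝ} {b : ℝ} {W : ℕ} {χ : ℝ → ℝ} {α : ℝ}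
  (C : StepContext ω c T l Y f b W χ)
include C

lemma pos (x : ℝ) : 0 < f x := (exp_pos _).trans_le (C.input.exp_neg_le x)

lemma coupling_nonneg : 0 ≤ b := C.input.coupling_pos.le

lemma elliptic (α : ℝ) : (groundSL f b α).Elliptic := groundSL_elliptic C.pos C.coupling_nonneg α

lemma one_le_length : 1 ≤ Y ^ 22 := Nat.one_le_pow _ _ (by linarith [C.large.hundred_le_nat])

lemma badlyApproximable_direction (hα : α = ω ∨ α = -ω) : BadlyApproximable c α := by
  rcases hα with rfl | rfl
  · exact C.badlyApproximable
  · exact C.badlyApproximable.neg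

lemma mass_le (α x : ℝ) : (groundSL f b α).mass x ≤ (Y : ℝ) ^ 3 := by
  have := C.large.pos
  calc (groundSL f b α).mass x ≤ b * (Y : ℝ) ^ 2 :=
        groundSL_mass_le C.pos C.input.le C.coupling_nonneg α x
    _ ≤ Y * (Y : ℝ) ^ 2 := by gcongr; exact C.input.coupling_le
    _ = (Y : ℝ) ^ 3 := by ring

lemma one_le_sq_mul_exp (x : ℝ) : 1 ≤ f x ^ 2 * exp (2 * Y) := by
  rw [show exp (2 * (Y : ℝ)) = exp Y ^ 2 by rw [← exp_nat_mul]; norm_num, ← mul_pow]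
  refine one_le_pow₀ ?_
  calc (1 : ℝ) = exp (-Y) * exp Y := by rw [← exp_add, neg_add_cancel, exp_zero]
    _ ≤ f x * exp Y := by gcongr; exact C.input.exp_neg_le x

lemma one_add_mass_mul_le_exp (α x y : ℝ) :
    (1 + (groundSL f b α).mass x) * (1 + 1 / (groundSL f b α).cond y) ≤ exp (4 * Y) := by
  have hY := C.large.pos
  have hpoly := C.large.pow_le_exp (k := 3) (by norm_num)
  have hmass := C.mass_le α x
  have hcond0 := (C.elliptic α).cond_pos y
  have hYpow : (1 : ℝ) ≤ (Y : ℝ) ^ 3 := one_le_pow₀ C.large.one_le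
  have hcond : 1 / (groundSL f b α).cond y ≤ exp (2 * Y) := by
    rw [one_div, inv_le_comm₀ hcond0 (exp_pos _), ← exp_neg,
      show -(2 * (Y : ℝ)) = -Y + -Y by ring, exp_add]
    exact mul_le_mul (C.input.exp_neg_le _) (C.input.exp_neg_le _) (exp_pos _).le (C.pos _).le
  have hone : (1 : ℝ) ≤ exp (2 * Y) := one_le_exp (by positivity)
  calc (1 + (groundSL f b α).mass x) * (1 + 1 / (groundSL f b α).cond y)
      ≤ exp Y * (exp Y * exp (2 * Y)) := by
        gcongr
        · linarith
        · calc 1 + 1 / (groundSL f b α).cond y ≤ 2 * exp (2 * Y) := by linarith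
            _ ≤ exp Y * exp (2 * Y) := by gcongr; linarith
    _ = exp (4 * Y) := by rw [← exp_add, ← exp_add]; congr 1; ring

lemma sol_le_exp (α : ℝ) {m : ℕ} (hm : m ≤ Y ^ 21) (x : ℝ) :
    (groundSL f b α).sol m x ≤ exp (4 * (Y : ℝ) ^ 22) := by
  have hsum := (C.elliptic α).sol_add_flux_le_pow (C.one_add_mass_mul_le_exp α) m x
  have hflux := (C.elliptic α).one_le_flux m x
  calc (groundSL f b α).sol m x ≤ exp (4 * Y) ^ m := by linarith
    _ ≤ exp (4 * Y) ^ (Y ^ 21) := pow_le_pow_right₀ (one_le_exp (by positivity)) hm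
    _ = exp (4 * (Y : ℝ) ^ 22) := by rw [← exp_nat_mul]; push_cast; congr 1; ring

lemma exists_one_le_tentFactor_mul_sol (hα : α = ω ∨ α = -ω) (x : ℝ) :
    ∃ m : ℕ, 1 ≤ m ∧ m ≤ Y ^ 21 ∧
      1 ≤ tentFactor ω f b χ (Y ^ 22) x * (3 * (Y : ℝ) ^ 3 * (groundSL f b α).sol m x) := by
  obtain ⟨m, hm, hmle, hhit⟩ := C.large.exists_norm_add_mul_le
    (C.badlyApproximable_direction hα) x
  refine ⟨m, hm, hmle, ?_⟩
  have hlt : m < Y ^ 22 :=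
    hmle.trans_lt (Nat.pow_lt_pow_right (by linarith [C.large.hundred_le_nat]) (by norm_num))
  refine ((C.elliptic α).one_le_tentSum_mul_sol (groundSL_cond_le C.pos C.input.le α)
    (C.mass_le α) C.cutoff.nonneg x hm hlt (C.cutoff.eq_one _ hhit)).trans ?_
  have hsum := (C.elliptic α).tentSum_nonneg (n := Y ^ 22) C.cutoff.nonneg x
  have hle :=
    tentSum_le_tentFactor (n := Y ^ 22) C.pos C.coupling_nonneg C.cutoff.nonneg hα x
  have hsol := (C.elliptic α).sol_nonneg m x
  have hpow : 2 * (Y : ℝ) ^ 2 + (Y : ℝ) ^ 3 ≤ 3 * (Y : ℝ) ^ 3 := by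
    linarith [pow_le_pow_right₀ C.large.one_le (by norm_num : 2 ≤ 3)]
  gcongr
  exact hsum.trans hle

lemma exp_neg_le_tentFactor (x : ℝ) : exp (-(Y : ℝ) ^ 23) ≤ tentFactor ω f b χ (Y ^ 22) x := by
  obtain ⟨m, -, hmle, hone⟩ := C.exists_one_le_tentFactor_mul_sol (Or.inl rfl) x
  have hY := C.large.pos
  have hsol : 3 * (Y : ℝ) ^ 3 * (groundSL f b ω).sol m x ≤ exp ((Y : ℝ) ^ 23) := by
    calc 3 * (Y : ℝ) ^ 3 * (groundSL f b ω).sol m x ≤ exp Y * exp (4 * (Y : ℝ) ^ 22) := by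
          gcongr
          · exact (C.elliptic ω).sol_nonneg m x
          · linarith [C.large.pow_le_exp (k := 3) (by norm_num), pow_pos hY 3]
          · exact C.sol_le_exp ω hmle x
      _ = exp (Y + 4 * (Y : ℝ) ^ 22) := by rw [exp_add]
      _ ≤ exp ((Y : ℝ) ^ 23) := exp_le_exp.2 (by
          linarith [C.large.hundred_mul_pow_le (by norm_num : 22 < 23), pow_pos hY 22,
            le_self_pow₀ C.large.one_le (by norm_num : 22 ≠ 0)])
  have hg : 0 ≤ tentFactor ω f b χ (Y ^ 22) x :=
    (C.cutoff.nonneg x).trans (le_tentFactor C.pos C.coupling_nonneg C.cutoff.nonneg x)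
  rw [exp_neg, inv_le_iff_one_le_mul₀ (exp_pos _)]
  exact hone.trans (by gcongr)

lemma tentFactor_pos (x : ℝ) : 0 < tentFactor ω f b χ (Y ^ 22) x :=
  (exp_pos _).trans_le (C.exp_neg_le_tentFactor x)

lemma cutoffError_mul_le_tentFactor (x : ℝ) :
    (1 / 2 : ℝ) ^ (2 * Y ^ 24) * (2 * (Y ^ 22 : ℕ) + 1) ≤ tentFactor ω f b χ (Y ^ 22) x := by
  have hη := half_pow_two_mul_le_exp_neg (Y ^ 24)
  have hY := C.large.pos
  have hone : (1 : ℝ) ≤ (Y : ℝ) ^ 22 := one_le_pow₀ C.large.one_le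
  push_cast at hη ⊢
  calc (1 / 2 : ℝ) ^ (2 * Y ^ 24) * (2 * (Y : ℝ) ^ 22 + 1) ≤ exp (-(Y : ℝ) ^ 24) * exp Y := by
        gcongr
        linarith [C.large.pow_le_exp (k := 22) (by norm_num)]
    _ = exp (-(Y : ℝ) ^ 24 + Y) := by rw [exp_add]
    _ ≤ exp (-(Y : ℝ) ^ 23) := exp_le_exp.2 (by
        linarith [C.large.hundred_mul_pow_le (by norm_num : 23 < 24), pow_pos hY 23,
          le_self_pow₀ C.large.one_le (by norm_num : 23 ≠ 0)])
    _ ≤ tentFactor ω f b χ (Y ^ 22) x := C.exp_neg_le_tentFactor x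

end StepContext

end Step

section GroundLevel

/-- The invariant of the construction: `f` is a ground state obtained by a step at scale `Y`, of at
most polynomial size and complexity in `Y`, at least `1` on the core and tiny in the valleys that
every orbit through the core meets soon afterwards and before. -/
structure GroundLevel (ω : ℝ) (l Y : ℕ) (f : ℝ → ℝ) : Prop where
  periodic : Function.Periodic f 1
  derivDominated : DerivDominated l ((Y : ℝ) ^ 40) f f
  exp_neg_le : ∀ x, exp (-(Y : ℝ) ^ 40) ≤ f x
  le : ∀ x, f x ≤ (Y : ℝ) ^ 40
  one_le_of_norm_le : ∀ y : ℝ, ‖(y : UnitAddCircle)‖ ≤ 1 / (Y : ℝ) ^ 10 → 1 ≤ f y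
  hasValleys : ∀ α, α = ω ∨ α = -ω →
    HasValleys α f (1 / (Y : ℝ) ^ 10) (Y ^ 10) (exp (-(Y : ℝ) ^ 7))

/-- The ground state produced from `f` by the inductive step at scale `Y`. -/
noncomputable def nextGroundState (ω : ℝ) (f : ℝ → ℝ) (b : ℝ) (χ : ℝ → ℝ) (Y : ℕ) (x : ℝ) : ℝ :=
  f x * tentFactor ω f b χ (Y ^ 22) x

namespace StepContext

variable {ω c T : ℝ} {l Y : ℕ} {f : ℝ → ℝ} {b : ℝ} {W : ℕ} {χ : ℝ → ℝ} {α : ℝ}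
  (C : StepContext ω c T l Y f b W χ)
include C

lemma derivDominated_nextGroundState :
    DerivDominated l ((Y : ℝ) ^ 40) (nextGroundState ω f b χ Y) (nextGroundState ω f b χ Y) := by
  have hY := C.large.pos
  refine (C.input.derivDominated.mul (derivDominated_tentFactor C.input.derivDominated C.pos
    C.coupling_nonneg (by positivity) C.cutoff.derivDominated (fun x => (C.tentFactor_pos x).le)
    C.cutoffError_mul_le_tentFactor)).mono_scale ?_
  linarith [C.large.tentScale_le, le_self_pow₀ C.large.one_le (by norm_num : 37 ≠ 0),
    C.large.hundred_mul_pow_le (by norm_num : 37 < 40), pow_pos hY 37]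

lemma cutoff_orbit_eq_zero (hα : α = ω ∨ α = -ω) {y : ℝ}
    (hy : ‖(y : UnitAddCircle)‖ ≤ 1 / (Y : ℝ) ^ 10) {i : ℕ} (hi : 1 ≤ i)
    (hile : i ≤ 2 * (Y ^ 9 + 1)) : χ (y + i * α) = 0 := by
  have hY := C.large.pos
  refine C.cutoff.eq_zero _ ((C.badlyApproximable_direction hα).lt_norm_add_mul hi hy ?_)
  have hile' : (i : ℝ) ≤ 2 * ((Y : ℝ) ^ 9 + 1) := by exact_mod_cast hile
  have hc := C.badlyApproximable.pos
  have hcY := (div_le_iff₀ hc).1 C.large.eight_div_le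
  have hpow := le_self_pow₀ C.large.one_le (by norm_num : 9 ≠ 0)
  rw [← add_div, div_mul_eq_mul_div, div_lt_iff₀ (by positivity)]
  calc (1 + 2) * (i : ℝ) < 8 * (Y : ℝ) ^ 9 := by linarith [C.large.hundred_le]
    _ ≤ Y * c * (Y : ℝ) ^ 9 := by gcongr
    _ = c * (Y : ℝ) ^ 10 := by ring

lemma tentFactor_valley_le (hα : α = ω ∨ α = -ω) {y : ℝ}
    (hy : ‖(y : UnitAddCircle)‖ ≤ 1 / (Y : ℝ) ^ 10) {j : ℕ} (hj : Y ^ 9 ≤ j)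
    (hjle : j ≤ Y ^ 9 + 1) :
    tentFactor ω f b χ (Y ^ 22) (y + j * α) ≤ 2 * (Y : ℝ) ^ 22 * (1 / 2) ^ (Y ^ 8) := by
  have hzero {i : ℕ} (hi : 1 ≤ i) (hile : i ≤ 2 * j) : χ (y + i * α) = 0 :=
    C.cutoff_orbit_eq_zero hα hy hi (by omega)
  have hYn := C.large.hundred_le_nat
  have hjpos : 1 ≤ j := (Nat.one_le_pow _ _ (by omega)).trans hj
  have htent (β : ℝ) (hβ : β = ω ∨ β = -ω) :
      (groundSL f b β).tentSum χ (Y ^ 22) (y + j * α) ≤ (Y : ℝ) ^ 22 * (1 / 2) ^ (Y ^ 8) := by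
    have hβα : β = α ∨ β = -α := by rcases hα with rfl | rfl <;> rcases hβ with rfl | rfl <;> simp
    refine ((C.elliptic β).tentSum_le_mul_half_pow C.cutoff.le_one (C.input.doubling β hβ)
      (y + j * α) j fun k hk hkj => ?_).trans ?_
    · rw [show (groundSL f b β).shift = β from rfl]
      rcases hβα with rfl | rfl
      · rw [← hzero (i := j + k) (by omega) (by omega)]
        push_cast
        ring_nf
      · rw [← hzero (i := j - k) (by omega) (by omega), Nat.cast_sub hkj.le]
        ring_nf
    · push_cast
      gcongr _ * ?_
      refine pow_le_pow_of_le_one (by norm_num) (by norm_num) ?_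
      rw [Nat.le_div_iff_mul_le C.input.one_le_time]
      calc Y ^ 8 * W ≤ Y ^ 8 * Y := Nat.mul_le_mul_left _ C.input.time_le
        _ = Y ^ 9 := by ring
        _ ≤ j := hj
  rw [tentFactor, hzero hjpos (by omega)]
  linarith [htent ω (Or.inl rfl), htent (-ω) (Or.inr rfl)]

lemma hasValleys_nextGroundState (hα : α = ω ∨ α = -ω) :
    HasValleys α (nextGroundState ω f b χ Y) (1 / (Y : ℝ) ^ 10) (Y ^ 10)
      (exp (-(Y : ℝ) ^ 7)) := by
  intro y hy
  refine ⟨Y ^ 9, Nat.pow_le_pow_right (by linarith [C.large.hundred_le_nat]) (by norm_num), ?_⟩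
  have hY := C.large.pos
  have hvalue {j : ℕ} (hj : Y ^ 9 ≤ j) (hjle : j ≤ Y ^ 9 + 1) :
      nextGroundState ω f b χ Y (y + j * α) ≤ Y * (2 * (Y : ℝ) ^ 22 * (1 / 2) ^ (Y ^ 8)) :=
    mul_le_mul (C.input.le _) (C.tentFactor_valley_le hα hy hj hjle) (C.tentFactor_pos _).le hY.le
  have hη := half_pow_two_mul_le_exp_neg (Y ^ 8)
  rw [show y + ((Y ^ 9 : ℕ) + 1) * α = y + (Y ^ 9 + 1 : ℕ) * α by push_cast; ring]
  push_cast at hη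
  calc _ ≤ Y * (2 * (Y : ℝ) ^ 22 * (1 / 2) ^ (Y ^ 8)) *
        (Y * (2 * (Y : ℝ) ^ 22 * (1 / 2) ^ (Y ^ 8))) :=
        mul_le_mul (hvalue le_rfl (by omega)) (hvalue (by omega) le_rfl)
          (mul_pos (C.pos _) (C.tentFactor_pos _)).le (by positivity)
    _ = 4 * (Y : ℝ) ^ 46 * (1 / 2) ^ (2 * Y ^ 8) := by rw [two_mul (Y ^ 8), pow_add]; ring
    _ ≤ exp Y * exp (-(Y : ℝ) ^ 8) := by
        gcongr
        linarith [C.large.pow_le_exp (k := 46) (by norm_num), pow_pos hY 46]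
    _ = exp (Y + -(Y : ℝ) ^ 8) := by rw [exp_add]
    _ ≤ exp (-(Y : ℝ) ^ 7) := exp_le_exp.2 (by
        linarith [C.large.hundred_mul_pow_le (by norm_num : 7 < 8), pow_pos hY 7,
          le_self_pow₀ C.large.one_le (by norm_num : 7 ≠ 0)])

lemma groundLevel_nextGroundState : GroundLevel ω l Y (nextGroundState ω f b χ Y) where
  periodic x := by
    rw [nextGroundState, C.input.periodic, tentFactor_periodic C.input.periodic C.cutoff.periodic,
      nextGroundState]
  derivDominated := C.derivDominated_nextGroundState
  exp_neg_le x := by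
    have hY := C.large.pos
    calc exp (-(Y : ℝ) ^ 40) ≤ exp (-Y + -(Y : ℝ) ^ 23) := exp_le_exp.2 (by
          linarith [C.large.hundred_mul_pow_le (by norm_num : 23 < 40), pow_pos hY 23,
            le_self_pow₀ C.large.one_le (by norm_num : 23 ≠ 0)])
      _ = exp (-Y) * exp (-(Y : ℝ) ^ 23) := exp_add _ _
      _ ≤ nextGroundState ω f b χ Y x := mul_le_mul (C.input.exp_neg_le x)
          (C.exp_neg_le_tentFactor x) (exp_pos _).le (C.pos x).le
  le x := by
    have hY := C.large.pos
    have hg := tentFactor_le (ω := ω) (n := Y ^ 22) C.pos C.coupling_nonneg C.cutoff.le_one x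
    push_cast at hg
    calc nextGroundState ω f b χ Y x ≤ Y * (2 * (Y : ℝ) ^ 22 + 1) :=
          mul_le_mul (C.input.le x) hg (C.tentFactor_pos x).le hY.le
      _ = 2 * (Y : ℝ) ^ 23 + Y := by ring
      _ ≤ (Y : ℝ) ^ 40 := by
          linarith [C.large.hundred_mul_pow_le (by norm_num : 23 < 40), pow_pos hY 23,
            le_self_pow₀ C.large.one_le (by norm_num : 23 ≠ 0)]
  one_le_of_norm_le y hy := by
    have hf := C.input.one_le_of_norm_le y (hy.trans (by gcongr; norm_num))
    have hg := le_tentFactor (ω := ω) (n := Y ^ 22) C.pos C.coupling_nonneg C.cutoff.nonneg y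
    rw [C.cutoff.eq_one y hy] at hg
    exact one_le_mul_of_one_le_of_one_le hf hg
  hasValleys _ hα := C.hasValleys_nextGroundState hα

lemma groundPotential_nextGroundState (x : ℝ) :
    groundPotential ω (nextGroundState ω f b χ Y) x =
      groundPotential ω f x + potentialCorrection ω f b χ (Y ^ 22) x :=
  groundPotential_mul_tentFactor C.pos C.coupling_nonneg C.one_le_length C.tentFactor_pos x

lemma groundPotential_add_le_add_tops (x : ℝ) :
    groundPotential ω f x + b ≤ groundPotential ω (nextGroundState ω f b χ Y) x +
      χ x * (b * f x ^ 2 + (groundSL f b ω).topFlux (Y ^ 22) x +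
        (groundSL f b (-ω)).topFlux (Y ^ 22) x) / (f x ^ 2 * tentFactor ω f b χ (Y ^ 22) x) := by
  have hfeet := div_nonneg
    (add_nonneg ((C.elliptic ω).footFlux_nonneg (n := Y ^ 22) C.cutoff.nonneg x)
      ((C.elliptic (-ω)).footFlux_nonneg (n := Y ^ 22) C.cutoff.nonneg x))
    (mul_pos (pow_pos (C.pos x) 2) (C.tentFactor_pos x)).le
  rw [C.groundPotential_nextGroundState, potentialCorrection]
  linarith

lemma groundPotential_add_le_of_lt_norm (x : ℝ) (hx : 2 / (Y : ℝ) ^ 10 < ‖(x : UnitAddCircle)‖) :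
    groundPotential ω f x + b ≤ groundPotential ω (nextGroundState ω f b χ Y) x := by
  simpa only [C.cutoff.eq_zero x hx, zero_mul, zero_div, add_zero] using
    C.groundPotential_add_le_add_tops x

lemma topFlux_sum_nonneg (x : ℝ) : 0 ≤ b * f x ^ 2 + (groundSL f b ω).topFlux (Y ^ 22) x +
    (groundSL f b (-ω)).topFlux (Y ^ 22) x :=
  add_nonneg (add_nonneg (mul_nonneg C.coupling_nonneg (sq_nonneg _))
    ((C.elliptic ω).topFlux_nonneg x)) ((C.elliptic (-ω)).topFlux_nonneg x)

lemma groundPotential_add_le_add_pow (x : ℝ) :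
    groundPotential ω f x + b ≤
      groundPotential ω (nextGroundState ω f b χ Y) x + (Y : ℝ) ^ 3 := by
  have hY := C.large.pos
  rcases lt_or_ge (2 / (Y : ℝ) ^ 10) ‖(x : UnitAddCircle)‖ with hx | hx
  · linarith [C.groundPotential_add_le_of_lt_norm x hx, pow_pos hY 3]
  refine (C.groundPotential_add_le_add_tops x).trans (add_le_add_right ?_ _)
  have hf := C.pos x
  have hg := C.tentFactor_pos x
  have hf2 : 1 ≤ f x ^ 2 := one_le_pow₀ (C.input.one_le_of_norm_le x hx)
  have htop (α : ℝ) := (C.elliptic α).topFlux_le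
    (groundSL_cond_le C.pos C.input.le α) C.one_le_length x
  have hnum : b * f x ^ 2 + (groundSL f b ω).topFlux (Y ^ 22) x +
      (groundSL f b (-ω)).topFlux (Y ^ 22) x ≤ (Y : ℝ) ^ 3 * f x ^ 2 := by
    have hcoupling : b * f x ^ 2 ≤ Y * f x ^ 2 := by gcongr; exact C.input.coupling_le
    have hsq : (Y : ℝ) ^ 2 ≤ (Y : ℝ) ^ 2 * f x ^ 2 := le_mul_of_one_le_right (by positivity) hf2
    have hpow : (Y : ℝ) + 2 * (Y : ℝ) ^ 2 ≤ (Y : ℝ) ^ 3 := by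
      linarith [C.large.hundred_mul_pow_le (by norm_num : 2 < 3), pow_pos hY 2,
        le_self_pow₀ C.large.one_le (by norm_num : 2 ≠ 0)]
    linarith [htop ω, htop (-ω), mul_le_mul_of_nonneg_right hpow (sq_nonneg (f x))]
  rw [div_le_iff₀ (by positivity)]
  calc _ ≤ tentFactor ω f b χ (Y ^ 22) x * ((Y : ℝ) ^ 3 * f x ^ 2) :=
        mul_le_mul (le_tentFactor C.pos C.coupling_nonneg C.cutoff.nonneg x) hnum
          (C.topFlux_sum_nonneg x) hg.le
    _ = (Y : ℝ) ^ 3 * (f x ^ 2 * tentFactor ω f b χ (Y ^ 22) x) := by ring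

end StepContext

end GroundLevel

section CorrectionBound

namespace StepContext

variable {ω c T : ℝ} {l Y : ℕ} {f : ℝ → ℝ} {b : ℝ} {W : ℕ} {χ : ℝ → ℝ} {α : ℝ}
  (C : StepContext ω c T l Y f b W χ)
include C

lemma cutoffError_le_tentFactor (x : ℝ) :
    (1 / 2 : ℝ) ^ (2 * Y ^ 24) ≤ tentFactor ω f b χ (Y ^ 22) x :=
  (le_mul_of_one_le_right (by positivity)
    (le_add_of_nonneg_left (by positivity))).trans (C.cutoffError_mul_le_tentFactor x)

lemma tops_le_of_norm_le
    (hv : ∀ α, α = ω ∨ α = -ω → HasValleys α f (2 / (Y : ℝ) ^ 10) Y b) {x : ℝ}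
    (hx : ‖(x : UnitAddCircle)‖ ≤ 2 / (Y : ℝ) ^ 10) :
    2 ^ l * (χ x + (1 / 2) ^ (2 * Y ^ 24)) *
        (b * f x ^ 2 + (groundSL f b ω).topFlux (Y ^ 22) x +
          (groundSL f b (-ω)).topFlux (Y ^ 22) x) ≤
      10 * 2 ^ l * (Y : ℝ) ^ 3 * b * (f x ^ 2 * tentFactor ω f b χ (Y ^ 22) x) := by
  have hY := C.large.pos
  have hb := C.input.coupling_pos
  have hYpow : (1 : ℝ) ≤ (Y : ℝ) ^ 3 := one_le_pow₀ C.large.one_le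
  have htop (α : ℝ) (hα : α = ω ∨ α = -ω) :
      (groundSL f b α).topFlux (Y ^ 22) x ≤ b + (Y : ℝ) ^ 3 * b := by
    obtain ⟨m, hm, hvalley⟩ := hv (-α) (by rcases hα with rfl | rfl <;> simp) x hx
    have hmlt : m < Y ^ 22 := hm.trans_lt
      (lt_self_pow₀ (by linarith [C.large.hundred_le_nat]) (by norm_num))
    have hcond : (groundSL f b α).cond (x - (m + 1) * (groundSL f b α).shift) ≤ b := by
      convert hvalley using 1
      simp only [groundSL]
      ring_nf
    calc (groundSL f b α).topFlux (Y ^ 22) x ≤ b + m * (b * (Y : ℝ) ^ 2) :=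
          (C.elliptic α).topFlux_le_of_cond_le
            (groundSL_mass_le C.pos C.input.le hb.le α) hmlt hcond
      _ ≤ b + Y * (b * (Y : ℝ) ^ 2) := by gcongr
      _ = b + (Y : ℝ) ^ 3 * b := by ring
  have hsum : b * f x ^ 2 + (groundSL f b ω).topFlux (Y ^ 22) x +
      (groundSL f b (-ω)).topFlux (Y ^ 22) x ≤ 5 * (Y : ℝ) ^ 3 * b * f x ^ 2 := by
    have hf1 : 1 ≤ f x ^ 2 := one_le_pow₀ (C.input.one_le_of_norm_le x hx)
    have hcoupling : b ≤ (Y : ℝ) ^ 3 * b := le_mul_of_one_le_left hb.le hYpow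
    have hcore : (Y : ℝ) ^ 3 * b ≤ (Y : ℝ) ^ 3 * b * f x ^ 2 :=
      le_mul_of_one_le_right (by positivity) hf1
    linarith [htop ω (Or.inl rfl), htop (-ω) (Or.inr rfl),
      mul_le_mul_of_nonneg_right hcoupling (sq_nonneg (f x))]
  have hcutoff : χ x + (1 / 2) ^ (2 * Y ^ 24) ≤ 2 * tentFactor ω f b χ (Y ^ 22) x := by
    linarith [C.cutoffError_le_tentFactor x,
      le_tentFactor (ω := ω) (n := Y ^ 22) C.pos C.coupling_nonneg C.cutoff.nonneg x]
  calc _ ≤ 2 ^ l * (2 * tentFactor ω f b χ (Y ^ 22) x) * (5 * (Y : ℝ) ^ 3 * b * f x ^ 2) := by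
        have := C.tentFactor_pos x
        have := C.topFlux_sum_nonneg x
        gcongr
    _ = _ := by ring

lemma tops_le_of_lt_norm {x : ℝ} (hx : 2 / (Y : ℝ) ^ 10 < ‖(x : UnitAddCircle)‖) :
    2 ^ l * (χ x + (1 / 2) ^ (2 * Y ^ 24)) *
        (b * f x ^ 2 + (groundSL f b ω).topFlux (Y ^ 22) x +
          (groundSL f b (-ω)).topFlux (Y ^ 22) x) ≤
      exp (-Y) * (f x ^ 2 * tentFactor ω f b χ (Y ^ 22) x) := by
  have hY := C.large.pos
  have hη := half_pow_two_mul_le_exp_neg (Y ^ 24)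
  push_cast at hη
  have hsum : b * f x ^ 2 + (groundSL f b ω).topFlux (Y ^ 22) x +
      (groundSL f b (-ω)).topFlux (Y ^ 22) x ≤ 3 * (Y : ℝ) ^ 3 := by
    have hmass : b * f x ^ 2 ≤ (Y : ℝ) ^ 3 := C.mass_le ω x
    have htop (α : ℝ) := (C.elliptic α).topFlux_le
      (groundSL_cond_le C.pos C.input.le α) C.one_le_length x
    linarith [htop ω, htop (-ω), pow_le_pow_right₀ C.large.one_le (by norm_num : 2 ≤ 3)]
  have hinv : exp (-(2 * Y)) ≤ f x ^ 2 := by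
    rw [exp_neg, inv_le_iff_one_le_mul₀ (exp_pos _)]
    exact C.one_le_sq_mul_exp x
  rw [C.cutoff.eq_zero x hx, zero_add]
  calc _ ≤ 2 ^ l * exp (-(Y : ℝ) ^ 24) * (3 * (Y : ℝ) ^ 3) := by
        have := C.topFlux_sum_nonneg x
        gcongr
    _ = 3 * 2 ^ l * (Y : ℝ) ^ 3 * exp (-(Y : ℝ) ^ 24) := by ring
    _ ≤ exp Y * exp (-(Y : ℝ) ^ 24) := by
        gcongr
        linarith [C.large.two_pow_mul_pow_le_exp (k := 3) (by norm_num),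
          (by positivity : 0 < 2 ^ l * (Y : ℝ) ^ 3)]
    _ = exp (Y + -(Y : ℝ) ^ 24) := (exp_add _ _).symm
    _ ≤ exp (-Y + (-(2 * Y) + -(Y : ℝ) ^ 23)) := exp_le_exp.2 (by
        linarith [C.large.hundred_mul_pow_le (by norm_num : 23 < 24),
          le_self_pow₀ C.large.one_le (by norm_num : 23 ≠ 0)])
    _ = exp (-Y) * (exp (-(2 * Y)) * exp (-(Y : ℝ) ^ 23)) := by rw [exp_add, exp_add]
    _ ≤ exp (-Y) * (f x ^ 2 * tentFactor ω f b χ (Y ^ 22) x) := by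
        gcongr
        exact C.exp_neg_le_tentFactor x

lemma tops_le (hv : ∀ α, α = ω ∨ α = -ω → HasValleys α f (2 / (Y : ℝ) ^ 10) Y b) (x : ℝ) :
    2 ^ l * (χ x + (1 / 2) ^ (2 * Y ^ 24)) *
        (b * f x ^ 2 + (groundSL f b ω).topFlux (Y ^ 22) x +
          (groundSL f b (-ω)).topFlux (Y ^ 22) x) / (f x ^ 2 * tentFactor ω f b χ (Y ^ 22) x) ≤
      10 * 2 ^ l * (Y : ℝ) ^ 3 * b + exp (-Y) := by
  have hb := C.input.coupling_pos
  have hden : 0 < f x ^ 2 * tentFactor ω f b χ (Y ^ 22) x :=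
    mul_pos (pow_pos (C.pos x) 2) (C.tentFactor_pos x)
  rw [div_le_iff₀ hden, add_mul]
  rcases le_or_gt ‖(x : UnitAddCircle)‖ (2 / (Y : ℝ) ^ 10) with hx | hx
  · exact (C.tops_le_of_norm_le hv hx).trans (le_add_of_nonneg_right (by positivity))
  · exact (C.tops_le_of_lt_norm hx).trans (le_add_of_nonneg_left (by positivity))

lemma exp_sq_mul_sol_le (hα : α = ω ∨ α = -ω) {m : ℕ} (hm : m ≤ Y ^ 21) (x : ℝ) :
    exp ((Y : ℝ) ^ 2) * (groundSL f b α).sol m x ≤ (groundSL f b α).sol (Y ^ 22) x := by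
  have hYn := C.large.hundred_le_nat
  have hlength : 100 * Y ^ 21 ≤ Y ^ 22 := by
    calc 100 * Y ^ 21 ≤ Y * Y ^ 21 := Nat.mul_le_mul_right _ hYn
      _ = Y ^ 22 := by ring
  have htime : 2 * Y ^ 2 ≤ (Y ^ 22 - m) / W := by
    rw [Nat.le_div_iff_mul_le C.input.one_le_time]
    have hpow : Y ^ 3 ≤ Y ^ 21 := Nat.pow_le_pow_right (by omega) (by norm_num)
    calc 2 * Y ^ 2 * W ≤ 2 * Y ^ 2 * Y := Nat.mul_le_mul_left _ C.input.time_le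
      _ = 2 * Y ^ 3 := by ring
      _ ≤ Y ^ 22 - m := by omega
  have hexp : exp ((Y : ℝ) ^ 2) ≤ 2 ^ (2 * Y ^ 2) := by
    have hhalf := half_pow_two_mul_le_exp_neg (Y ^ 2)
    rw [exp_neg, one_div, inv_pow, inv_le_inv₀ (by positivity) (exp_pos _)] at hhalf
    exact_mod_cast hhalf
  have hdecay := (C.elliptic α).pow_div_mul_sol_le (C.input.doubling α hα) m (Y ^ 22 - m) x
  rw [Nat.add_sub_cancel' (by omega)] at hdecay
  refine (mul_le_mul_of_nonneg_right ?_ ((C.elliptic α).sol_nonneg m x)).trans hdecay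
  exact hexp.trans (pow_le_pow_right₀ one_le_two htime)

lemma foot_le (hα : α = ω ∨ α = -ω) (x t : ℝ) :
    2 ^ l * (χ t + (1 / 2) ^ (2 * Y ^ 24)) / (groundSL f b α).sol (Y ^ 22) x ≤
      exp (-Y) * (f x ^ 2 * tentFactor ω f b χ (Y ^ 22) x) := by
  have hY := C.large.pos
  have hη : (1 / 2 : ℝ) ^ (2 * Y ^ 24) ≤ 1 := pow_le_one₀ (by norm_num) (by norm_num)
  obtain ⟨m, hm, hmle, hone⟩ := C.exists_one_le_tentFactor_mul_sol hα x
  have hg := C.tentFactor_pos x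
  have hsol := (C.elliptic α).sol_pos hm x
  have hexp : exp Y * exp (2 * Y) ≤ exp (-Y) * exp ((Y : ℝ) ^ 2) := by
    rw [← exp_add, ← exp_add, exp_le_exp]
    nlinarith [C.large.hundred_le]
  set d := f x ^ 2 * tentFactor ω f b χ (Y ^ 22) x with hd
  have hd0 : 0 < d := mul_pos (pow_pos (C.pos x) 2) hg
  rw [div_le_iff₀ ((C.elliptic α).sol_pos C.one_le_length x)]
  calc 2 ^ l * (χ t + (1 / 2) ^ (2 * Y ^ 24)) ≤ 2 ^ l * 2 * 1 * 1 := by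
        rw [mul_one, mul_one]
        gcongr
        linarith [C.cutoff.le_one t]
    _ ≤ 2 ^ l * 2 *
        (tentFactor ω f b χ (Y ^ 22) x * (3 * (Y : ℝ) ^ 3 * (groundSL f b α).sol m x)) *
        (f x ^ 2 * exp (2 * Y)) := by gcongr; exact C.one_le_sq_mul_exp x
    _ = 6 * 2 ^ l * (Y : ℝ) ^ 3 * exp (2 * Y) * (groundSL f b α).sol m x * d := by rw [hd]; ring
    _ ≤ exp Y * exp (2 * Y) * (groundSL f b α).sol m x * d := by
        gcongr
        linarith [C.large.two_pow_mul_pow_le_exp (k := 3) (by norm_num),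
          (by positivity : 0 < 2 ^ l * (Y : ℝ) ^ 3)]
    _ ≤ exp (-Y) * exp ((Y : ℝ) ^ 2) * (groundSL f b α).sol m x * d := by gcongr
    _ = exp (-Y) * (exp ((Y : ℝ) ^ 2) * (groundSL f b α).sol m x) * d := by ring
    _ ≤ exp (-Y) * (groundSL f b α).sol (Y ^ 22) x * d := by
        gcongr
        exact C.exp_sq_mul_sol_le hα hmle x
    _ = exp (-Y) * d * (groundSL f b α).sol (Y ^ 22) x := by ring

lemma correction_profile_le
    (hv : ∀ α, α = ω ∨ α = -ω → HasValleys α f (2 / (Y : ℝ) ^ 10) Y b) (x : ℝ) :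
    b + 2 ^ l * (χ x + (1 / 2) ^ (2 * Y ^ 24)) *
          (b * f x ^ 2 + (groundSL f b ω).topFlux (Y ^ 22) x +
            (groundSL f b (-ω)).topFlux (Y ^ 22) x) / (f x ^ 2 * tentFactor ω f b χ (Y ^ 22) x) +
        (2 ^ l * (χ (x + (Y ^ 22 : ℕ) * ω) + (1 / 2) ^ (2 * Y ^ 24)) /
            (groundSL f b ω).sol (Y ^ 22) x +
          2 ^ l * (χ (x + (Y ^ 22 : ℕ) * -ω) + (1 / 2) ^ (2 * Y ^ 24)) /
            (groundSL f b (-ω)).sol (Y ^ 22) x) / (f x ^ 2 * tentFactor ω f b χ (Y ^ 22) x) ≤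
      (Y : ℝ) ^ 5 * (b + exp (-Y)) := by
  have hY := C.large.pos
  have hb := C.input.coupling_pos
  have hden : 0 < f x ^ 2 * tentFactor ω f b χ (Y ^ 22) x :=
    mul_pos (pow_pos (C.pos x) 2) (C.tentFactor_pos x)
  have hfeet := (div_le_iff₀ hden).2 ((add_le_add
    (C.foot_le (Or.inl rfl) x (x + (Y ^ 22 : ℕ) * ω))
    (C.foot_le (Or.inr rfl) x (x + (Y ^ 22 : ℕ) * -ω))).trans_eq (add_mul _ _ _).symm)
  have htops := C.tops_le hv x
  have htwo : 10 * 2 ^ l * (Y : ℝ) ^ 3 * b ≤ Y * (Y : ℝ) ^ 3 * b := by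
    gcongr
    linarith [C.large.two_pow_le, show (2 : ℝ) ^ (l + 5) = 2 ^ l * 32 by ring,
      pow_pos (two_pos : (0 : ℝ) < 2) l]
  have hpow : 1 + (Y : ℝ) ^ 4 ≤ (Y : ℝ) ^ 5 ∧ 3 ≤ (Y : ℝ) ^ 5 := by
    have := C.large.hundred_mul_pow_le (by norm_num : 4 < 5)
    have := one_le_pow₀ C.large.one_le (n := 4)
    constructor <;> linarith
  linarith [mul_le_mul_of_nonneg_right hpow.1 hb.le,
    mul_le_mul_of_nonneg_right hpow.2 (exp_pos (-(Y : ℝ))).le]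

lemma abs_iteratedDeriv_potentialCorrection_le
    (hv : ∀ α, α = ω ∨ α = -ω → HasValleys α f (2 / (Y : ℝ) ^ 10) Y b)
    (x : ℝ) {j : ℕ} (hj : j ≤ l) :
    |iteratedDeriv j (potentialCorrection ω f b χ (Y ^ 22)) x| ≤
      (Y : ℝ) ^ (40 * l + 5) * (b + exp (-Y)) := by
  have hb := C.input.coupling_pos
  have hdom := (derivDominated_potentialCorrection (ω := ω) C.input.derivDominated C.pos
    C.coupling_nonneg (by positivity) C.cutoff.derivDominated C.one_le_length C.tentFactor_pos
    C.cutoffError_mul_le_tentFactor).mono_scale C.large.correctionScale_le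
  refine (hdom.abs_iteratedDeriv_le x j hj).trans ?_
  calc _ ≤ ((Y : ℝ) ^ 40) ^ j * ((Y : ℝ) ^ 5 * (b + exp (-Y))) :=
        mul_le_mul_of_nonneg_left (C.correction_profile_le hv x) (by positivity)
    _ ≤ ((Y : ℝ) ^ 40) ^ l * ((Y : ℝ) ^ 5 * (b + exp (-Y))) := by
        gcongr
        exact one_le_pow₀ C.large.one_le
    _ = (Y : ℝ) ^ (40 * l + 5) * (b + exp (-Y)) := by ring

end StepContext

end CorrectionBound

section SchrodingerSolutions

/-- The solution of `u (n + 2) + u n = V (x + n * ω) * u (n + 1)` with `u 1 = a` and `u 0 = c`; the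
index `n` stands for the point `x + (n - 1) * ω` of the orbit. -/
noncomputable def schrodingerSol (ω : ℝ) (V : ℝ → ℝ) (x a c : ℝ) : ℕ → ℝ
  | 0 => c
  | 1 => a
  | n + 2 => V (x + n * ω) * schrodingerSol ω V x a c (n + 1) - schrodingerSol ω V x a c n

/-- The Wronskian of `schrodingerSol ω V x a c` with the restriction of `f` to the orbit. -/
noncomputable def wronskian (ω : ℝ) (f V : ℝ → ℝ) (x a c : ℝ) (n : ℕ) : ℝ :=
  f (x + n * ω - ω) * schrodingerSol ω V x a c (n + 1) -
    f (x + n * ω) * schrodingerSol ω V x a c n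

variable {ω : ℝ} {f V : ℝ → ℝ} {x a c : ℝ}

lemma mul_schrodingerSol_succ (n : ℕ) :
    f (x + n * ω) * schrodingerSol ω V x a c (n + 2) = wronskian ω f V x a c (n + 1) +
      f (x + n * ω + ω) * schrodingerSol ω V x a c (n + 1) := by
  rw [wronskian, show x + ((n + 1 : ℕ) : ℝ) * ω = x + n * ω + ω by push_cast; ring,
    add_sub_cancel_right]
  ring

lemma wronskian_succ (hf : ∀ x, 0 < f x) (n : ℕ) :
    wronskian ω f V x a c (n + 1) = wronskian ω f V x a c n +
      (V (x + n * ω) - groundPotential ω f (x + n * ω)) *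
        (f (x + n * ω) * schrodingerSol ω V x a c (n + 1)) := by
  have hground : groundPotential ω f (x + n * ω) * f (x + n * ω) =
      f (x + n * ω + ω) + f (x + n * ω - ω) := div_mul_cancel₀ _ (hf _).ne'
  rw [wronskian, wronskian, show x + ((n + 1 : ℕ) : ℝ) * ω = x + n * ω + ω by push_cast; ring,
    add_sub_cancel_right, schrodingerSol]
  linear_combination schrodingerSol ω V x a c (n + 1) * hground

lemma schrodingerSol_wronskian_nonneg (hf : ∀ x, 0 < f x) (hV : ∀ x, groundPotential ω f x ≤ V x)
    (x : ℝ) (n : ℕ) :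
    0 ≤ schrodingerSol ω V x 1 0 (n + 1) ∧ 0 ≤ wronskian ω f V x 1 0 n := by
  induction n with
  | zero => simpa [schrodingerSol, wronskian] using (hf _).le
  | succ n ih =>
    obtain ⟨hsol, hwr⟩ := ih
    have hf0 := hf (x + n * ω)
    have hwr' : 0 ≤ wronskian ω f V x 1 0 (n + 1) := by
      rw [wronskian_succ hf]
      exact add_nonneg hwr (mul_nonneg (sub_nonneg.2 (hV _)) (mul_nonneg hf0.le hsol))
    refine ⟨nonneg_of_mul_nonneg_right (?_ : 0 ≤ f (x + n * ω) * _) hf0, hwr'⟩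
    rw [mul_schrodingerSol_succ]
    exact add_nonneg hwr' (mul_nonneg (hf _).le hsol)

lemma schrodingerSol_wronskian_le_prod_mul (hf : ∀ x, 0 < f x)
    (hV : ∀ x, groundPotential ω f x ≤ V x) {U K : ℝ → ℝ} (hK : ∀ x, 1 ≤ K x)
    (hUV : ∀ x, U x - groundPotential ω f x ≤ K x * (V x - groundPotential ω f x)) (x : ℝ)
    (hU : ∀ n, 0 ≤ schrodingerSol ω U x 1 0 (n + 1)) (n : ℕ) :
    schrodingerSol ω U x 1 0 (n + 1) ≤
        (∏ i ∈ Finset.range n, K (x + i * ω)) * schrodingerSol ω V x 1 0 (n + 1) ∧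
      wronskian ω f U x 1 0 n ≤
        (∏ i ∈ Finset.range n, K (x + i * ω)) * wronskian ω f V x 1 0 n := by
  induction n with
  | zero => simp [schrodingerSol, wronskian]
  | succ n ih =>
    obtain ⟨hsol, hwr⟩ := ih
    obtain ⟨hsol0, hwr0⟩ := schrodingerSol_wronskian_nonneg hf hV x n
    rw [Finset.prod_range_succ]
    set P := ∏ i ∈ Finset.range n, K (x + i * ω)
    set y := x + n * ω
    have hP : 0 ≤ P := Finset.prod_nonneg fun i _ => zero_le_one.trans (hK _)
    have hf0 := hf y
    have hf1 := hf (y + ω)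
    have hPK : P ≤ P * K y := le_mul_of_one_le_right hP (hK y)
    have hVy := sub_nonneg.2 (hV y)
    have hwr' : wronskian ω f U x 1 0 (n + 1) ≤ P * K y * wronskian ω f V x 1 0 (n + 1) := by
      rw [wronskian_succ hf, wronskian_succ hf]
      have hsource : (U y - groundPotential ω f y) * (f y * schrodingerSol ω U x 1 0 (n + 1)) ≤
          K y * (V y - groundPotential ω f y) *
            (f y * (P * schrodingerSol ω V x 1 0 (n + 1))) :=
        mul_le_mul (hUV y) (by gcongr) (mul_nonneg hf0.le (hU n))
          (mul_nonneg (zero_le_one.trans (hK y)) hVy)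
      linarith [mul_le_mul_of_nonneg_right hPK hwr0]
    refine ⟨le_of_mul_le_mul_left (?_ : f y * _ ≤ f y * _) hf0, hwr'⟩
    calc f y * schrodingerSol ω U x 1 0 (n + 2)
        = wronskian ω f U x 1 0 (n + 1) + f (y + ω) * schrodingerSol ω U x 1 0 (n + 1) :=
          mul_schrodingerSol_succ n
      _ ≤ P * K y * wronskian ω f V x 1 0 (n + 1) +
            f (y + ω) * (P * K y * schrodingerSol ω V x 1 0 (n + 1)) := by
          gcongr
          exact hsol.trans (by gcongr)
      _ = P * K y * (f y * schrodingerSol ω V x 1 0 (n + 2)) := by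
          rw [mul_schrodingerSol_succ]; ring
      _ = f y * (P * K y * schrodingerSol ω V x 1 0 (n + 2)) := by ring

lemma wronskian_groundPotential (hf : ∀ x, 0 < f x) (n : ℕ) :
    wronskian ω f (groundPotential ω f) x a c n = f (x - ω) * a - f x * c := by
  induction n with
  | zero => simp [wronskian, schrodingerSol]
  | succ n ih => rw [wronskian_succ hf, ih, sub_self, zero_mul, add_zero]

lemma abs_wronskian_groundPotential_le {M : ℝ} (hf : ∀ x, 0 < f x) (hhi : ∀ x, f x ≤ M)
    (ha : |a| ≤ 1) (hc : |c| ≤ 1) (n : ℕ) :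
    |wronskian ω f (groundPotential ω f) x a c n| ≤ 2 * M := by
  have hM : 0 < M := (hf 0).trans_le (hhi 0)
  rw [wronskian_groundPotential hf]
  calc |f (x - ω) * a - f x * c| ≤ |f (x - ω) * a| + |f x * c| := abs_sub _ _
    _ = f (x - ω) * |a| + f x * |c| := by
        rw [abs_mul, abs_mul, abs_of_pos (hf _), abs_of_pos (hf _)]
    _ ≤ M * 1 + M * 1 := by gcongr <;> exact hhi _
    _ = 2 * M := by ring

lemma abs_schrodingerSol_groundPotential_le {m M : ℝ} (hm : 0 < m) (hlo : ∀ x, m ≤ f x)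
    (hhi : ∀ x, f x ≤ M) (x : ℝ) (ha : |a| ≤ 1) (hc : |c| ≤ 1) (n : ℕ) :
    |schrodingerSol ω (groundPotential ω f) x a c (n + 1)| ≤
      f (x + n * ω) * (1 / m + n * (2 * M / m ^ 2)) := by
  have hf (y : ℝ) : 0 < f y := hm.trans_le (hlo y)
  have hM : 0 < M := (hf 0).trans_le (hhi 0)
  induction n with
  | zero =>
    simp only [schrodingerSol, Nat.cast_zero, zero_mul, add_zero, mul_one_div]
    exact ha.trans ((one_le_div hm).2 (hlo x))
  | succ n ih =>
    rw [show x + ((n + 1 : ℕ) : ℝ) * ω = x + n * ω + ω by push_cast; ring]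
    set y := x + n * ω
    have hf0 := hf y
    have hf1 := hf (y + ω)
    have hM2 : 2 * M ≤ f y * f (y + ω) * (2 * M / m ^ 2) := by
      calc 2 * M = m * m * (2 * M / m ^ 2) := by field_simp
        _ ≤ f y * f (y + ω) * (2 * M / m ^ 2) := by gcongr <;> exact hlo _
    refine le_of_mul_le_mul_left (?_ : f y * _ ≤ f y * _) hf0
    calc f y * |schrodingerSol ω (groundPotential ω f) x a c (n + 2)|
        = |wronskian ω f (groundPotential ω f) x a c (n + 1) +
            f (y + ω) * schrodingerSol ω (groundPotential ω f) x a c (n + 1)| := by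
          rw [← mul_schrodingerSol_succ, abs_mul, abs_of_pos hf0]
      _ ≤ 2 * M + f (y + ω) * (f y * (1 / m + n * (2 * M / m ^ 2))) := by
          refine (abs_add_le _ _).trans
            (add_le_add (abs_wronskian_groundPotential_le hf hhi ha hc _) ?_)
          rw [abs_mul, abs_of_pos hf1]
          gcongr
      _ ≤ f y * (f (y + ω) * (1 / m + (n + 1 : ℕ) * (2 * M / m ^ 2))) := by
          push_cast
          linarith

end SchrodingerSolutions

section UniformGrowth

/-- The solutions of the Schrödinger equation with `u 1 = 1` and `u 0 = 0` grow exponentially at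
rate `κ`, uniformly in the starting point of the orbit. -/
def UniformGrowth (ω : ℝ) (V : ℝ → ℝ) (κ : ℝ) : Prop :=
  ∃ c > 0, ∀ (n : ℕ) (x : ℝ), c * exp (n * κ) ≤ schrodingerSol ω V x 1 0 (n + 1)

lemma UniformGrowth.mono {ω : ℝ} {V : ℝ → ℝ} {κ κ' : ℝ} (h : UniformGrowth ω V κ) (hκ : κ' ≤ κ) :
    UniformGrowth ω V κ' := by
  obtain ⟨c, hc, h⟩ := h
  exact ⟨c, hc, fun n x => le_trans (by gcongr) (h n x)⟩

lemma uniformGrowth_const (ω κ : ℝ) : UniformGrowth ω (fun _ => exp κ + exp (-κ)) κ := by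
  refine ⟨1, one_pos, fun n x => ?_⟩
  set u := schrodingerSol ω (fun _ => exp κ + exp (-κ)) x 1 0 with hu
  suffices h : exp (n * κ) ≤ u (n + 1) ∧ exp κ * u n ≤ u (n + 1) by rw [one_mul]; exact h.1
  induction n with
  | zero => simp [hu, schrodingerSol]
  | succ n ih =>
    obtain ⟨hgrowth, hratio⟩ := ih
    have hrec : u (n + 2) = (exp κ + exp (-κ)) * u (n + 1) - u n := by rw [hu, schrodingerSol]
    have hprev : u n ≤ exp (-κ) * u (n + 1) := by
      rw [exp_neg, le_inv_mul_iff₀ (exp_pos κ)]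
      exact hratio
    have hnext : exp κ * u (n + 1) ≤ u (n + 2) := by linarith
    refine ⟨?_, hnext⟩
    calc exp (((n + 1 : ℕ) : ℝ) * κ) = exp κ * exp (n * κ) := by
          rw [← exp_add]; push_cast; ring_nf
      _ ≤ exp κ * u (n + 1) := by gcongr
      _ ≤ u (n + 2) := hnext

lemma card_filter_range_le_div_add_one {P : ℕ → Prop} [DecidablePred P] {N : ℕ} (hN : 0 < N)
    (hP : ∀ i k, 1 ≤ k → k < N → P i → ¬ P (i + k)) (n : ℕ) :
    ((Finset.range n).filter P).card ≤ n / N + 1 := by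
  rw [← Finset.card_range (n / N + 1)]
  refine Finset.card_le_card_of_injOn (· / N) (fun i hi => ?_) fun i hi j hj hij => ?_
  · have hin := (Finset.mem_range.1 (Finset.mem_filter.1 hi).1).le
    exact Finset.mem_coe.2 (Finset.mem_range.2 (Nat.lt_succ_of_le (Nat.div_le_div_right hin)))
  · have hdiv : i / N = j / N := hij
    have hi_mod := Nat.div_add_mod i N
    have hj_mod := Nat.div_add_mod j N
    have hi_lt := Nat.mod_lt i hN
    have hj_lt := Nat.mod_lt j hN
    rw [hdiv] at hi_mod
    replace hi := (Finset.mem_filter.1 hi).2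
    replace hj := (Finset.mem_filter.1 hj).2
    rcases lt_trichotomy i j with hlt | heq | hlt
    · refine absurd ?_ (hP i (j - i) (by omega) (by omega) hi)
      rwa [Nat.add_sub_cancel' hlt.le]
    · exact heq
    · refine absurd ?_ (hP j (i - j) (by omega) (by omega) hj)
      rwa [Nat.add_sub_cancel' hlt.le]

lemma LargeScale.pow_three_le_exp_mul_exp_neg {c T : ℝ} {l Y : ℕ} (h : LargeScale c T l Y) :
    (Y : ℝ) ^ 3 ≤ exp (2 * (Y : ℝ) ^ 7) * exp (-(Y : ℝ) ^ 7) := by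
  rw [← exp_add, show 2 * (Y : ℝ) ^ 7 + -(Y : ℝ) ^ 7 = (Y : ℝ) ^ 7 by ring]
  linarith [h.pow_le_exp (by norm_num : 3 ≤ 50), pow_pos h.pos 3,
    exp_le_exp.2 (le_self_pow₀ h.one_le (by norm_num : 7 ≠ 0))]

namespace StepContext

variable {ω c T : ℝ} {l Y : ℕ} {f : ℝ → ℝ} {b : ℝ} {W : ℕ} {χ : ℝ → ℝ}
  (C : StepContext ω c T l Y f b W χ)
include C

open Classical in
lemma card_visits_le (x : ℝ) (n : ℕ) :
    ((Finset.range n).filter fun i : ℕ =>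
      ‖((x + i * ω : ℝ) : UnitAddCircle)‖ ≤ 2 / (Y : ℝ) ^ 10).card ≤ n / Y ^ 9 + 1 := by
  have hY := C.large.pos
  refine card_filter_range_le_div_add_one
    (Nat.pow_pos (by linarith [C.large.hundred_le_nat])) (fun i k hk hkY hi => ?_) n
  rw [not_le, show x + ((i + k : ℕ) : ℝ) * ω = x + i * ω + k * ω by push_cast; ring]
  refine C.badlyApproximable.lt_norm_add_mul hk hi ?_
  have hc := C.badlyApproximable.pos
  have hcY := (div_le_iff₀ hc).1 C.large.eight_div_le
  have hkY' : (k : ℝ) < (Y : ℝ) ^ 9 := by exact_mod_cast hkY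
  rw [← add_div, div_mul_eq_mul_div, div_lt_iff₀ (by positivity)]
  calc (2 + 2) * (k : ℝ) < 8 * (Y : ℝ) ^ 9 := by linarith [pow_pos hY 9]
    _ ≤ Y * c * (Y : ℝ) ^ 9 := by gcongr
    _ = c * (Y : ℝ) ^ 10 := by ring

open Classical in
lemma prod_ite_visit_le (x : ℝ) (n : ℕ) :
    (∏ i ∈ Finset.range n, if ‖((x + i * ω : ℝ) : UnitAddCircle)‖ ≤ 2 / (Y : ℝ) ^ 10
      then exp (2 * (Y : ℝ) ^ 7) else 1) ≤ exp (n * (2 / (Y : ℝ) ^ 2) + 2 * (Y : ℝ) ^ 7) := by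
  have hY := C.large.pos
  have hdiv : ((n / Y ^ 9 : ℕ) : ℝ) ≤ (n : ℝ) / (Y : ℝ) ^ 9 := by
    exact_mod_cast Nat.cast_div_le (m := n) (n := Y ^ 9) (α := ℝ)
  rw [Finset.prod_ite, Finset.prod_const, Finset.prod_const_one, mul_one]
  calc _ ≤ exp (2 * (Y : ℝ) ^ 7) ^ (n / Y ^ 9 + 1) :=
        pow_le_pow_right₀ (one_le_exp (by positivity)) (C.card_visits_le x n)
    _ = exp (((n / Y ^ 9 : ℕ) : ℝ) * (2 * (Y : ℝ) ^ 7) + 2 * (Y : ℝ) ^ 7) := by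
        rw [← exp_nat_mul]; push_cast; ring_nf
    _ ≤ exp ((n : ℝ) / (Y : ℝ) ^ 9 * (2 * (Y : ℝ) ^ 7) + 2 * (Y : ℝ) ^ 7) := by gcongr
    _ = exp (n * (2 / (Y : ℝ) ^ 2) + 2 * (Y : ℝ) ^ 7) := by field_simp

-- The new potential is smaller than the old one only during the rare visits to the core, each of
-- which costs a factor `exp (2 * Y ^ 7)`.
open Classical in
lemma uniformGrowth_nextGroundState {κ : ℝ}
    (hG : UniformGrowth ω (fun y => groundPotential ω f y + b) κ) :
    UniformGrowth ω
      (fun y => groundPotential ω (nextGroundState ω f b χ Y) y + exp (-(Y : ℝ) ^ 7))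
      (κ - 2 / (Y : ℝ) ^ 2) := by
  obtain ⟨c₀, hc₀, hG⟩ := hG
  have hY := C.large.pos
  have hpos (y : ℝ) : 0 < nextGroundState ω f b χ Y y :=
    (exp_pos _).trans_le (C.groundLevel_nextGroundState.exp_neg_le y)
  have hloss := C.large.pow_three_le_exp_mul_exp_neg
  refine ⟨c₀ * exp (-(2 * (Y : ℝ) ^ 7)), by positivity, fun n x => ?_⟩
  have hV (y : ℝ) : groundPotential ω (nextGroundState ω f b χ Y) y ≤
      groundPotential ω (nextGroundState ω f b χ Y) y + exp (-(Y : ℝ) ^ 7) :=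
    le_add_of_nonneg_right (exp_pos _).le
  have hcompare := (schrodingerSol_wronskian_le_prod_mul (U := fun y => groundPotential ω f y + b)
    (K := fun y => if ‖(y : UnitAddCircle)‖ ≤ 2 / (Y : ℝ) ^ 10 then exp (2 * (Y : ℝ) ^ 7) else 1)
    hpos hV (fun y => ?_) (fun y => ?_) x (fun i => le_trans (by positivity) (hG i x)) n).1
  · calc c₀ * exp (-(2 * (Y : ℝ) ^ 7)) * exp (n * (κ - 2 / (Y : ℝ) ^ 2))
        = (exp (n * (2 / (Y : ℝ) ^ 2) + 2 * (Y : ℝ) ^ 7))⁻¹ * (c₀ * exp (n * κ)) := by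
          rw [← exp_neg, mul_assoc, ← exp_add, mul_left_comm, ← exp_add]
          ring_nf
      _ ≤ _ := (inv_mul_le_iff₀ (exp_pos _)).2 ((hG n x).trans (hcompare.trans
          (mul_le_mul_of_nonneg_right (C.prod_ite_visit_le x n)
            (schrodingerSol_wronskian_nonneg hpos hV x n).1)))
  · split_ifs
    · exact one_le_exp (by positivity)
    · exact le_rfl
  · rw [add_sub_cancel_left]
    split_ifs with hy
    · linarith [C.groundPotential_add_le_add_pow y]
    · linarith [C.groundPotential_add_le_of_lt_norm y (not_le.1 hy), exp_pos (-(Y : ℝ) ^ 7)]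

end StepContext

end UniformGrowth

section GroundStateSequence

/-- A ground state `f` at scale `Y` whose potential, raised by the tiny coupling `exp (-Y ^ 7)`, has
solutions growing at a rate slightly above `κ`. -/
structure GroundStage (ω κ : ℝ) (l Y : ℕ) (f : ℝ → ℝ) : Prop where
  level : GroundLevel ω l Y f
  growth : UniformGrowth ω (fun y => groundPotential ω f y + exp (-(Y : ℝ) ^ 7)) (κ + 2 / Y)

variable {ω c T κ : ℝ} {l Y : ℕ} {f : ℝ → ℝ}

lemma contDiff_groundPotential (hf : ContDiff ℝ l f) (hpos : ∀ x, 0 < f x) :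
    ContDiff ℝ l (groundPotential ω f) :=
  ((hf.comp (contDiff_id.add contDiff_const)).add
    (hf.comp (contDiff_id.sub contDiff_const))).div hf fun x => (hpos x).ne'

lemma GroundLevel.pos (h : GroundLevel ω l Y f) (x : ℝ) : 0 < f x :=
  (exp_pos _).trans_le (h.exp_neg_le x)

lemma GroundLevel.stepInput (h : GroundLevel ω l Y f) (hY : LargeScale c T l Y)
    (hω : BadlyApproximable c ω) :
    StepInput ω l (Y ^ 40) f (exp (-(Y : ℝ) ^ 7)) (Y ^ 21 + Y ^ 10 + 1) where
  periodic := h.periodic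
  derivDominated := by push_cast; exact h.derivDominated
  exp_neg_le := by push_cast; exact h.exp_neg_le
  le := by push_cast; exact h.le
  coupling_pos := exp_pos _
  coupling_le := by
    push_cast
    exact (exp_le_one_iff.2 (neg_nonpos.2 (by positivity))).trans (one_le_pow₀ hY.one_le)
  one_le_time := by omega
  time_le := by
    have h10 := hY.hundred_mul_pow_le (by norm_num : 10 < 40)
    have h21 := hY.hundred_mul_pow_le (by norm_num : 21 < 40)
    have : (Y : ℝ) ^ 21 + (Y : ℝ) ^ 10 + 1 ≤ (Y : ℝ) ^ 40 := by
      linarith [one_le_pow₀ (n := 10) hY.one_le, one_le_pow₀ (n := 21) hY.one_le]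
    exact_mod_cast this
  doubling α hα := by
    have hα' : BadlyApproximable c α := by
      rcases hα with rfl | rfl
      · exact hω
      · exact hω.neg
    exact groundSL_doubling h.pos (exp_pos _) (hY.exists_norm_add_mul_le hα')
      h.one_le_of_norm_le (h.hasValleys α hα)
  one_le_of_norm_le y hy := h.one_le_of_norm_le y (hy.trans hY.two_div_le)

lemma GroundLevel.hasValleys_pow (h : GroundLevel ω l Y f) (hY : LargeScale c T l Y) (α : ℝ)
    (hα : α = ω ∨ α = -ω) :
    HasValleys α f (2 / ((Y ^ 40 : ℕ) : ℝ) ^ 10) (Y ^ 40) (exp (-(Y : ℝ) ^ 7)) := by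
  intro y hy
  obtain ⟨m, hm, hvalley⟩ := h.hasValleys α hα y (hy.trans hY.two_div_le)
  exact ⟨m, hm.trans (Nat.pow_le_pow_right (by linarith [hY.hundred_le_nat]) (by norm_num)),
    hvalley⟩

lemma GroundStage.exists_next (h : GroundStage ω κ l Y f) (hω : BadlyApproximable c ω)
    (hY : LargeScale c T l Y) (hY' : LargeScale c T l (Y ^ 40))
    (hexp : 2 * (Y : ℝ) ^ (40 * (40 * l + 5) + 1) ≤ exp Y) {χ : ℝ → ℝ}
    (hχ : IsStepCutoff l (Y ^ 40) χ) :
    ∃ f', GroundStage ω κ l (Y ^ 40) f' ∧ ∀ x, ∀ j ≤ l,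
      |iteratedDeriv j (fun y => groundPotential ω f' y - groundPotential ω f y) x| ≤ 1 / Y := by
  have hYpos := hY.pos
  have C : StepContext ω c T l (Y ^ 40) f (exp (-(Y : ℝ) ^ 7)) (Y ^ 21 + Y ^ 10 + 1) χ :=
    ⟨hω, hY', h.level.stepInput hY hω, hχ⟩
  refine ⟨_, ⟨C.groundLevel_nextGroundState,
    (C.uniformGrowth_nextGroundState h.growth).mono ?_⟩, fun x j hj => ?_⟩
  · have hpow : 100 * (Y : ℝ) ≤ ((Y ^ 40 : ℕ) : ℝ) := by
      have := hY.hundred_mul_pow_le (by norm_num : 1 < 40)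
      push_cast
      linarith
    have hrate : 2 / ((Y ^ 40 : ℕ) : ℝ) ≤ 2 / (100 * Y) := by gcongr
    have hrate' : 2 / ((Y ^ 40 : ℕ) : ℝ) ^ 2 ≤ 2 / (100 * Y) := by
      gcongr
      exact hpow.trans (le_self_pow₀ hY'.one_le (by norm_num))
    linarith [show 2 / (100 * (Y : ℝ)) = 2 / Y / 100 by ring, div_pos two_pos hYpos]
  · have hcorrection := C.abs_iteratedDeriv_potentialCorrection_le (h.level.hasValleys_pow hY) x hj
    simp only [C.groundPotential_nextGroundState, add_sub_cancel_left]
    refine hcorrection.trans ?_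
    have hle {k : ℕ} (hk : k ≠ 0) : exp (-(Y : ℝ) ^ k) ≤ exp (-Y) :=
      exp_le_exp.2 (neg_le_neg (le_self_pow₀ hY.one_le hk))
    push_cast
    rw [le_div_iff₀ hYpos, ← pow_mul]
    calc (Y : ℝ) ^ (40 * (40 * l + 5)) * (exp (-(Y : ℝ) ^ 7) + exp (-(Y : ℝ) ^ 40)) * Y
        ≤ (Y : ℝ) ^ (40 * (40 * l + 5)) * (exp (-Y) + exp (-Y)) * Y := by
          gcongr ?_ * (?_ + ?_) * ?_
          exacts [hle (by norm_num), hle (by norm_num)]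
      _ = 2 * (Y : ℝ) ^ (40 * (40 * l + 5) + 1) * exp (-Y) := by ring
      _ ≤ exp Y * exp (-Y) := by gcongr
      _ = 1 := by rw [← exp_add, add_neg_cancel, exp_zero]

lemma stepInput_one {b : ℝ} (hb : 1 ≤ b) (hbY : b ≤ Y) (hY : 2 ≤ Y) :
    StepInput ω l Y (fun _ => 1) b 2 where
  periodic _ := rfl
  derivDominated := by simpa using DerivDominated.const (l := l) 1 (Nat.cast_nonneg Y)
  exp_neg_le _ := exp_le_one_iff.2 (neg_nonpos.2 (Nat.cast_nonneg Y))
  le _ := hb.trans hbY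
  coupling_pos := zero_lt_one.trans_le hb
  coupling_le := hbY
  one_le_time := one_le_two
  time_le := hY
  doubling α _ := groundSL_doubling (r := 1 / 2) (A := 1) (B := 0) (fun _ => one_pos)
    (zero_lt_one.trans_le hb)
    (fun x => ⟨1, le_rfl, le_rfl, by simpa using AddCircle.norm_le_half_period 1 one_ne_zero⟩)
    (fun _ _ => le_rfl) fun y _ => ⟨0, le_rfl, by simpa using hb⟩
  one_le_of_norm_le _ _ := le_rfl

lemma exists_groundStage (hω : BadlyApproximable c ω) (hκ : 0 < κ) (hY : LargeScale c T l Y)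
    (hκY : exp (κ + 2) ≤ Y) {χ : ℝ → ℝ} (hχ : IsStepCutoff l Y χ) :
    ∃ f, GroundStage ω κ l Y f := by
  set b := exp (κ + 2) + exp (-(κ + 2)) - 2 with hb
  have hb1 : 1 ≤ b := by linarith [add_one_le_exp (κ + 2), exp_pos (-(κ + 2))]
  have hbY : b ≤ Y := by linarith [exp_le_one_iff.2 (by linarith : -(κ + 2) ≤ 0)]
  have C : StepContext ω c T l Y (fun _ => 1) b 2 χ :=
    ⟨hω, hY, stepInput_one hb1 hbY (by linarith [hY.hundred_le_nat]), hχ⟩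
  have hgrowth : UniformGrowth ω (fun y => groundPotential ω (fun _ => 1) y + b) (κ + 2) := by
    convert uniformGrowth_const ω (κ + 2) using 2
    rw [groundPotential, hb]
    ring
  refine ⟨_, C.groundLevel_nextGroundState, (C.uniformGrowth_nextGroundState hgrowth).mono ?_⟩
  have hrate : 2 / (Y : ℝ) ≤ 2 / 2 := by gcongr; linarith [hY.hundred_le]
  have hrate' : 2 / (Y : ℝ) ^ 2 ≤ 2 / Y := by
    have := hY.pos
    gcongr
    exact le_self_pow₀ hY.one_le two_ne_zero
  linarith

lemma exists_groundStage_forall_scale (hω : BadlyApproximable c ω) (hκ : 0 < κ) (l : ℕ) :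
    ∃ Y₀ : ℕ, ∀ Y ≥ Y₀, 2 ≤ Y ∧ (∃ f, GroundStage ω κ l Y f) ∧
      ∀ f, GroundStage ω κ l Y f → ∃ f', GroundStage ω κ l (Y ^ 40) f' ∧ ∀ x, ∀ j ≤ l,
        |iteratedDeriv j (fun y => groundPotential ω f' y - groundPotential ω f y) x| ≤ 1 / Y := by
  obtain ⟨T, hT, hcut⟩ := exists_isPeriodicCutoff l
  have hcast : Tendsto (fun Y : ℕ => (Y : ℝ)) atTop atTop := tendsto_natCast_atTop_atTop
  have hexp : ∀ᶠ Y : ℕ in atTop, 2 * (Y : ℝ) ^ (40 * (40 * l + 5) + 1) ≤ exp Y := by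
    filter_upwards [((Real.tendsto_exp_div_pow_atTop _).comp hcast).eventually_ge_atTop 2,
      hcast.eventually_ge_atTop 1] with Y hY hY1
    exact (le_div_iff₀ (by positivity)).1 hY
  obtain ⟨Y₀, hY₀⟩ := eventually_atTop.1 ((eventually_largeScale c T l).and
    (hexp.and (hcast.eventually_ge_atTop (exp (κ + 2)))))
  refine ⟨Y₀, fun Y hY => ?_⟩
  obtain ⟨hlarge, hexpY, hκY⟩ := hY₀ Y hY
  have hlarge' := (hY₀ (Y ^ 40) (hY.trans (Nat.le_self_pow (by norm_num) Y))).1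
  obtain ⟨χ, hχ⟩ := hlarge.exists_isStepCutoff hT hcut
  obtain ⟨χ', hχ'⟩ := hlarge'.exists_isStepCutoff hT hcut
  exact ⟨by linarith [hlarge.hundred_le_nat], exists_groundStage hω hκ hlarge hκY hχ,
    fun f hf => hf.exists_next hω hlarge hlarge' hexpY hχ'⟩

lemma exists_groundStage_seq (hω : BadlyApproximable c ω) (hκ : 0 < κ) (l : ℕ) :
    ∃ (Y : ℕ → ℕ) (F : ℕ → ℝ → ℝ), (∀ k, 2 ^ k ≤ Y k) ∧ (∀ k, GroundStage ω κ l (Y k) (F k)) ∧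
      ∀ k x, ∀ j ≤ l, |iteratedDeriv j
        (fun y => groundPotential ω (F (k + 1)) y - groundPotential ω (F k) y) x| ≤ 1 / Y k := by
  obtain ⟨Y₀, hstage⟩ := exists_groundStage_forall_scale hω hκ l
  obtain ⟨hY₀, ⟨f₀, hf₀⟩, -⟩ := hstage Y₀ le_rfl
  have hscale (k : ℕ) : Y₀ ≤ Y₀ ^ 40 ^ k := Nat.le_self_pow (by positivity) Y₀
  have hnext (k : ℕ) (f : ℝ → ℝ) (hf : GroundStage ω κ l (Y₀ ^ 40 ^ k) f) :=
    (hstage _ (hscale k)).2.2 f hf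
  choose! next hnext_stage hnext_le using hnext
  let F (k : ℕ) : ℝ → ℝ := Nat.rec f₀ next k
  have hF (k : ℕ) : GroundStage ω κ l (Y₀ ^ 40 ^ k) (F k) := by
    induction k with
    | zero =>
      rw [pow_zero, pow_one]
      exact hf₀
    | succ k ih =>
      rw [pow_succ, pow_mul]
      exact hnext_stage k _ ih
  refine ⟨fun k => Y₀ ^ 40 ^ k, F, fun k => ?_, hF, fun k => hnext_le k _ (hF k)⟩
  calc 2 ^ k ≤ 2 ^ 40 ^ k := Nat.pow_le_pow_right two_pos (Nat.lt_pow_self (by norm_num)).le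
    _ ≤ Y₀ ^ 40 ^ k := Nat.pow_le_pow_left hY₀ _

theorem exists_groundState_seq (hω : BadlyApproximable c ω) (hκ : 0 < κ) (l : ℕ) :
    ∃ (F : ℕ → ℝ → ℝ) (β : ℕ → ℝ), (∀ k, 0 ≤ β k ∧ β k ≤ (1 / 2) ^ k) ∧
      (∀ k, Function.Periodic (F k) 1 ∧ ContDiff ℝ l (F k) ∧
        ∃ m M, 0 < m ∧ ∀ x, m ≤ F k x ∧ F k x ≤ M) ∧
      (∀ k, UniformGrowth ω (fun y => groundPotential ω (F k) y + β k) κ) ∧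
      ∀ k x, ∀ j ≤ l, |iteratedDeriv j
        (fun y => groundPotential ω (F (k + 1)) y - groundPotential ω (F k) y) x| ≤
          (1 / 2) ^ k := by
  obtain ⟨Y, F, hY, hF, hdiff⟩ := exists_groundStage_seq hω hκ l
  have hpow (k : ℕ) : (2 : ℝ) ^ k ≤ Y k := by exact_mod_cast hY k
  have hone (k : ℕ) : (1 : ℝ) ≤ Y k := (one_le_pow₀ one_le_two).trans (hpow k)
  have hpos (k : ℕ) : (0 : ℝ) < Y k := one_pos.trans_le (hone k)
  have hinv (k : ℕ) : 1 / (Y k : ℝ) ≤ (1 / 2) ^ k := by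
    rw [one_div_pow]
    exact one_div_le_one_div_of_le (by positivity) (hpow k)
  refine ⟨F, fun k => exp (-(Y k : ℝ) ^ 7), fun k => ⟨(exp_pos _).le, ?_⟩, fun k => ?_,
    fun k => (hF k).growth.mono ?_, fun k x j hj => (hdiff k x j hj).trans (hinv k)⟩
  · refine le_trans ?_ (hinv k)
    simp only [exp_neg, ← one_div]
    refine one_div_le_one_div_of_le (hpos k) ?_
    linarith [le_self_pow₀ (hone k) (by norm_num : 7 ≠ 0), add_one_le_exp ((Y k : ℝ) ^ 7)]
  · exact ⟨(hF k).level.periodic, (hF k).level.derivDominated.contDiff, _, _, exp_pos _,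
      fun x => ⟨(hF k).level.exp_neg_le x, (hF k).level.le x⟩⟩
  · exact le_add_of_nonneg_right (div_pos two_pos (hpos k)).le

end GroundStateSequence

section OpNorm

variable {A : Matrix (Fin 2) (Fin 2) ℝ}

lemma opNorm_nonneg (A : Matrix (Fin 2) (Fin 2) ℝ) : 0 ≤ opNorm A := norm_nonneg _

lemma opNorm_mul_le (A B : Matrix (Fin 2) (Fin 2) ℝ) : opNorm (A * B) ≤ opNorm A * opNorm B := by
  unfold opNorm
  rw [map_mul]
  exact norm_mul_le _ _

lemma continuous_opNorm : Continuous opNorm :=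
  continuous_norm.comp (LinearMap.continuous_of_finiteDimensional
    (Matrix.toEuclideanCLM (n := Fin 2) (𝕜 := ℝ)).toAlgEquiv.toLinearMap)

lemma sq_add_sq_col_le_opNorm_sq (A : Matrix (Fin 2) (Fin 2) ℝ) (j : Fin 2) :
    A 0 j ^ 2 + A 1 j ^ 2 ≤ opNorm A ^ 2 := by
  have hcol := (Matrix.toEuclideanCLM (𝕜 := ℝ) A).le_opNorm (EuclideanSpace.single j 1)
  rw [PiLp.norm_single, norm_one, mul_one] at hcol
  calc A 0 j ^ 2 + A 1 j ^ 2
      = ‖Matrix.toEuclideanCLM (𝕜 := ℝ) A (EuclideanSpace.single j 1)‖ ^ 2 := by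
        simp [EuclideanSpace.norm_sq_eq, Matrix.ofLp_toEuclideanCLM]
    _ ≤ opNorm A ^ 2 := by gcongr; exact hcol

lemma apply_zero_zero_le_opNorm (A : Matrix (Fin 2) (Fin 2) ℝ) : A 0 0 ≤ opNorm A := by
  refine le_of_abs_le <| abs_le_of_sq_le_sq ?_ (opNorm_nonneg A)
  linarith [sq_add_sq_col_le_opNorm_sq A 0, sq_nonneg (A 1 0)]

lemma opNorm_le_sum_abs (A : Matrix (Fin 2) (Fin 2) ℝ) :
    opNorm A ≤ |A 0 0| + |A 0 1| + |A 1 0| + |A 1 1| := by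
  refine ContinuousLinearMap.opNorm_le_bound _ (by positivity) fun v => ?_
  have hrow (i : Fin 2) : |Matrix.toEuclideanCLM (𝕜 := ℝ) A v i| ≤ (|A i 0| + |A i 1|) * ‖v‖ := by
    have hv (j : Fin 2) : |v j| ≤ ‖v‖ := PiLp.norm_apply_le v j
    calc |Matrix.toEuclideanCLM (𝕜 := ℝ) A v i| = |A i 0 * v 0 + A i 1 * v 1| := by
          simp [Matrix.ofLp_toEuclideanCLM, Matrix.mulVec, dotProduct, Fin.sum_univ_two]
      _ ≤ |A i 0| * |v 0| + |A i 1| * |v 1| := by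
          simpa only [abs_mul] using abs_add_le (A i 0 * v 0) (A i 1 * v 1)
      _ ≤ (|A i 0| + |A i 1|) * ‖v‖ := by rw [add_mul]; gcongr <;> exact hv _
  have hnorm (w : EuclideanSpace ℝ (Fin 2)) : ‖w‖ ≤ |w 0| + |w 1| := by
    rw [EuclideanSpace.norm_eq, Fin.sum_univ_two]
    refine sqrt_le_iff.2 ⟨by positivity, ?_⟩
    simp only [norm_eq_abs]
    nlinarith [mul_nonneg (abs_nonneg (w 0)) (abs_nonneg (w 1))]
  linarith [hnorm (Matrix.toEuclideanCLM (𝕜 := ℝ) A v), hrow 0, hrow 1]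

-- Hadamard's inequality, via Lagrange's identity for the two columns.
lemma one_le_opNorm (hA : A.det = 1) : 1 ≤ opNorm A := by
  have hdet : A.det ^ 2 ≤ (A 0 0 ^ 2 + A 1 0 ^ 2) * (A 0 1 ^ 2 + A 1 1 ^ 2) := by
    rw [Matrix.det_fin_two]
    linarith [sq_nonneg (A 0 0 * A 0 1 + A 1 0 * A 1 1)]
  have hcols : (A 0 0 ^ 2 + A 1 0 ^ 2) * (A 0 1 ^ 2 + A 1 1 ^ 2) ≤ opNorm A ^ 2 * opNorm A ^ 2 :=
    mul_le_mul (sq_add_sq_col_le_opNorm_sq A 0) (sq_add_sq_col_le_opNorm_sq A 1) (by positivity)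
      (by positivity)
  have hpow : 1 ≤ opNorm A ^ (2 + 2) := by
    simpa only [hA, one_pow, ← pow_add] using hdet.trans hcols
  exact (one_le_pow_iff_of_nonneg (opNorm_nonneg A) (by norm_num)).1 hpow

lemma opNorm_pos (hA : A.det = 1) : 0 < opNorm A := one_pos.trans_le (one_le_opNorm hA)

end OpNorm

section LyapunovExponent

variable {ω : ℝ} {A : ℝ → Matrix (Fin 2) (Fin 2) ℝ}

lemma det_cocycle (hdet : ∀ x, (A x).det = 1) (n : ℕ) (x : ℝ) : (cocycle ω A n x).det = 1 := by
  induction n with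
  | zero => simp [cocycle]
  | succ n ih => rw [cocycle, Matrix.det_mul, hdet, ih, one_mul]

lemma cocycle_add (m n : ℕ) (x : ℝ) :
    cocycle ω A (m + n) x = cocycle ω A m (x + n * ω) * cocycle ω A n x := by
  induction m with
  | zero => simp [cocycle]
  | succ m ih =>
    rw [Nat.add_right_comm, cocycle, cocycle, ih, Matrix.mul_assoc]
    congr 2
    push_cast
    ring

lemma continuous_cocycle (hA : Continuous A) (n : ℕ) : Continuous (cocycle ω A n) := by
  induction n with
  | zero => exact continuous_const
  | succ n ih => exact (hA.comp (continuous_add_const _)).matrix_mul ih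

lemma periodic_cocycle (hA : Function.Periodic A 1) (n : ℕ) :
    Function.Periodic (cocycle ω A n) 1 := by
  intro x
  induction n with
  | zero => rfl
  | succ n ih => rw [cocycle, cocycle, ih, add_right_comm, hA]

lemma continuous_log_opNorm_cocycle (hA : Continuous A) (hdet : ∀ x, (A x).det = 1) (n : ℕ) :
    Continuous fun x => log (opNorm (cocycle ω A n x)) :=
  (continuous_opNorm.comp (continuous_cocycle hA n)).log
    fun x => (opNorm_pos (det_cocycle hdet n x)).ne'

lemma log_opNorm_cocycle_add_le (hdet : ∀ x, (A x).det = 1) (m n : ℕ) (x : ℝ) :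
    log (opNorm (cocycle ω A (m + n) x)) ≤
      log (opNorm (cocycle ω A m (x + n * ω))) + log (opNorm (cocycle ω A n x)) := by
  have hpos (n : ℕ) (x : ℝ) := opNorm_pos (det_cocycle (ω := ω) hdet n x)
  rw [← log_mul (hpos m _).ne' (hpos n x).ne', cocycle_add]
  refine log_le_log ?_ (opNorm_mul_le _ _)
  rw [← cocycle_add]
  exact hpos _ x

lemma subadditive_integral_log_opNorm_cocycle (hA : Continuous A) (hper : Function.Periodic A 1)
    (hdet : ∀ x, (A x).det = 1) :
    Subadditive fun n => ∫ x in (0 : ℝ)..1, log (opNorm (cocycle ω A n x)) := by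
  intro m n
  have hcont := continuous_log_opNorm_cocycle (ω := ω) hA hdet
  have hcont' : Continuous fun x => log (opNorm (cocycle ω A m (x + n * ω))) :=
    (hcont m).comp (continuous_add_const _)
  have hshift : ∫ x in (0 : ℝ)..1, log (opNorm (cocycle ω A m (x + n * ω))) =
      ∫ x in (0 : ℝ)..1, log (opNorm (cocycle ω A m x)) := by
    have hperiodic : Function.Periodic (fun x => log (opNorm (cocycle ω A m x))) 1 :=
      (periodic_cocycle hper m).comp fun B => log (opNorm B)
    rw [intervalIntegral.integral_comp_add_right fun x => log (opNorm (cocycle ω A m x)),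
      add_comm 1 (n * ω), zero_add, hperiodic.intervalIntegral_add_eq _ 0, zero_add]
  calc ∫ x in (0 : ℝ)..1, log (opNorm (cocycle ω A (m + n) x))
      ≤ ∫ x in (0 : ℝ)..1, (log (opNorm (cocycle ω A m (x + n * ω))) +
          log (opNorm (cocycle ω A n x))) :=
        intervalIntegral.integral_mono_on zero_le_one ((hcont _).intervalIntegrable _ _)
          ((hcont'.add (hcont n)).intervalIntegrable _ _)
          fun x _ => log_opNorm_cocycle_add_le hdet m n x
    _ = _ := by
        rw [intervalIntegral.integral_add (hcont'.intervalIntegrable _ _)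
          ((hcont n).intervalIntegrable _ _), hshift]

lemma LEn_eq_div (n : ℕ) :
    LEn ω A n = (∫ x in (0 : ℝ)..1, log (opNorm (cocycle ω A n x))) / n := by
  rw [LEn, one_div_mul_eq_div]

lemma div_le_LEn (hA : Continuous A) (hdet : ∀ x, (A x).det = 1) {n : ℕ} {c : ℝ}
    (hc : ∀ x, c ≤ log (opNorm (cocycle ω A n x))) : c / n ≤ LEn ω A n := by
  rw [LEn_eq_div]
  gcongr
  simpa using intervalIntegral.integral_mono_on (μ := volume) zero_le_one
    intervalIntegrable_const ((continuous_log_opNorm_cocycle hA hdet n).intervalIntegrable 0 1)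
    fun x _ => hc x

lemma LEn_le_div (hA : Continuous A) (hdet : ∀ x, (A x).det = 1) {n : ℕ} {c : ℝ}
    (hc : ∀ x, log (opNorm (cocycle ω A n x)) ≤ c) : LEn ω A n ≤ c / n := by
  rw [LEn_eq_div]
  gcongr
  simpa using intervalIntegral.integral_mono_on (μ := volume) zero_le_one
    ((continuous_log_opNorm_cocycle hA hdet n).intervalIntegrable 0 1) intervalIntegrable_const
    fun x _ => hc x

lemma LEn_nonneg (hA : Continuous A) (hdet : ∀ x, (A x).det = 1) (n : ℕ) : 0 ≤ LEn ω A n := by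
  simpa using div_le_LEn (ω := ω) (n := n) hA hdet
    fun x => log_nonneg (one_le_opNorm (det_cocycle hdet n x))

theorem exists_tendsto_LEn_forall_le (hA : Continuous A) (hper : Function.Periodic A 1)
    (hdet : ∀ x, (A x).det = 1) :
    ∃ L, Tendsto (LEn ω A) atTop (nhds L) ∧ ∀ n ≠ 0, L ≤ LEn ω A n := by
  have hsub := subadditive_integral_log_opNorm_cocycle (ω := ω) hA hper hdet
  have hbdd : BddBelow (Set.range fun n : ℕ =>
      (∫ x in (0 : ℝ)..1, log (opNorm (cocycle ω A n x))) / n) := by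
    refine ⟨0, Set.forall_mem_range.2 fun n => ?_⟩
    rw [← LEn_eq_div]
    exact LEn_nonneg hA hdet n
  refine ⟨hsub.lim, (hsub.tendsto_lim hbdd).congr fun n => (LEn_eq_div n).symm, fun n hn => ?_⟩
  rw [LEn_eq_div]
  exact hsub.lim_le_div hbdd hn

theorem le_LEn_of_exp_le_opNorm (hA : Continuous A) (hper : Function.Periodic A 1)
    (hdet : ∀ x, (A x).det = 1) {κ c : ℝ} (hc : 0 < c)
    (hgrowth : ∀ (n : ℕ) x, c * exp (n * κ) ≤ opNorm (cocycle ω A n x)) {n : ℕ} (hn : n ≠ 0) :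
    κ ≤ LEn ω A n := by
  obtain ⟨L, hL, hLn⟩ := exists_tendsto_LEn_forall_le (ω := ω) hA hper hdet
  refine le_trans ?_ (hLn n hn)
  have hlim : Tendsto (fun k : ℕ => log c / k + κ) atTop (nhds κ) := by
    simpa using (tendsto_const_div_atTop_nhds_zero_nat (log c)).add_const κ
  refine le_of_tendsto_of_tendsto hlim hL ?_
  filter_upwards [eventually_ne_atTop 0] with k hk
  calc log c / k + κ = (log c + k * κ) / k := by field_simp
    _ ≤ LEn ω A k := div_le_LEn hA hdet fun x => by
        rw [← log_exp (k * κ), ← log_mul hc.ne' (exp_pos _).ne']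
        exact log_le_log (by positivity) (hgrowth k x)

theorem tendsto_LEn_zero_of_opNorm_le (hA : Continuous A) (hdet : ∀ x, (A x).det = 1) {K : ℝ}
    (hK : ∀ (n : ℕ) x, opNorm (cocycle ω A n x) ≤ K * (n + 1)) :
    Tendsto (LEn ω A) atTop (nhds 0) := by
  have hKpos : 0 < K := by simpa using (opNorm_pos (det_cocycle hdet 0 0)).trans_le (hK 0 0)
  have hlin : Tendsto (fun n : ℕ => K * ((n : ℝ) + 1)) atTop atTop :=
    (tendsto_natCast_atTop_atTop.atTop_add tendsto_const_nhds).const_mul_atTop hKpos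
  have hlog : Tendsto (fun n : ℕ => log (K * (n + 1)) / n) atTop (nhds 0) := by
    refine ((tendsto_pow_log_div_mul_add_atTop K⁻¹ (-1) 1 (inv_ne_zero hKpos.ne')).comp
      hlin).congr fun n => ?_
    simp [inv_mul_cancel_left₀ hKpos.ne']
  exact squeeze_zero (LEn_nonneg hA hdet) (fun n => LEn_le_div hA hdet fun x =>
    log_le_log (opNorm_pos (det_cocycle hdet n x)) (hK n x)) hlog

lemma opNorm_cocycle_le_pow {B : ℝ} (hB : ∀ x, opNorm (A x) ≤ B) (n : ℕ) (x : ℝ) :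
    opNorm (cocycle ω A n x) ≤ B ^ n := by
  induction n with
  | zero => simp [cocycle, opNorm]
  | succ n ih =>
    rw [pow_succ']
    exact (opNorm_mul_le _ _).trans
      (mul_le_mul (hB _) ih (opNorm_nonneg _) ((opNorm_nonneg _).trans (hB x)))

lemma tendsto_cocycle {Aseq : ℕ → ℝ → Matrix (Fin 2) (Fin 2) ℝ}
    (hlim : ∀ x, Tendsto (fun k => Aseq k x) atTop (nhds (A x))) (n : ℕ) (x : ℝ) :
    Tendsto (fun k => cocycle ω (Aseq k) n x) atTop (nhds (cocycle ω A n x)) := by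
  induction n with
  | zero => exact tendsto_const_nhds
  | succ n ih => exact (hlim _).mul ih

theorem tendsto_LEn_of_forall_tendsto {Aseq : ℕ → ℝ → Matrix (Fin 2) (Fin 2) ℝ} {B : ℝ}
    (hcont : ∀ k, Continuous (Aseq k)) (hdet : ∀ k x, (Aseq k x).det = 1)
    (hB : ∀ k x, opNorm (Aseq k x) ≤ B)
    (hlim : ∀ x, Tendsto (fun k => Aseq k x) atTop (nhds (A x))) (n : ℕ) :
    Tendsto (fun k => LEn ω (Aseq k) n) atTop (nhds (LEn ω A n)) := by
  have hdetA (x : ℝ) : (A x).det = 1 := by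
    refine tendsto_nhds_unique ((continuous_id.matrix_det.tendsto _).comp (hlim x)) ?_
    simp [Function.comp_def, hdet]
  refine Tendsto.const_mul _ (intervalIntegral.tendsto_integral_filter_of_dominated_convergence
    (fun _ => log (B ^ n)) (.of_forall fun k => ?_) (.of_forall fun k => ae_of_all _ fun x _ => ?_)
    intervalIntegrable_const (ae_of_all _ fun x _ => ?_))
  · exact (continuous_log_opNorm_cocycle (hcont k) (hdet k) n).aestronglyMeasurable
  · have hone := one_le_opNorm (det_cocycle (ω := ω) (hdet k) n x)
    rw [norm_of_nonneg (log_nonneg hone)]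
    exact log_le_log (one_pos.trans_le hone) (opNorm_cocycle_le_pow (hB k) n x)
  · exact ((continuous_opNorm.tendsto _).comp (tendsto_cocycle hlim n x)).log
      (opNorm_pos (det_cocycle hdetA n x)).ne'

end LyapunovExponent

section SchrodingerExponent

variable {ω κ : ℝ} {V : ℝ → ℝ}

lemma cocycle_schrodingerCocycle (n : ℕ) (x : ℝ) : cocycle ω (SchrodingerCocycle V) n x =
    !![schrodingerSol ω V x 1 0 (n + 1), schrodingerSol ω V x 0 1 (n + 1);
      schrodingerSol ω V x 1 0 n, schrodingerSol ω V x 0 1 n] := by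
  induction n with
  | zero => simp [cocycle, schrodingerSol, Matrix.one_fin_two]
  | succ n ih =>
    rw [cocycle, ih, SchrodingerCocycle, Matrix.mul_fin_two]
    simp [schrodingerSol, sub_eq_add_neg]

lemma det_schrodingerCocycle (x : ℝ) : (SchrodingerCocycle V x).det = 1 := by
  simp [SchrodingerCocycle, Matrix.det_fin_two]

lemma periodic_schrodingerCocycle (hV : Function.Periodic V 1) :
    Function.Periodic (SchrodingerCocycle V) 1 :=
  hV.comp fun v => !![v, -1; 1, 0]

lemma schrodingerCocycle_eq_add_smul (V : ℝ → ℝ) : SchrodingerCocycle V = fun x =>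
    (!![0, -1; 1, 0] : Matrix (Fin 2) (Fin 2) ℝ) + V x • !![1, 0; 0, 0] := by
  ext x i j
  fin_cases i <;> fin_cases j <;> simp [SchrodingerCocycle]

lemma contDiff_schrodingerCocycle {n : WithTop ℕ∞} (hV : ContDiff ℝ n V) :
    ContDiff ℝ n (SchrodingerCocycle V) := by
  rw [schrodingerCocycle_eq_add_smul]
  exact contDiff_const.add (hV.smul contDiff_const)

lemma continuous_schrodingerCocycle (hV : Continuous V) : Continuous (SchrodingerCocycle V) :=
  (contDiff_schrodingerCocycle (contDiff_zero.2 hV)).continuous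

lemma opNorm_schrodingerCocycle_le (x : ℝ) : opNorm (SchrodingerCocycle V x) ≤ |V x| + 2 :=
  (opNorm_le_sum_abs _).trans_eq (by simp [SchrodingerCocycle]; ring)

lemma opNorm_iteratedDeriv_schrodingerCocycle_sub_le {U : ℝ → ℝ} {j : ℕ} (hU : ContDiff ℝ j U)
    (hV : ContDiff ℝ j V) (x : ℝ) :
    opNorm (iteratedDeriv j (fun y => SchrodingerCocycle U y - SchrodingerCocycle V y) x) ≤
      |iteratedDeriv j (fun y => U y - V y) x| := by
  have hdiff : (fun y => SchrodingerCocycle U y - SchrodingerCocycle V y) =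
      fun y => (U y - V y) • (!![1, 0; 0, 0] : Matrix (Fin 2) (Fin 2) ℝ) := by
    simp only [schrodingerCocycle_eq_add_smul, add_sub_add_left_eq_sub, sub_smul]
  rw [hdiff, iteratedDeriv_smul_const (hU.sub hV).contDiffAt]
  exact (opNorm_le_sum_abs _).trans_eq (by simp)

theorem UniformGrowth.le_LEn (h : UniformGrowth ω V κ) (hV : Continuous V)
    (hper : Function.Periodic V 1) {n : ℕ} (hn : n ≠ 0) : κ ≤ LEn ω (SchrodingerCocycle V) n := by
  obtain ⟨c, hc, hgrowth⟩ := h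
  refine le_LEn_of_exp_le_opNorm (continuous_schrodingerCocycle hV)
    (periodic_schrodingerCocycle hper) det_schrodingerCocycle hc (fun n x => ?_) hn
  refine (hgrowth n x).trans ?_
  simpa [cocycle_schrodingerCocycle] using
    apply_zero_zero_le_opNorm (cocycle ω (SchrodingerCocycle V) n x)

section GroundStatePotential

variable {f : ℝ → ℝ} {m M : ℝ}

lemma abs_schrodingerSol_groundPotential_le_mul (hm : 0 < m) (hlo : ∀ x, m ≤ f x)
    (hhi : ∀ x, f x ≤ M) (x : ℝ) {a c : ℝ} (ha : |a| ≤ 1) (hc : |c| ≤ 1) (n : ℕ) :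
    |schrodingerSol ω (groundPotential ω f) x a c n| ≤
      (1 + M * (1 / m + 2 * M / m ^ 2)) * (n + 1) := by
  have hM : 0 < M := hm.trans_le ((hlo 0).trans (hhi 0))
  cases n with
  | zero =>
    have : 0 ≤ M * (1 / m + 2 * M / m ^ 2) := by positivity
    simp only [schrodingerSol, Nat.cast_zero, zero_add, mul_one]
    linarith
  | succ n =>
    calc |schrodingerSol ω (groundPotential ω f) x a c (n + 1)|
        ≤ f (x + n * ω) * (1 / m + n * (2 * M / m ^ 2)) :=
          abs_schrodingerSol_groundPotential_le hm hlo hhi x ha hc n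
      _ ≤ M * (1 / m + n * (2 * M / m ^ 2)) := by gcongr; exact hhi _
      _ ≤ M * ((1 / m + 2 * M / m ^ 2) * (n + 1)) := by
          gcongr
          have : 0 ≤ 1 / m * n + 2 * M / m ^ 2 := by positivity
          linarith
      _ ≤ (1 + M * (1 / m + 2 * M / m ^ 2)) * ((n + 1 : ℕ) + 1) := by
          have : 0 ≤ M * (1 / m + 2 * M / m ^ 2) := by positivity
          push_cast
          nlinarith [n.cast_nonneg (α := ℝ)]

theorem tendsto_LEn_groundPotential_zero (hf : Continuous f) (hm : 0 < m) (hlo : ∀ x, m ≤ f x)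
    (hhi : ∀ x, f x ≤ M) :
    Tendsto (LEn ω (SchrodingerCocycle (groundPotential ω f))) atTop (nhds 0) := by
  have hM : 0 < M := hm.trans_le ((hlo 0).trans (hhi 0))
  have hV : Continuous (groundPotential ω f) :=
    ((hf.comp (continuous_add_const _)).add (hf.comp (continuous_sub_right _))).div hf
      fun x => (hm.trans_le (hlo x)).ne'
  refine tendsto_LEn_zero_of_opNorm_le (K := 8 * (1 + M * (1 / m + 2 * M / m ^ 2)))
    (continuous_schrodingerCocycle hV) det_schrodingerCocycle fun n x => ?_
  have hentry {a c : ℝ} (ha : |a| ≤ 1) (hc : |c| ≤ 1) :=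
    abs_schrodingerSol_groundPotential_le_mul (ω := ω) hm hlo hhi x ha hc
  refine (opNorm_le_sum_abs _).trans ?_
  simp only [cocycle_schrodingerCocycle, Matrix.of_apply, Matrix.cons_val', Matrix.cons_val_zero,
    Matrix.cons_val_one, Matrix.cons_val_fin_one]
  have hone : |(1 : ℝ)| ≤ 1 := abs_one.le
  have hzero : |(0 : ℝ)| ≤ 1 := abs_zero.trans_le zero_le_one
  have h₁ := hentry hone hzero (n + 1)
  have h₂ := hentry hzero hone (n + 1)
  have h₃ := hentry hone hzero n
  have h₄ := hentry hzero hone n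
  push_cast at h₁ h₂
  have : 0 ≤ (1 + M * (1 / m + 2 * M / m ^ 2)) * (2 * n + 1) := by positivity
  linarith

end GroundStatePotential

theorem le_LEn_schrodingerCocycle_of_tendsto {W : ℕ → ℝ → ℝ} {δ : ℕ → ℝ}
    (hW : ∀ k, Continuous (W k)) (hWper : ∀ k, Function.Periodic (W k) 1)
    (hgrowth : ∀ k, UniformGrowth ω (W k) κ) (hV : Continuous V) (hper : Function.Periodic V 1)
    (hδ : Tendsto δ atTop (nhds 0)) (hWV : ∀ k x, |W k x - V x| ≤ δ k) {n : ℕ} (hn : n ≠ 0) :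
    κ ≤ LEn ω (SchrodingerCocycle V) n := by
  obtain ⟨B, hB⟩ := (hper.isBounded_of_continuous one_ne_zero hV).exists_norm_le
  obtain ⟨δmax, hδmax⟩ := hδ.bddAbove_range
  have hbound (k : ℕ) (x : ℝ) : opNorm (SchrodingerCocycle (W k) x) ≤ B + δmax + 2 := by
    have hVx : |V x| ≤ B := hB _ (Set.mem_range_self x)
    have hδk : δ k ≤ δmax := hδmax (Set.mem_range_self k)
    have htri : |W k x| ≤ |W k x - V x| + |V x| := by
      simpa using abs_add_le (W k x - V x) (V x)
    linarith [opNorm_schrodingerCocycle_le (V := W k) x, hWV k x]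
  have hlim (x : ℝ) :
      Tendsto (fun k => SchrodingerCocycle (W k) x) atTop (nhds (SchrodingerCocycle V x)) := by
    have hWx : Tendsto (fun k => W k x) atTop (nhds (V x)) := tendsto_iff_norm_sub_tendsto_zero.2
      (squeeze_zero (fun _ => norm_nonneg _) (fun k => hWV k x) hδ)
    simp only [schrodingerCocycle_eq_add_smul]
    exact (hWx.smul_const _).const_add _
  exact ge_of_tendsto'
    (tendsto_LEn_of_forall_tendsto (fun k => continuous_schrodingerCocycle (hW k))
      (fun k => det_schrodingerCocycle) hbound hlim n)
    fun k => (hgrowth k).le_LEn (hW k) (hWper k) hn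

end SchrodingerExponent

section SmoothLimit

variable {E : Type*} [NormedAddCommGroup E] [NormedSpace ℝ E] [CompleteSpace E] {l : ℕ}

lemma contDiff_tsum_of_geometric {d : ℕ → ℝ → E} {C : ℝ} (hd : ∀ i, ContDiff ℝ l (d i))
    (hC : ∀ i x, ∀ j ≤ l, ‖iteratedDeriv j (d i) x‖ ≤ C * (1 / 2) ^ i) :
    ContDiff ℝ l (fun x => ∑' i, d i x) ∧
      ∀ x, ∀ j ≤ l, ‖iteratedDeriv j (fun x => ∑' i, d i x) x‖ ≤ C * 2 := by
  have hsum : HasSum (fun i : ℕ => C * (1 / 2 : ℝ) ^ i) (C * 2) :=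
    hasSum_geometric_two.mul_left C
  have hbound (j i : ℕ) (x : ℝ) (hj : (j : ℕ∞) ≤ l) :
      ‖iteratedFDeriv ℝ j (d i) x‖ ≤ C * (1 / 2) ^ i := by
    rw [norm_iteratedFDeriv_eq_norm_iteratedDeriv]
    exact hC i x j (by exact_mod_cast hj)
  refine ⟨contDiff_tsum (N := l) hd (fun _ _ => hsum.summable) hbound, fun x j hj => ?_⟩
  have hj' : (j : ℕ∞) ≤ l := by exact_mod_cast hj
  rw [← norm_iteratedFDeriv_eq_norm_iteratedDeriv,
    iteratedFDeriv_tsum_apply (N := l) hd (fun _ _ => hsum.summable) hbound hj']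
  exact tsum_of_norm_bounded hsum fun i => hbound j i x hj'

theorem exists_contDiff_limit_of_geometric {v : ℕ → ℝ → E} (hv : ∀ k, ContDiff ℝ l (v k))
    (hgeom : ∀ k x, ∀ j ≤ l,
      ‖iteratedDeriv j (fun y => v (k + 1) y - v k y) x‖ ≤ (1 / 2) ^ k) :
    ∃ w, ContDiff ℝ l w ∧
      ∀ k x, ∀ j ≤ l, ‖iteratedDeriv j (fun y => v k y - w y) x‖ ≤ (1 / 2) ^ k * 2 := by
  have htail (k : ℕ) := contDiff_tsum_of_geometric (l := l)
    (d := fun i y => v (i + k + 1) y - v (i + k) y) (C := (1 / 2) ^ k)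
    (fun i => (hv _).sub (hv _))
    fun i x j hj => (hgeom (i + k) x j hj).trans_eq (by rw [add_comm, pow_add])
  have hsummable (x : ℝ) : Summable fun i => v (i + 1) x - v i x :=
    .of_norm_bounded summable_geometric_two fun i => by simpa using hgeom i x 0 l.zero_le
  refine ⟨fun x => v 0 x + ∑' i, (v (i + 1) x - v i x),
    (hv 0).add (by simpa using (htail 0).1), fun k x j hj => ?_⟩
  have htelescope : (fun y => v k y - (v 0 y + ∑' i, (v (i + 1) y - v i y))) =
      fun y => -∑' i, (v (i + k + 1) y - v (i + k) y) := by
    ext y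
    rw [← (hsummable y).sum_add_tsum_nat_add k, Finset.sum_range_sub fun i => v i y]
    abel
  rw [htelescope, iteratedDeriv_fun_neg, norm_neg]
  exact (htail k).2 x j hj

end SmoothLimit

theorem exists_potential_seq {ω c κ : ℝ} (hω : BadlyApproximable c ω) (hκ : 0 < κ) (l : ℕ) :
    ∃ (v : ℕ → ℝ → ℝ) (w : ℝ → ℝ),
      (∀ k, Function.Periodic (v k) 1 ∧ ContDiff ℝ l (v k)) ∧
      (Function.Periodic w 1 ∧ ContDiff ℝ l w) ∧
      (∀ k, Tendsto (LEn ω (SchrodingerCocycle (v k))) atTop (nhds 0)) ∧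
      (∀ n ≠ 0, κ ≤ LEn ω (SchrodingerCocycle w) n) ∧
      ∀ k x, ∀ j ≤ l, |iteratedDeriv j (fun y => v k y - w y) x| ≤ (1 / 2) ^ k * 2 := by
  obtain ⟨F, β, hβ, hF, hgrowth, hstep⟩ := exists_groundState_seq hω hκ l
  have hper (k : ℕ) : Function.Periodic (groundPotential ω (F k)) 1 :=
    groundPotential_periodic (hF k).1
  have hsmooth (k : ℕ) : ContDiff ℝ l (groundPotential ω (F k)) := by
    obtain ⟨-, hFk, m, M, hm, hbounds⟩ := hF k
    exact contDiff_groundPotential hFk fun x => hm.trans_le (hbounds x).1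
  obtain ⟨w, hw, hclose⟩ := exists_contDiff_limit_of_geometric hsmooth hstep
  have hclose₀ (k : ℕ) (x : ℝ) : |groundPotential ω (F k) x - w x| ≤ (1 / 2) ^ k * 2 := by
    simpa using hclose k x 0 l.zero_le
  have hgeom (C : ℝ) : Tendsto (fun k : ℕ => (1 / 2 : ℝ) ^ k * C) atTop (nhds 0) := by
    simpa using (tendsto_pow_atTop_nhds_zero_of_lt_one
      (by norm_num : (0 : ℝ) ≤ 1 / 2) (by norm_num)).mul_const C
  have hlim (x : ℝ) : Tendsto (fun k => groundPotential ω (F k) x) atTop (nhds (w x)) :=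
    tendsto_iff_norm_sub_tendsto_zero.2
      (squeeze_zero (fun _ => norm_nonneg _) (fun k => hclose₀ k x) (hgeom 2))
  have hwper : Function.Periodic w 1 := fun x =>
    tendsto_nhds_unique (hlim (x + 1)) ((hlim x).congr fun k => (hper k x).symm)
  refine ⟨fun k => groundPotential ω (F k), w, fun k => ⟨hper k, hsmooth k⟩, ⟨hwper, hw⟩,
    fun k => ?_, fun n hn => ?_, hclose⟩
  · obtain ⟨-, hFk, m, M, hm, hbounds⟩ := hF k
    exact tendsto_LEn_groundPotential_zero hFk.continuous hm (fun x => (hbounds x).1)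
      fun x => (hbounds x).2
  · refine le_LEn_schrodingerCocycle_of_tendsto
      (fun k => (hsmooth k).continuous.add continuous_const)
      (fun k => (hper k).comp (· + β k)) hgrowth hw.continuous hwper (hgeom 3) (fun k x => ?_) hn
    calc |groundPotential ω (F k) x + β k - w x|
        = |(groundPotential ω (F k) x - w x) + β k| := by rw [add_sub_right_comm]
      _ ≤ |groundPotential ω (F k) x - w x| + |β k| := abs_add_le _ _
      _ ≤ (1 / 2) ^ k * 3 := by
          rw [abs_of_nonneg (hβ k).1]
          linarith [hclose₀ k x, (hβ k).2]

theorem sl2_positive_LE_not_Cl_open_approx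
    (ω : ℝ) (hω : Irrational ω)
    (M : ℝ) (hM : 1 ≤ M) (hbt : ∀ k : ℕ, cfDen ω (k + 1) ≤ M * cfDen ω k)
    (l : ℕ) (κ : ℝ) (hκ : 0 < κ) :
    ∃ (D : ℝ → Matrix (Fin 2) (Fin 2) ℝ) (C : ℕ → ℝ → Matrix (Fin 2) (Fin 2) ℝ),
      Function.Periodic D 1 ∧ ContDiff ℝ l D ∧ (∀ x, (D x).det = 1) ∧
      (∀ k, Function.Periodic (C k) 1 ∧ ContDiff ℝ l (C k) ∧ ∀ x, ((C k) x).det = 1) ∧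
      -- (i) L(D) ≥ κ
      (∃ L : ℝ, κ ≤ L ∧ Tendsto (fun m => LEn ω D m) atTop (nhds L)) ∧
      -- (ii) L(C_k) = 0 for every k
      (∀ k, Tendsto (fun m => LEn ω (C k) m) atTop (nhds 0)) ∧
      -- (iii) C_k → D in the C^l topology
      (∀ j ≤ l, ∀ ε : ℝ, 0 < ε → ∃ K : ℕ, ∀ k ≥ K, ∀ x : ℝ,
        opNorm (iteratedDeriv j (fun y => C k y - D y) x) ≤ ε) := by
  have hbad := badlyApproximable_of_cfDen_succ_le hω (zero_lt_one.trans_le hM) hbt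
  obtain ⟨v, w, hv, ⟨hwper, hw⟩, hzero, hpos, hclose⟩ := exists_potential_seq hbad hκ l
  refine ⟨SchrodingerCocycle w, fun k => SchrodingerCocycle (v k),
    periodic_schrodingerCocycle hwper, contDiff_schrodingerCocycle hw, det_schrodingerCocycle,
    fun k => ⟨periodic_schrodingerCocycle (hv k).1, contDiff_schrodingerCocycle (hv k).2,
      det_schrodingerCocycle⟩, ?_, hzero, fun j hj ε hε => ?_⟩
  · obtain ⟨L, hL, -⟩ := exists_tendsto_LEn_forall_le (ω := ω)
      (continuous_schrodingerCocycle hw.continuous) (periodic_schrodingerCocycle hwper)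
      det_schrodingerCocycle
    exact ⟨L, ge_of_tendsto hL ((eventually_ne_atTop 0).mono hpos), hL⟩
  · obtain ⟨K, hK⟩ := exists_pow_lt_of_lt_one (half_pos hε) (by norm_num : (1 / 2 : ℝ) < 1)
    refine ⟨K, fun k hk x => ?_⟩
    have hj' : (j : WithTop ℕ∞) ≤ l := by exact_mod_cast hj
    calc opNorm (iteratedDeriv j (fun y => SchrodingerCocycle (v k) y - SchrodingerCocycle w y) x)
        ≤ |iteratedDeriv j (fun y => v k y - w y) x| :=
          opNorm_iteratedDeriv_schrodingerCocycle_sub_le ((hv k).2.of_le hj') (hw.of_le hj') x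
      _ ≤ (1 / 2) ^ k * 2 := hclose k x j hj
      _ ≤ ε := by linarith [pow_le_pow_of_le_one (by norm_num : (0 : ℝ) ≤ 1 / 2) (by norm_num) hk]
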